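/- There exists a constant C > 0 such that for every finite tree T on n ≥ 2 vertices whose maximum degree Δ satisfies Δ ≥ 3, and every integer k ≥ Δ + 1, the discrete-time Glauber dynamics for k-edge-colourings of T is an ergodic Markov chain whose stationary distribution is uniform on the set of proper k-edge-colourings of T, and its mixing time is at most n^C. -/

import Mathlib

/-!
The mixing bound follows from a Poincaré inequality `Var f ≤ poly(m) · ∑ x, E[Var(f | {x}ᶜ)]` for
the uniform measure on the colourings, `m` being the number of edges. Root the tree at a leaf, so
that its edges carry a parent function.

A subtree hanging from a vertex interacts with its siblings only through the colour of its top edge,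
since swapping two colours throughout a subtree is harmless away from that edge. If one colour is
spare at the vertex, functions of the top colours satisfy an Efron–Stein inequality up to a constant
factor, so the conditional variance over several sibling subtrees is at most a constant times the
sum of those over the single ones. The same holds when the parent edge joins in, even if many of the
colours are forbidden at it: when the colour wanted at the parent edge is in use at a sibling, three
recolourings suffice.

Multiplying such constants along a long path would lose an exponential factor. Instead, the variance
explained by the colour of the heavy child of an edge is a local term plus at most half of that
explained by the colour of the next edge on the heavy path, so that constants multiply only on
passing to a light subtree, which is at most half as large. The total loss is therefore polynomial.

The Poincaré constant grows linearly in `k`, which is harmless as long as `k ≤ 8 m`. Beyond that,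
proposing the same edge and colour in two copies of the chain contracts the Hamming distance.
-/

open Finset
open scoped Classical

/-- Two edges are incident if they are distinct and share an endpoint. -/
def EdgeInc {V : Type*} (e f : Sym2 V) : Prop := e ≠ f ∧ ∃ v : V, v ∈ e ∧ v ∈ f

section TreeChain

variable {V : Type} [Fintype V] [DecidableEq V] (G : SimpleGraph V) [DecidableRel G.Adj]
  (k : ℕ)

/-- The edges of `G`. -/
abbrev Edge := {e : Sym2 V // e ∈ G.edgeFinset}

/-- The set `Ω` of proper `k`-edge-colourings of `G`. -/
abbrev ECol := {σ : Edge G → Fin k // ∀ e f : Edge G, EdgeInc e.1 f.1 → σ e ≠ σ f}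

/-- Off-diagonal transition probabilities of the discrete-time Glauber dynamics for
`k`-edge-colourings: from `σ`, a uniformly random edge `e` and colour `c` are chosen, and `e`
is recoloured with `c` if the result is proper.  For `σ ≠ η` differing at exactly one edge
this gives probability `1/(|E|·k)`. -/
noncomputable def Poff (σ η : ECol G k) : ℝ :=
  if (Finset.univ.filter fun e : Edge G => σ.1 e ≠ η.1 e).card = 1 then
    1 / ((G.edgeFinset.card : ℝ) * k)
  else 0

/-- The transition matrix `P` of the discrete-time Glauber dynamics for
`k`-edge-colourings of `G` (laziness on the diagonal makes rows sum to one). -/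
noncomputable def Pstep : Matrix (ECol G k) (ECol G k) ℝ :=
  Matrix.of fun σ η =>
    if σ = η then 1 - ∑ η' ∈ Finset.univ.filter fun b => b ≠ σ, Poff G k σ η'
    else Poff G k σ η

/-- Total variation distance between two distributions on a finite set. -/
noncomputable def tvDist {Ω : Type*} [Fintype Ω] (ν π : Ω → ℝ) : ℝ :=
  (1 / 2) * ∑ x : Ω, |ν x - π x|

/-- The mixing time: the least `t` such that, from every starting state, the distribution
after `t` steps is within total variation distance `1/4` of the uniform distribution. -/
noncomputable def mixTime : ℕ :=
  sInf {t : ℕ | ∀ σ : ECol G k,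
    tvDist (fun η => (Pstep G k ^ t) σ η)
      (fun _ => 1 / (Fintype.card (ECol G k) : ℝ)) < 1 / 4}

end TreeChain

open scoped BigOperators

/-! ### Averages and variances over the classes of an equivalence relation -/

lemma sq_expect_le {ι : Type*} (s : Finset ι) (f : ι → ℝ) :
    (𝔼 i ∈ s, f i) ^ 2 ≤ 𝔼 i ∈ s, f i ^ 2 := by
  rcases s.eq_empty_or_nonempty with rfl | hs
  · simp
  simpa [expect_const hs] using expect_mul_sq_le_sq_mul_sq s f fun _ => (1 : ℝ)

section ClassAverage

variable {Ω : Type*} {s t : Setoid Ω}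

/-- Two equivalence relations are transverse if they commute under composition and meet only in
the diagonal. This is a combinatorial form of conditional independence: the classes of `s ⊔ t` are
products of a class of `s` and a class of `t`. -/
structure Transverse (s t : Setoid Ω) : Prop where
  disjoint : Disjoint s t
  comp : ∀ ⦃x y z⦄, s x y → t y z → ∃ w, t x w ∧ s w z

namespace Transverse

lemma symm (h : Transverse s t) : Transverse t s where
  disjoint := h.disjoint.symm
  comp x y z hxy hyz := by
    obtain ⟨w, hzw, hwx⟩ := h.comp (s.symm hyz) (t.symm hxy)
    exact ⟨w, s.symm hwx, t.symm hzw⟩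

lemma eq_of_rel (h : Transverse s t) {x y : Ω} (hs : s x y) (ht : t x y) : x = y :=
  (disjoint_iff_inf_le.1 h.disjoint) ⟨hs, ht⟩

end Transverse

variable [Fintype Ω] {f : Ω → ℝ}

/-- The average of `f` over the equivalence class of `x`: the conditional expectation of `f` given
the class, for the uniform distribution on `Ω`. A function is measurable for this conditioning when
`s ≤ Setoid.ker f`. -/
noncomputable def classAvg (s : Setoid Ω) (f : Ω → ℝ) (x : Ω) : ℝ := 𝔼 y with s x y, f y

/-- The expected conditional variance of `f` given its `s`-class, as a sum over `Ω` (so without the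
factor `1 / |Ω|`). -/
noncomputable def classVar (s : Setoid Ω) (f : Ω → ℝ) : ℝ := ∑ x, (f x - classAvg s f x) ^ 2

lemma le_ker_classAvg (s : Setoid Ω) (f : Ω → ℝ) : s ≤ Setoid.ker (classAvg s f) := by
  intro x y hxy
  have hclass : ∀ z, s x z ↔ s y z :=
    fun z => ⟨fun h => s.trans (s.symm hxy) h, fun h => s.trans hxy h⟩
  simp only [Setoid.ker_def, classAvg, hclass]

lemma filter_class_nonempty (s : Setoid Ω) (x : Ω) : (univ.filter fun y => s x y).Nonempty :=
  ⟨x, by simp⟩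

lemma classAvg_of_le_ker (hf : s ≤ Setoid.ker f) : classAvg s f = f := by
  funext x
  have hconst : ∀ y ∈ univ.filter (fun y => s x y), f y = f x :=
    fun y hy => (hf (mem_filter.1 hy).2).symm
  rw [classAvg, expect_congr rfl hconst, expect_const (filter_class_nonempty s x)]

lemma classAvg_sub (s : Setoid Ω) (f g : Ω → ℝ) (x : Ω) :
    classAvg s (fun y => f y - g y) x = classAvg s f x - classAvg s g x :=
  expect_sub_distrib _ _ _

lemma sum_mul_classAvg {g : Ω → ℝ} (hg : s ≤ Setoid.ker g) (f : Ω → ℝ) :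
    ∑ x, g x * classAvg s f x = ∑ x, g x * f x := by
  have hswap : ∀ x y, (if s x y then g x * f y / #{z | s x z} else 0)
      = if s y x then g y * f y / #{z | s y z} else 0 := by
    intro x y
    by_cases hxy : s x y
    · have hclass : ∀ z, s x z ↔ s y z :=
        fun z => ⟨fun h => s.trans (s.symm hxy) h, fun h => s.trans hxy h⟩
      simp only [hxy, s.symm hxy, if_true, hclass, show g x = g y from hg hxy]
    · simp only [hxy, mt (fun h => s.symm h) hxy, if_false]
  calc ∑ x, g x * classAvg s f x
      = ∑ x, ∑ y, if s x y then g x * f y / #{z | s x z} else 0 := by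
        refine sum_congr rfl fun x _ => ?_
        rw [classAvg, expect_eq_sum_div_card, mul_div_assoc', mul_sum, sum_div, sum_filter]
    _ = ∑ y, ∑ x, if s y x then g y * f y / #{z | s y z} else 0 := by
        rw [sum_comm]; simp only [hswap]
    _ = ∑ y, g y * f y := by
        refine sum_congr rfl fun y _ => ?_
        rw [← sum_filter, sum_const, nsmul_eq_mul, mul_div_cancel₀]
        exact_mod_cast (filter_class_nonempty s y).card_ne_zero

lemma eq_classAvg {h : Ω → ℝ} (hh : s ≤ Setoid.ker h)
    (hfh : ∀ g : Ω → ℝ, s ≤ Setoid.ker g → ∑ x, g x * h x = ∑ x, g x * f x) :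
    h = classAvg s f := by
  set d : Ω → ℝ := fun x => h x - classAvg s f x
  have hd : s ≤ Setoid.ker d := fun x y hxy =>
    congrArg₂ (· - ·) (hh hxy) (le_ker_classAvg s f hxy)
  have hsum : ∑ x, d x ^ 2 = 0 := by
    calc ∑ x, d x ^ 2 = ∑ x, d x * h x - ∑ x, d x * classAvg s f x := by
          rw [← sum_sub_distrib]; exact sum_congr rfl fun x _ => by simp only [d]; ring
      _ = 0 := by rw [hfh d hd, sum_mul_classAvg hd, sub_self]
  funext x
  have := (sum_eq_zero_iff_of_nonneg fun x _ => sq_nonneg (d x)).1 hsum x (mem_univ x)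
  exact sub_eq_zero.1 (pow_eq_zero_iff two_ne_zero |>.1 this)

lemma classAvg_classAvg_of_le (h : s ≤ t) (f : Ω → ℝ) :
    classAvg t (classAvg s f) = classAvg t f :=
  eq_classAvg (le_ker_classAvg t _) fun g hg => by
    rw [sum_mul_classAvg hg, sum_mul_classAvg (h.trans hg)]

lemma classAvg_classAvg_of_ge (h : s ≤ t) (f : Ω → ℝ) :
    classAvg s (classAvg t f) = classAvg t f :=
  classAvg_of_le_ker (h.trans (le_ker_classAvg t f))

lemma sum_classAvg_mul (s : Setoid Ω) (f g : Ω → ℝ) :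
    ∑ x, classAvg s f x * g x = ∑ x, f x * classAvg s g x := by
  rw [← sum_mul_classAvg (le_ker_classAvg s f) g]
  simpa only [mul_comm] using sum_mul_classAvg (le_ker_classAvg s g) f

lemma sum_classAvg (s : Setoid Ω) (f : Ω → ℝ) : ∑ x, classAvg s f x = ∑ x, f x := by
  simpa using sum_mul_classAvg (s := s) (g := fun _ => 1) (fun _ _ _ => rfl) f

lemma sq_classAvg_le (s : Setoid Ω) (f : Ω → ℝ) (x : Ω) :
    classAvg s f x ^ 2 ≤ classAvg s (fun y => f y ^ 2) x :=
  sq_expect_le _ _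

lemma sum_sq_classAvg_le (s : Setoid Ω) (f : Ω → ℝ) :
    ∑ x, classAvg s f x ^ 2 ≤ ∑ x, f x ^ 2 :=
  (sum_le_sum fun x _ => sq_classAvg_le s f x).trans_eq (sum_classAvg s _)

lemma classVar_nonneg (s : Setoid Ω) (f : Ω → ℝ) : 0 ≤ classVar s f :=
  sum_nonneg fun _ _ => sq_nonneg _

lemma classVar_eq (s : Setoid Ω) (f : Ω → ℝ) :
    classVar s f = ∑ x, f x ^ 2 - ∑ x, classAvg s f x ^ 2 := by
  have hcross : ∑ x, classAvg s f x * f x = ∑ x, classAvg s f x ^ 2 := by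
    rw [← sum_mul_classAvg (le_ker_classAvg s f)]; simp only [sq]
  calc classVar s f
      = ∑ x, f x ^ 2 - 2 * ∑ x, classAvg s f x * f x + ∑ x, classAvg s f x ^ 2 := by
        rw [mul_sum, ← sum_sub_distrib, ← sum_add_distrib]
        exact sum_congr rfl fun x _ => by ring
    _ = _ := by rw [hcross]; ring

lemma classVar_le_sum_sq_sub (s : Setoid Ω) (f : Ω → ℝ) :
    classVar s f ≤ ∑ x, ∑ y with s x y, (f x - f y) ^ 2 := by
  refine sum_le_sum fun x _ => ?_
  have hclass := filter_class_nonempty s x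
  calc (f x - classAvg s f x) ^ 2 = (𝔼 y with s x y, (f x - f y)) ^ 2 := by
        rw [expect_sub_distrib, expect_const hclass, classAvg]
    _ ≤ 𝔼 y with s x y, (f x - f y) ^ 2 := sq_expect_le _ _
    _ ≤ ∑ y with s x y, (f x - f y) ^ 2 := by
        rw [expect_eq_sum_div_card]
        exact div_le_self (sum_nonneg fun _ _ => sq_nonneg _)
          (by exact_mod_cast Nat.one_le_iff_ne_zero.2 hclass.card_pos.ne')

lemma classVar_bot (f : Ω → ℝ) : classVar ⊥ f = 0 := by
  have : classAvg ⊥ f = f := classAvg_of_le_ker bot_le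
  simp [classVar, this]

lemma classVar_add_classVar_classAvg (h : s ≤ t) (f : Ω → ℝ) :
    classVar s f + classVar t (classAvg s f) = classVar t f := by
  rw [classVar_eq, classVar_eq, classVar_eq, classAvg_classAvg_of_le h]; ring

lemma classVar_mono (h : s ≤ t) (f : Ω → ℝ) : classVar s f ≤ classVar t f := by
  linarith [classVar_add_classVar_classAvg h f, classVar_nonneg t (classAvg s f)]

lemma classVar_classAvg_le_of_le (h : s ≤ t) (f : Ω → ℝ) :
    classVar t (classAvg s f) ≤ classVar t f := by
  linarith [classVar_add_classVar_classAvg h f, classVar_nonneg s f]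

namespace Transverse

lemma le_ker_classAvg (h : Transverse s t) (hf : t ≤ Setoid.ker f) :
    t ≤ Setoid.ker (classAvg s f) := by
  intro x y hxy
  choose! w hyw hwz using fun z (hz : s x z) => h.symm.comp (t.symm hxy) hz
  refine expect_bij (fun z _ => w z) (fun z hz => ?_) (fun z hz => ?_) (fun z hz z' hz' heq => ?_)
    fun v hv => ?_
  · simpa using hyw z (mem_filter.1 hz).2
  · exact (hf (hwz z (mem_filter.1 hz).2)).symm
  · replace hz := (mem_filter.1 hz).2
    replace hz' := (mem_filter.1 hz').2
    exact h.eq_of_rel (s.trans (s.symm hz) hz')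
      (t.trans (t.symm (hwz z hz)) (heq ▸ hwz z' hz'))
  · replace hv := (mem_filter.1 hv).2
    obtain ⟨z, hxz, hzv⟩ := h.symm.comp hxy hv
    exact ⟨z, by simpa using hxz,
      h.eq_of_rel (s.trans (s.symm (hyw z hxz)) hv) (t.trans (hwz z hxz) hzv)⟩

lemma classAvg_sup (h : Transverse s t) (f : Ω → ℝ) :
    classAvg (s ⊔ t) f = classAvg s (classAvg t f) :=
  (eq_classAvg (sup_le (_root_.le_ker_classAvg s _)
    (h.le_ker_classAvg (_root_.le_ker_classAvg t f))) fun g hg => by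
      rw [sum_mul_classAvg (le_sup_left.trans hg), sum_mul_classAvg (le_sup_right.trans hg)]).symm

lemma classAvg_comm (h : Transverse s t) (f : Ω → ℝ) :
    classAvg s (classAvg t f) = classAvg t (classAvg s f) := by
  rw [← h.classAvg_sup, sup_comm, h.symm.classAvg_sup]

lemma classVar_classAvg_le (h : Transverse s t) (f : Ω → ℝ) :
    classVar t (classAvg s f) ≤ classVar t f := by
  have hdiff : ∀ x, classAvg s f x - classAvg t (classAvg s f) x
      = classAvg s (fun y => f y - classAvg t f y) x := by
    intro x; rw [classAvg_sub, h.classAvg_comm]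
  simpa only [classVar, hdiff] using sum_sq_classAvg_le s fun y => f y - classAvg t f y

lemma classVar_sup_le (h : Transverse s t) (f : Ω → ℝ) :
    classVar (s ⊔ t) f ≤ classVar s f + classVar t f := by
  have hsup : classVar (s ⊔ t) (classAvg s f) = classVar t (classAvg s f) := by
    rw [classVar_eq, classVar_eq, classAvg_classAvg_of_le le_sup_left, h.classAvg_sup,
      h.classAvg_comm]
  rw [← classVar_add_classVar_classAvg (le_sup_left : s ≤ s ⊔ t), hsup]
  linarith [h.classVar_classAvg_le f]

end Transverse

end ClassAverage

/-! ### Proper colourings of a conflict graph -/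

section ProperColouring

variable {E : Type*} {H : SimpleGraph E} {k : ℕ} {A B : Finset E}

/-- Proper `k`-colourings of a conflict graph `H`. Edge colourings are the case where the vertices
of `H` are edges, in conflict when they share an endpoint. -/
abbrev ProperColouring (H : SimpleGraph E) (k : ℕ) :=
  {σ : E → Fin k // ∀ e f : E, H.Adj e f → σ e ≠ σ f}

/-- The relation of agreeing outside `A`. -/
def agreeOff (A : Finset E) : Setoid (ProperColouring H k) where
  r σ η := ∀ x, x ∉ A → σ.1 x = η.1 x
  iseqv := ⟨fun _ _ _ => rfl, fun h x hx => (h x hx).symm,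
    fun h h' x hx => (h x hx).trans (h' x hx)⟩

lemma agreeOff_mono (hAB : A ⊆ B) : (agreeOff A : Setoid (ProperColouring H k)) ≤ agreeOff B :=
  fun _ _ h x hx => h x fun hA => hx (hAB hA)

lemma agreeOff_empty : (agreeOff ∅ : Setoid (ProperColouring H k)) = ⊥ :=
  eq_bot_iff.2 fun _ _ h => Subtype.ext (funext fun x => h x (notMem_empty x))

lemma agreeOff_univ [Fintype E] : (agreeOff univ : Setoid (ProperColouring H k)) = ⊤ :=
  eq_top_iff.2 fun _ _ _ x hx => absurd (mem_univ x) hx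

/-- A function of the colouring ignores `A` if it depends only on the colours outside `A`. -/
abbrev Ignores (A : Finset E) (f : ProperColouring H k → ℝ) : Prop := agreeOff A ≤ Setoid.ker f

/-- No element of `A` equals or conflicts with an element of `B`. -/
def Separated (H : SimpleGraph E) (A B : Finset E) : Prop :=
  ∀ x ∈ A, ∀ y ∈ B, x ≠ y ∧ ¬ H.Adj x y

lemma Separated.symm (h : Separated H A B) : Separated H B A :=
  fun x hx y hy => ⟨(h y hy x hx).1.symm, fun hxy => (h y hy x hx).2 hxy.symm⟩

lemma Separated.mono {A' B' : Finset E} (h : Separated H A B) (hA : A' ⊆ A) (hB : B' ⊆ B) :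
    Separated H A' B' := fun x hx y hy => h x (hA hx) y (hB hy)

lemma Separated.biUnion_right [DecidableEq E] {ι : Type*} {S : Finset ι} {B : ι → Finset E}
    (h : ∀ i ∈ S, Separated H A (B i)) : Separated H A (S.biUnion B) := by
  intro x hx y hy
  obtain ⟨i, hi, hyi⟩ := mem_biUnion.1 hy
  exact h i hi x hx y hyi

namespace Separated

lemma exists_recombination (h : Separated H A B) {σ η : ProperColouring H k}
    (hση : ∀ x, x ∉ A → x ∉ B → σ.1 x = η.1 x) :
    ∃ ζ, agreeOff A σ ζ ∧ agreeOff B ζ η := by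
  have hnbr : ∀ x ∈ A, ∀ y ∉ A, H.Adj x y → σ.1 y = η.1 y := fun x hx y hy hxy =>
    hση y hy fun hyB => (h x hx y hyB).2 hxy
  refine ⟨⟨fun x => if x ∈ A then η.1 x else σ.1 x, fun e f hef => ?_⟩,
    fun x hx => (if_neg hx).symm, fun x hxB => ?_⟩
  · by_cases he : e ∈ A <;> by_cases hf : f ∈ A <;> simp only [he, hf, if_true, if_false]
    · exact η.2 e f hef
    · rw [hnbr e he f hf hef]; exact η.2 e f hef
    · rw [hnbr f hf e he hef.symm]; exact η.2 e f hef
    · exact σ.2 e f hef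
  · by_cases hxA : x ∈ A
    · exact if_pos hxA
    · exact (if_neg hxA).trans (hση x hxA hxB)

lemma transverse (h : Separated H A B) :
    Transverse (agreeOff A : Setoid (ProperColouring H k)) (agreeOff B) where
  disjoint := disjoint_iff_inf_le.2 fun σ η hση => Subtype.ext (funext fun x => by
    by_cases hx : x ∈ A
    · exact hση.2 x fun hxB => (h x hx x hxB).1 rfl
    · exact hση.1 x hx)
  comp _ _ _ hσζ hζη := h.symm.exists_recombination fun x hxB hxA =>
    (hσζ x hxA).trans (hζη x hxB)

lemma agreeOff_union [DecidableEq E] (h : Separated H A B) :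
    (agreeOff (A ∪ B) : Setoid (ProperColouring H k)) = agreeOff A ⊔ agreeOff B := by
  refine le_antisymm (fun σ η hση => ?_)
    (sup_le (agreeOff_mono subset_union_left) (agreeOff_mono subset_union_right))
  obtain ⟨ζ, hσζ, hζη⟩ := h.exists_recombination fun x hA hB =>
    hση x fun hx => (mem_union.1 hx).elim hA hB
  exact (agreeOff A ⊔ agreeOff B).trans (Setoid.le_def.1 le_sup_left hσζ)
    (Setoid.le_def.1 le_sup_right hζη)

end Separated

end ProperColouring

/-- `avg[A] f` resamples the colours in `A` uniformly, given all the others. -/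
local notation "avg[" A "]" => classAvg (agreeOff A)

/-- `var[A] f` is the (unnormalised) expected variance of `f` when `A` is resampled. -/
local notation "var[" A "]" => classVar (agreeOff A)

section BlockVariance

variable {E : Type*} [Fintype E] [DecidableEq E] {H : SimpleGraph E} {k : ℕ}

variable {A B : Finset E} (f : ProperColouring H k → ℝ)

lemma Separated.avg_union (h : Separated H A B) : avg[A ∪ B] f = avg[A] (avg[B] f) := by
  rw [h.agreeOff_union, h.transverse.classAvg_sup]

lemma Separated.var_union_le (h : Separated H A B) : var[A ∪ B] f ≤ var[A] f + var[B] f := by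
  rw [h.agreeOff_union]; exact h.transverse.classVar_sup_le f

lemma var_biUnion_le {ι : Type*} (S : Finset ι) (A : ι → Finset E)
    (h : ∀ i ∈ S, ∀ j ∈ S, i ≠ j → Separated H (A i) (A j)) :
    var[S.biUnion A] f ≤ ∑ i ∈ S, var[A i] f := by
  induction S using Finset.induction_on with
  | empty => simp [agreeOff_empty, classVar_bot]
  | insert a S ha ih =>
    have hsep : Separated H (A a) (S.biUnion A) := Separated.biUnion_right fun j hj =>
      h a (mem_insert_self _ _) j (mem_insert_of_mem hj) (by rintro rfl; exact ha hj)
    have ih := ih fun i hi j hj => h i (mem_insert_of_mem hi) j (mem_insert_of_mem hj)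
    rw [biUnion_insert, sum_insert ha]
    linarith [hsep.var_union_le f]

lemma var_avg_union_le {D₁ D₂ : Finset E} (h₁ : D₁ ⊆ B) (h₂ : Separated H D₂ B) :
    var[B] (avg[D₂ ∪ D₁] f) ≤ var[B] f := by
  rw [(h₂.mono subset_rfl h₁).avg_union]
  exact (h₂.transverse.classVar_classAvg_le _).trans
    (classVar_classAvg_le_of_le (agreeOff_mono h₁) f)

end BlockVariance

/-! ### Swapping two colours inside an anchored set -/

section Swap

variable {E : Type*} {H : SimpleGraph E} {k : ℕ} {A : Finset E} {r : E}

/-- `A` is anchored at its element `r` if every outside neighbour of `A` is a neighbour of `r`.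
Then a transposition of colours inside `A` only has to respect the constraints at `r`. -/
structure Anchored (H : SimpleGraph E) (A : Finset E) (r : E) : Prop where
  mem : r ∈ A
  adj_of_adj : ∀ x ∈ A, ∀ y ∉ A, H.Adj x y → H.Adj r y

/-- The colours that the colouring outside `A` leaves available at `r`. -/
noncomputable def avail (A : Finset E) (r : E) (σ : ProperColouring H k) : Finset (Fin k) :=
  univ.filter fun b => ∀ y ∉ A, H.Adj r y → σ.1 y ≠ b

variable {b : Fin k} {σ η : ProperColouring H k}

lemma mem_avail : b ∈ avail A r σ ↔ ∀ y ∉ A, H.Adj r y → σ.1 y ≠ b := by simp [avail]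

lemma avail_congr (h : agreeOff A σ η) : avail A r σ = avail A r η := by
  ext b
  simp only [mem_avail]
  exact forall₂_congr fun y hy => by rw [h y hy]

lemma root_mem_avail (A : Finset E) (r : E) (σ : ProperColouring H k) : σ.1 r ∈ avail A r σ :=
  mem_avail.2 fun y _ hry => (σ.2 r y hry).symm

lemma avail_nonempty (A : Finset E) (r : E) (σ : ProperColouring H k) : (avail A r σ).Nonempty :=
  ⟨_, root_mem_avail A r σ⟩

lemma avail_card_pos (A : Finset E) (r : E) (σ : ProperColouring H k) :
    (0 : ℝ) < #(avail A r σ) :=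
  Nat.cast_pos.2 (avail_nonempty A r σ).card_pos

lemma avail_eq_of_adj_iff {r' : E} (h : ∀ y ∉ A, (H.Adj r y ↔ H.Adj r' y))
    (σ : ProperColouring H k) : avail A r σ = avail A r' σ := by
  ext b
  simp only [mem_avail]
  exact forall₂_congr fun y hy => by rw [h y hy]

lemma avail_eq_erase {A' : Finset E} {i : E} (hAA : A' ⊆ A) (hi : i ∉ A') (hri : H.Adj r i)
    (huniq : ∀ y ∈ A, y ∉ A' → H.Adj r y → y = i) (σ : ProperColouring H k) :
    avail A' r σ = (avail A r σ).erase (σ.1 i) := by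
  ext b
  simp only [mem_avail, mem_erase]
  refine ⟨fun h => ⟨(h i hi hri).symm, fun y hy => h y fun hy' => hy (hAA hy')⟩, ?_⟩
  rintro ⟨hbi, hb⟩ y hy hry
  by_cases hyA : y ∈ A
  · rw [huniq y hyA hy hry]; exact hbi.symm
  · exact hb y hyA hry

lemma card_compl_image_colour (T : Finset E) (σ : ProperColouring H k) :
    #(T.image σ.1)ᶜ + #(T.image σ.1) = k := by
  rw [card_compl_add_card, Fintype.card_fin]

lemma le_card_avail_add {T : Finset E} (hT : ∀ y ∉ A, H.Adj r y → y ∈ T)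
    (σ : ProperColouring H k) : k ≤ #(avail A r σ) + #T := by
  have hsub : (T.image σ.1)ᶜ ⊆ avail A r σ := fun b hb => mem_avail.2 fun y hy hry hyb =>
    mem_compl.1 hb (mem_image.2 ⟨y, hT y hy hry, hyb⟩)
  have := card_le_card hsub
  have := card_compl_image_colour T σ
  have : #(T.image σ.1) ≤ #T := card_image_le
  omega

lemma card_avail_add {T : Finset E} (hT : ∀ y, y ∈ T ↔ y ∉ A ∧ H.Adj r y)
    (hclique : ∀ x ∈ T, ∀ y ∈ T, x ≠ y → H.Adj x y) (σ : ProperColouring H k) :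
    #(avail A r σ) + #T = k := by
  have havail : avail A r σ = (T.image σ.1)ᶜ := by
    ext b
    simp only [mem_avail, mem_compl, mem_image, not_exists, not_and, hT, and_imp, ne_eq]
  have hcard : #(T.image σ.1) = #T := card_image_of_injOn fun x hx y hy hxy => by
    by_contra hne
    exact σ.2 x y (hclique x hx y hy hne) hxy
  rw [havail, ← hcard]
  exact card_compl_image_colour T σ

lemma swap_ne_of_adj (hA : Anchored H A r) (hb : b ∈ avail A r σ) {e f : E} (he : e ∈ A)
    (hf : f ∉ A) (hef : H.Adj e f) : Equiv.swap (σ.1 r) b (σ.1 e) ≠ σ.1 f := by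
  have hrf : H.Adj r f := hA.adj_of_adj e he f hf hef
  have hfix : Equiv.swap (σ.1 r) b (σ.1 f) = σ.1 f :=
    Equiv.swap_apply_of_ne_of_ne (σ.2 r f hrf).symm (mem_avail.1 hb f hf hrf)
  rw [← hfix]
  exact fun heq => σ.2 e f hef ((Equiv.swap _ _).injective heq)

lemma swap_proper (hA : Anchored H A r) (hb : b ∈ avail A r σ) (e f : E) (hef : H.Adj e f) :
    (if e ∈ A then Equiv.swap (σ.1 r) b (σ.1 e) else σ.1 e) ≠
      if f ∈ A then Equiv.swap (σ.1 r) b (σ.1 f) else σ.1 f := by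
  by_cases he : e ∈ A <;> by_cases hf : f ∈ A <;> simp only [he, hf, if_true, if_false]
  · exact fun heq => σ.2 e f hef ((Equiv.swap _ _).injective heq)
  · exact swap_ne_of_adj hA hb he hf hef
  · exact (swap_ne_of_adj hA hb hf he hef.symm).symm
  · exact σ.2 e f hef

/-- Give `r` the colour `b` by exchanging the colours `σ r` and `b` throughout `A`. By convention
`σ` is unchanged if `A` is not anchored at `r` or `b` is not available there. -/
noncomputable def swapAt (A : Finset E) (r : E) (b : Fin k) (σ : ProperColouring H k) :
    ProperColouring H k :=
  if h : Anchored H A r ∧ b ∈ avail A r σ then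
    ⟨fun x => if x ∈ A then Equiv.swap (σ.1 r) b (σ.1 x) else σ.1 x, swap_proper h.1 h.2⟩
  else σ

lemma swapAt_of_notMem {x : E} (hx : x ∉ A) : (swapAt A r b σ).1 x = σ.1 x := by
  unfold swapAt; split_ifs <;> simp [hx]

lemma agreeOff_swapAt (A : Finset E) (r : E) (b : Fin k) (σ : ProperColouring H k) :
    agreeOff A σ (swapAt A r b σ) := fun _ hx => (swapAt_of_notMem hx).symm

lemma swapAt_of_mem (hA : Anchored H A r) (hb : b ∈ avail A r σ) {x : E} (hx : x ∈ A) :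
    (swapAt A r b σ).1 x = Equiv.swap (σ.1 r) b (σ.1 x) := by
  rw [swapAt, dif_pos ⟨hA, hb⟩]; exact if_pos hx

lemma swapAt_root (hA : Anchored H A r) (hb : b ∈ avail A r σ) : (swapAt A r b σ).1 r = b := by
  rw [swapAt_of_mem hA hb hA.mem, Equiv.swap_apply_left]

lemma avail_swapAt (A : Finset E) (r r' : E) (b : Fin k) (σ : ProperColouring H k) :
    avail A r' (swapAt A r b σ) = avail A r' σ :=
  (avail_congr (agreeOff_swapAt A r b σ)).symm

lemma swapAt_swapAt (hA : Anchored H A r) (hb : b ∈ avail A r σ) :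
    swapAt A r (σ.1 r) (swapAt A r b σ) = σ := by
  refine Subtype.ext (funext fun x => ?_)
  by_cases hx : x ∈ A
  · have hr : σ.1 r ∈ avail A r (swapAt A r b σ) := by
      rw [avail_swapAt]; exact root_mem_avail A r σ
    rw [swapAt_of_mem hA hr hx, swapAt_root hA hb, swapAt_of_mem hA hb hx, Equiv.swap_comm,
      Equiv.swap_apply_self]
  · rw [swapAt_of_notMem hx, swapAt_of_notMem hx]

variable [DecidableEq E]

lemma Ignores.swapAt_eq_swapAt {A' : Finset E} {g : ProperColouring H k → ℝ}
    (hg : Ignores (A.erase r) g) (hA : Anchored H A r) (hA' : Anchored H A' r) (hAA : A' ⊆ A)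
    (hση : agreeOff A σ η) (hb : b ∈ avail A' r σ) (hb' : b ∈ avail A r η) :
    g (swapAt A' r b σ) = g (swapAt A r b η) := hg fun x hx => by
  by_cases hxr : x = r
  · rw [hxr, swapAt_root hA' hb, swapAt_root hA hb']
  · have hxA : x ∉ A := fun h => hx (mem_erase.2 ⟨hxr, h⟩)
    rw [swapAt_of_notMem hxA, swapAt_of_notMem fun h => hxA (hAA h)]
    exact hση x hxA

variable [Fintype E]

-- `(σ, b) ↦ (swapAt A r b σ, σ r)` is an involution of the pairs with `b` available at `r`.
lemma sum_avail_eq_sum_swapAt (hA : Anchored H A r) (φ : ProperColouring H k → Fin k → ℝ) :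
    ∑ σ, ∑ b ∈ avail A r σ, φ σ b = ∑ σ, ∑ b ∈ avail A r σ, φ (swapAt A r b σ) (σ.1 r) := by
  rw [sum_sigma', sum_sigma']
  let swapPair : (Σ _ : ProperColouring H k, Fin k) → Σ _ : ProperColouring H k, Fin k :=
    fun p => ⟨swapAt A r p.2 p.1, p.1.1 r⟩
  have hmaps : ∀ p ∈ univ.sigma (avail (H := H) (k := k) A r),
      swapPair p ∈ univ.sigma (avail A r) := by
    rintro ⟨σ, b⟩ -
    simp only [swapPair, mem_sigma, mem_univ, true_and, avail_swapAt]
    exact root_mem_avail A r σ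
  have hinvol : ∀ p ∈ univ.sigma (avail (H := H) (k := k) A r), swapPair (swapPair p) = p := by
    rintro ⟨σ, b⟩ hp
    have hb : b ∈ avail A r σ := (mem_sigma.1 hp).2
    simp only [swapPair, swapAt_swapAt hA hb, swapAt_root hA hb]
  refine sum_bij' (fun p _ => swapPair p) (fun p _ => swapPair p) hmaps hmaps hinvol hinvol ?_
  rintro ⟨σ, b⟩ hp
  have hb : b ∈ avail A r σ := (mem_sigma.1 hp).2
  simp only [swapPair, swapAt_swapAt hA hb, swapAt_root hA hb]

lemma sum_mul_expect_swapAt (hA : Anchored H A r) {w : ProperColouring H k → ℝ}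
    (hw : Ignores A w) (g : ProperColouring H k → ℝ) :
    ∑ σ, w σ * 𝔼 b ∈ avail A r σ, g (swapAt A r b σ) = ∑ σ, w σ * g σ := by
  simp only [expect_eq_sum_div_card, sum_div, mul_sum]
  rw [sum_avail_eq_sum_swapAt hA fun σ b => w σ * (g (swapAt A r b σ) / #(avail A r σ))]
  refine sum_congr rfl fun σ _ => ?_
  have hterm : ∀ b ∈ avail A r σ, w (swapAt A r b σ) *
      (g (swapAt A r (σ.1 r) (swapAt A r b σ)) / #(avail A r (swapAt A r b σ)))
        = w σ * g σ / #(avail A r σ) := fun b hb => by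
    rw [swapAt_swapAt hA hb, avail_swapAt,
      show w (swapAt A r b σ) = w σ from (hw (agreeOff_swapAt A r b σ)).symm, mul_div_assoc]
  rw [sum_congr rfl hterm, sum_const, nsmul_eq_mul, mul_div_cancel₀ _ (avail_card_pos A r σ).ne']

lemma avg_eq_expect_swapAt (hA : Anchored H A r) {g : ProperColouring H k → ℝ}
    (hg : Ignores (A.erase r) g) (σ : ProperColouring H k) :
    avg[A] g σ = 𝔼 b ∈ avail A r σ, g (swapAt A r b σ) := by
  have hinv : Ignores A fun σ => 𝔼 b ∈ avail A r σ, g (swapAt A r b σ) := fun σ η h => by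
    simp only [Setoid.ker_def]
    rw [avail_congr h]
    exact expect_congr rfl fun b hb =>
      hg.swapAt_eq_swapAt hA hA subset_rfl h (by rwa [avail_congr h]) hb
  exact (congrFun (eq_classAvg hinv fun w hw => sum_mul_expect_swapAt hA hw g) σ).symm

lemma sum_mul_expect_sq_sub_swapAt_le (hA : Anchored H A r) {w : ProperColouring H k → ℝ}
    (hw : Ignores A w) (hw₀ : ∀ σ, 0 ≤ w σ) (F : ProperColouring H k → ℝ) :
    ∑ σ, w σ * 𝔼 b ∈ avail A r σ, (F σ - F (swapAt A r b σ)) ^ 2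
      ≤ 4 * ∑ σ, w σ * (F σ - avg[A] F σ) ^ 2 := by
  set d : ProperColouring H k → ℝ := fun σ => F σ - avg[A] F σ
  have hterm : ∀ σ b, (F σ - F (swapAt A r b σ)) ^ 2
      ≤ 2 * d σ ^ 2 + 2 * d (swapAt A r b σ) ^ 2 := fun σ b => by
    have : avg[A] F (swapAt A r b σ) = avg[A] F σ :=
      (le_ker_classAvg _ F (agreeOff_swapAt A r b σ)).symm
    simp only [d, this]
    nlinarith [sq_nonneg ((F σ - avg[A] F σ) + (F (swapAt A r b σ) - avg[A] F σ))]
  calc ∑ σ, w σ * 𝔼 b ∈ avail A r σ, (F σ - F (swapAt A r b σ)) ^ 2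
      ≤ ∑ σ, w σ * 𝔼 b ∈ avail A r σ, (2 * d σ ^ 2 + 2 * d (swapAt A r b σ) ^ 2) := by
        gcongr with σ _ b _
        · exact hw₀ σ
        · exact hterm σ b
    _ = 2 * ∑ σ, w σ * d σ ^ 2
          + 2 * ∑ σ, w σ * 𝔼 b ∈ avail A r σ, d (swapAt A r b σ) ^ 2 := by
        rw [mul_sum, mul_sum, ← sum_add_distrib]
        refine sum_congr rfl fun σ _ => ?_
        rw [expect_add_distrib, expect_const (avail_nonempty A r σ), ← mul_expect]
        ring
    _ = 4 * ∑ σ, w σ * d σ ^ 2 := by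
        rw [sum_mul_expect_swapAt hA hw fun σ => d σ ^ 2]; ring

lemma sum_expect_sq_sub_swapAt_le (hA : Anchored H A r) (F : ProperColouring H k → ℝ) :
    ∑ σ, 𝔼 b ∈ avail A r σ, (F σ - F (swapAt A r b σ)) ^ 2 ≤ 4 * var[A] F := by
  simpa [classVar] using
    sum_mul_expect_sq_sub_swapAt_le hA (w := fun _ => 1) (fun _ _ _ => rfl) (fun _ => zero_le_one) F

end Swap

/-! ### Approximate tensorization over a star of blocks -/

section Star

variable {E : Type*} {H : SimpleGraph E} {k : ℕ} {S : Finset E}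
  {blk : E → Finset E}

/-- A star: a clique `S` of roots, each root `r` carrying a block `blk r` which is attached to the
other blocks through the roots only, and such that all blocks have the same neighbours outside
their union. In a tree, these are sibling edges together with the subtrees below them. -/
structure IsStar (H : SimpleGraph E) (S : Finset E) (blk : E → Finset E) : Prop where
  root_mem : ∀ r ∈ S, r ∈ blk r
  isClique : H.IsClique S
  pairwiseDisjoint : (S : Set E).PairwiseDisjoint blk
  eq_root_of_adj : ∀ r ∈ S, ∀ r' ∈ S, r ≠ r' → ∀ x ∈ blk r, ∀ y ∈ blk r', H.Adj x y →
    x = r ∧ y = r'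
  adj_of_adj : ∀ r ∈ S, ∀ x ∈ blk r, ∀ y ∉ blk r, H.Adj x y → ∀ s ∈ S, y ∉ blk s → H.Adj s y

lemma IsStar.mono (h : IsStar H S blk) {S' : Finset E} (hS : S' ⊆ S) : IsStar H S' blk where
  root_mem r hr := h.root_mem r (hS hr)
  isClique := h.isClique.subset (coe_subset.2 hS)
  pairwiseDisjoint := h.pairwiseDisjoint.subset (coe_subset.2 hS)
  eq_root_of_adj r hr r' hr' := h.eq_root_of_adj r (hS hr) r' (hS hr')
  adj_of_adj r hr x hx y hy hxy r' hr' := h.adj_of_adj r (hS hr) x hx y hy hxy r' (hS hr')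

lemma IsStar.notMem_of_mem (h : IsStar H S blk) {r r' x : E} (hr : r ∈ S) (hr' : r' ∈ S)
    (hne : r ≠ r') (hx : x ∈ blk r) : x ∉ blk r' :=
  disjoint_left.1 (h.pairwiseDisjoint hr hr' hne) hx

lemma IsStar.anchored_blk (h : IsStar H S blk) {r : E} (hr : r ∈ S) : Anchored H (blk r) r :=
  ⟨h.root_mem r hr, fun x hx y hy hxy => h.adj_of_adj r hr x hx y hy hxy r hr hy⟩

variable [DecidableEq E]

/-- The non-root elements of a star. -/
def starInner (blk : E → Finset E) (S : Finset E) : Finset E :=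
  S.biUnion fun r => (blk r).erase r

lemma mem_starInner {x : E} : x ∈ starInner blk S ↔ ∃ r ∈ S, x ∈ blk r ∧ x ≠ r := by
  simp only [starInner, mem_biUnion, mem_erase, and_comm]

lemma starInner_subset : starInner blk S ⊆ S.biUnion blk :=
  biUnion_mono fun _ _ => erase_subset _ _

lemma starInner_eq_union {i : E} (hi : i ∈ S) :
    starInner blk S = starInner blk (S.erase i) ∪ (blk i).erase i := by
  conv_lhs => rw [← insert_erase hi]
  rw [starInner, biUnion_insert, union_comm]; rfl

lemma biUnion_erase_subset (S : Finset E) (blk : E → Finset E) (i : E) :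
    (S.erase i).biUnion blk ⊆ S.biUnion blk :=
  biUnion_subset_biUnion_of_subset_left _ (erase_subset _ _)

lemma mem_of_mem_biUnion_of_notMem_erase {i x : E} (hx : x ∈ S.biUnion blk)
    (hx' : x ∉ (S.erase i).biUnion blk) : x ∈ blk i := by
  obtain ⟨r, hr, hxr⟩ := mem_biUnion.1 hx
  by_cases hri : r = i
  · exact hri ▸ hxr
  · exact absurd (mem_biUnion.2 ⟨r, mem_erase.2 ⟨hri, hr⟩, hxr⟩) hx'

namespace IsStar

lemma anchored_biUnion (h : IsStar H S blk) {j : E} (hj : j ∈ S) :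
    Anchored H (S.biUnion blk) j := by
  refine ⟨mem_biUnion.2 ⟨j, hj, h.root_mem j hj⟩, fun x hx y hy hxy => ?_⟩
  obtain ⟨r, hr, hxr⟩ := mem_biUnion.1 hx
  have hy' : ∀ r ∈ S, y ∉ blk r := fun r hr hyr => hy (mem_biUnion.2 ⟨r, hr, hyr⟩)
  exact h.adj_of_adj r hr x hxr y (hy' r hr) hxy j hj (hy' j hj)

lemma avail_eq (h : IsStar H S blk) {i j : E} (hi : i ∈ S) (hj : j ∈ S)
    (σ : ProperColouring H k) : avail (S.biUnion blk) i σ = avail (S.biUnion blk) j σ :=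
  avail_eq_of_adj_iff (fun y hy =>
    ⟨(h.anchored_biUnion hj).adj_of_adj i (h.anchored_biUnion hi).mem y hy,
      (h.anchored_biUnion hi).adj_of_adj j (h.anchored_biUnion hj).mem y hy⟩) σ

lemma colour_mem_avail (h : IsStar H S blk) {i j : E} (hi : i ∈ S) (hj : j ∈ S)
    (σ : ProperColouring H k) : σ.1 i ∈ avail (S.biUnion blk) j σ :=
  h.avail_eq hi hj σ ▸ root_mem_avail _ _ _

lemma notMem_biUnion_erase (h : IsStar H S blk) {i x : E} (hi : i ∈ S) (hx : x ∈ blk i) :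
    x ∉ (S.erase i).biUnion blk := by
  intro hx'
  obtain ⟨r, hr, hxr⟩ := mem_biUnion.1 hx'
  exact h.notMem_of_mem hi (mem_of_mem_erase hr) (ne_of_mem_erase hr).symm hx hxr

lemma avail_biUnion_erase (h : IsStar H S blk) {i j : E} (hi : i ∈ S) (hj : j ∈ S) (hij : i ≠ j)
    (σ : ProperColouring H k) :
    avail ((S.erase i).biUnion blk) j σ = (avail (S.biUnion blk) j σ).erase (σ.1 i) := by
  refine avail_eq_erase (biUnion_erase_subset S blk i)
    (h.notMem_biUnion_erase hi (h.root_mem i hi)) (h.isClique hj hi hij.symm)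
    (fun y hy hy' hjy => ?_) σ
  exact (h.eq_root_of_adj j hj i hi hij.symm j (h.root_mem j hj) y
    (mem_of_mem_biUnion_of_notMem_erase hy hy') hjy).2

lemma card_avail_erase (h : IsStar H S blk) {i : E} (hi : i ∈ S)
    (hc : ∀ σ : ProperColouring H k, ∀ j ∈ S, #S + 1 ≤ #(avail (S.biUnion blk) j σ))
    (σ : ProperColouring H k) (j : E) (hj : j ∈ S.erase i) :
    #(S.erase i) + 1 ≤ #(avail ((S.erase i).biUnion blk) j σ) := by
  have hjS := mem_of_mem_erase hj
  have hcard := hc σ j hjS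
  have hin := h.colour_mem_avail hi hjS σ
  rw [h.avail_biUnion_erase hi hjS (ne_of_mem_erase hj).symm,
    card_erase_of_mem hin, card_erase_of_mem hi]
  have hpos := card_pos.2 ⟨i, hi⟩
  omega

lemma two_le_card_avail (h : IsStar H S blk)
    (hc : ∀ σ : ProperColouring H k, ∀ j ∈ S, #S + 1 ≤ #(avail (S.biUnion blk) j σ)) {i : E}
    (hi : i ∈ S) (σ : ProperColouring H k) : 2 ≤ #(avail (blk i) i σ) := by
  have hsub : avail (S.biUnion blk) i σ \ (S.erase i).image σ.1 ⊆ avail (blk i) i σ :=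
    fun b hb => mem_avail.2 fun y hy hiy hyb => by
      obtain ⟨hb, hb'⟩ := mem_sdiff.1 hb
      by_cases hyS : y ∈ S.biUnion blk
      · obtain ⟨j, hj, hyj⟩ := mem_biUnion.1 hyS
        have hij : i ≠ j := fun hij => hy (hij ▸ hyj)
        obtain rfl := (h.eq_root_of_adj i hi j hj hij i (h.root_mem i hi) y hyj hiy).2
        exact hb' (mem_image.2 ⟨y, mem_erase.2 ⟨hij.symm, hj⟩, hyb⟩)
      · exact mem_avail.1 hb y hyS hiy hyb
  have hle := le_card_sdiff ((S.erase i).image σ.1) (avail (S.biUnion blk) i σ)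
  have himage : #((S.erase i).image σ.1) ≤ #S - 1 := card_image_le.trans (card_erase_of_mem hi).le
  have hcard := card_le_card hsub
  have hS := hc σ i hi
  have hpos := card_pos.2 ⟨i, hi⟩
  omega

lemma separated_biUnion_erase (h : IsStar H S blk) {j : E} (hj : j ∈ S) :
    Separated H ((S.erase j).biUnion blk) ((blk j).erase j) := by
  intro x hx y hy
  obtain ⟨r, hr, hxr⟩ := mem_biUnion.1 hx
  have hyj := mem_of_mem_erase hy
  have hr' := mem_of_mem_erase hr
  have hrj := ne_of_mem_erase hr
  exact ⟨fun hxy => h.notMem_of_mem hr' hj hrj hxr (hxy ▸ hyj),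
    fun hxy => ne_of_mem_erase hy (h.eq_root_of_adj r hr' j hj hrj x hxr y hyj hxy).2⟩

lemma separated_starInner_erase (h : IsStar H S blk) {j : E} (hj : j ∈ S) :
    Separated H (starInner blk (S.erase j)) (blk j) := by
  intro x hx y hyj
  obtain ⟨r, hr, hxr, hne⟩ := mem_starInner.1 hx
  have hr' := mem_of_mem_erase hr
  have hrj := ne_of_mem_erase hr
  exact ⟨fun hxy => h.notMem_of_mem hr' hj hrj hxr (hxy ▸ hyj),
    fun hxy => hne (h.eq_root_of_adj r hr' j hj hrj x hxr y hyj hxy).1⟩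

end IsStar

variable [Fintype E]

/-- The component of `F` along the block of `j`: its centred conditional expectation when all the
other blocks are averaged out. -/
noncomputable def starComponent (blk : E → Finset E) (S : Finset E)
    (F : ProperColouring H k → ℝ) (j : E) (σ : ProperColouring H k) : ℝ :=
  avg[(S.erase j).biUnion blk] F σ - avg[S.biUnion blk] F σ

variable {F : ProperColouring H k → ℝ}

lemma ignores_biUnion_erase_starComponent (j : E) (F : ProperColouring H k → ℝ) :
    Ignores ((S.erase j).biUnion blk) (starComponent blk S F j) := fun _ _ h =>
  congrArg₂ (· - ·) (le_ker_classAvg _ F h)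
    (le_ker_classAvg _ F (agreeOff_mono (biUnion_erase_subset S blk j) h))

lemma avg_starComponent (j : E) (F : ProperColouring H k → ℝ) (σ : ProperColouring H k) :
    avg[S.biUnion blk] (starComponent blk S F j) σ = 0 := by
  unfold starComponent
  rw [classAvg_sub, classAvg_classAvg_of_le (agreeOff_mono (biUnion_erase_subset S blk j)),
    classAvg_classAvg_of_le le_rfl, sub_self]

lemma var_eq_add_sum_sq_starComponent (i : E) (F : ProperColouring H k → ℝ) :
    var[S.biUnion blk] F
      = var[(S.erase i).biUnion blk] F + ∑ σ, starComponent blk S F i σ ^ 2 := by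
  have hsub := agreeOff_mono (H := H) (k := k) (biUnion_erase_subset S blk i)
  rw [← classVar_add_classVar_classAvg hsub F, classVar.eq_1 (agreeOff (S.biUnion blk)),
    classAvg_classAvg_of_le hsub]
  rfl

lemma sum_sub_avg_mul_starComponent (i : E) (F : ProperColouring H k → ℝ) :
    ∑ σ, (F σ - avg[S.biUnion blk] F σ) * starComponent blk S F i σ
      = ∑ σ, starComponent blk S F i σ ^ 2 := by
  have hsub := agreeOff_mono (H := H) (k := k) (biUnion_erase_subset S blk i)
  calc ∑ σ, (F σ - avg[S.biUnion blk] F σ) * starComponent blk S F i σ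
      = ∑ σ, starComponent blk S F i σ * (F σ - avg[S.biUnion blk] F σ) := by
        simp only [mul_comm]
    _ = ∑ σ, starComponent blk S F i σ ^ 2 := by
        rw [← sum_mul_classAvg (ignores_biUnion_erase_starComponent i F)]
        refine sum_congr rfl fun σ _ => ?_
        rw [classAvg_sub, classAvg_classAvg_of_ge hsub, sq]
        rfl

/-- The Gram form of the star components of `F`, up to sign: for distinct roots `i` and `j` it is
minus the inner product of the components along `i` and `j`, and on the diagonal it is at most
their squared norm divided by `#S`. The root `r` serves only to name the list of colours available
at the roots, which is common to all of them. -/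
noncomputable def starGram (blk : E → Finset E) (S : Finset E) (F : ProperColouring H k → ℝ)
    (r i j : E) : ℝ :=
  ∑ σ : ProperColouring H k, 1 / (#(avail (S.biUnion blk) r σ) - 1 : ℝ) *
    𝔼 b ∈ avail (S.biUnion blk) r σ, starComponent blk S F i (swapAt (S.biUnion blk) i b σ) *
      starComponent blk S F j (swapAt (S.biUnion blk) j b σ)

lemma sum_starGram_nonneg (S : Finset E) (blk : E → Finset E) (F : ProperColouring H k → ℝ)
    (r : E) : 0 ≤ ∑ i ∈ S, ∑ j ∈ S, starGram blk S F r i j := by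
  have hsq : ∑ i ∈ S, ∑ j ∈ S, starGram blk S F r i j = ∑ σ : ProperColouring H k,
      1 / (#(avail (S.biUnion blk) r σ) - 1 : ℝ) * 𝔼 b ∈ avail (S.biUnion blk) r σ,
        (∑ i ∈ S, starComponent blk S F i (swapAt (S.biUnion blk) i b σ)) ^ 2 := by
    simp only [starGram, sum_comm (s := S) (t := univ)]
    refine sum_congr rfl fun σ _ => ?_
    simp only [← mul_sum, ← expect_sum_comm, sq, sum_mul_sum]
  rw [hsq]
  refine sum_nonneg fun σ _ => mul_nonneg ?_ (expect_nonneg fun _ _ => sq_nonneg _)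
  have : (1 : ℝ) ≤ #(avail (S.biUnion blk) r σ) :=
    Nat.one_le_cast.2 (avail_nonempty _ _ _).card_pos
  exact one_div_nonneg.2 (sub_nonneg.2 this)

-- With `s = #S`, `e` the variance over the star, `X` the sum of the variances after deleting one
-- block and `T` the sum of the block variances: the passage from `s - 1` to `s` blocks.
lemma star_recursion {s e X Y T : ℝ} (hs : 2 ≤ s) (hT : 0 ≤ T) (he : s * e = X + Y)
    (hY : s * Y ≤ (s + 1) * e) (hX : s * X ≤ (4 * s - 6) * ((s - 1) * T)) :
    (s + 1) * e ≤ (4 * s - 2) * T := by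
  have hbound : (s ^ 2 - s - 1) * e ≤ (4 * s - 6) * ((s - 1) * T) := by
    linear_combination s * he + hY + hX
  have hpos : 0 < s ^ 2 - s - 1 := by nlinarith
  have hgap : 0 ≤ (2 * s - 4) * T := mul_nonneg (by linarith) hT
  refine le_of_mul_le_mul_left ?_ hpos
  linear_combination (s + 1) * hbound + hgap

namespace IsStar

lemma ignores_avg_biUnion_erase (h : IsStar H S blk) {j : E} (hj : j ∈ S)
    (hF : Ignores (starInner blk S) F) :
    Ignores ((S.biUnion blk).erase j) (avg[(S.erase j).biUnion blk] F) := by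
  have hblk : Ignores ((blk j).erase j) F :=
    (agreeOff_mono (subset_biUnion_of_mem (fun r => (blk r).erase r) hj)).trans hF
  have hsep := h.separated_biUnion_erase hj
  have hcover : (S.biUnion blk).erase j ⊆ (S.erase j).biUnion blk ∪ (blk j).erase j := by
    intro x hx
    rw [mem_union, mem_erase]
    by_cases hx' : x ∈ (S.erase j).biUnion blk
    · exact Or.inl hx'
    · exact Or.inr ⟨ne_of_mem_erase hx,
        mem_of_mem_biUnion_of_notMem_erase (mem_of_mem_erase hx) hx'⟩
  refine (agreeOff_mono hcover).trans ?_
  rw [hsep.agreeOff_union]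
  exact sup_le (le_ker_classAvg _ F) (hsep.transverse.le_ker_classAvg hblk)

lemma ignores_starComponent (h : IsStar H S blk) {j : E} (hj : j ∈ S)
    (hF : Ignores (starInner blk S) F) :
    Ignores ((S.biUnion blk).erase j) (starComponent blk S F j) := fun _ _ hση =>
  congrArg₂ (· - ·) (h.ignores_avg_biUnion_erase hj hF hση)
    (le_ker_classAvg _ F (agreeOff_mono (erase_subset _ _) hση))

lemma starComponent_eq (h : IsStar H S blk) {j : E} (hj : j ∈ S)
    (hF : Ignores (starInner blk S) F) {σ η : ProperColouring H k} (hroot : σ.1 j = η.1 j)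
    (hoff : agreeOff (S.biUnion blk) σ η) : starComponent blk S F j σ = starComponent blk S F j η :=
  h.ignores_starComponent hj hF fun x hx => by
    by_cases hxj : x = j
    · rw [hxj, hroot]
    · exact hoff x fun hxS => hx (mem_erase.2 ⟨hxj, hxS⟩)

lemma sum_starComponent_swapAt (h : IsStar H S blk) {j : E} (hj : j ∈ S)
    (hF : Ignores (starInner blk S) F) (σ : ProperColouring H k) :
    ∑ b ∈ avail (S.biUnion blk) j σ, starComponent blk S F j (swapAt (S.biUnion blk) j b σ)
      = 0 := by
  rw [← card_mul_expect, ← avg_eq_expect_swapAt (h.anchored_biUnion hj)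
    (h.ignores_starComponent hj hF), avg_starComponent, mul_zero]

-- The component along `j` has mean zero over the available colours, and exposing the colour of
-- `i` removes exactly that colour from the list.
lemma avg_erase_starComponent (h : IsStar H S blk) {i j : E} (hi : i ∈ S) (hj : j ∈ S)
    (hij : i ≠ j) (hF : Ignores (starInner blk S) F) (σ : ProperColouring H k) :
    avg[(S.erase i).biUnion blk] (starComponent blk S F j) σ =
      - starComponent blk S F j (swapAt (S.biUnion blk) j (σ.1 i) σ) /
        (#(avail (S.biUnion blk) j σ) - 1) := by
  have h' := h.mono (erase_subset i S)
  have hj' : j ∈ S.erase i := mem_erase.2 ⟨hij.symm, hj⟩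
  have hin : σ.1 i ∈ avail (S.biUnion blk) j σ := h.colour_mem_avail hi hj σ
  have hswap : ∀ b ∈ (avail (S.biUnion blk) j σ).erase (σ.1 i),
      starComponent blk S F j (swapAt ((S.erase i).biUnion blk) j b σ)
        = starComponent blk S F j (swapAt (S.biUnion blk) j b σ) := fun b hb => by
    refine h.starComponent_eq hj hF ?_ ((agreeOff _).trans
      ((agreeOff _).symm (agreeOff_mono (biUnion_erase_subset S blk i) (agreeOff_swapAt _ j b σ)))
      (agreeOff_swapAt _ j b σ))
    rw [swapAt_root (h.anchored_biUnion hj) (mem_of_mem_erase hb),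
      swapAt_root (h'.anchored_biUnion hj') (by rwa [h.avail_biUnion_erase hi hj hij])]
  have hign : Ignores (((S.erase i).biUnion blk).erase j) (starComponent blk S F j) :=
    (agreeOff_mono (erase_subset_erase j (biUnion_erase_subset S blk i))).trans
      (h.ignores_starComponent hj hF)
  have hmean := h.sum_starComponent_swapAt hj hF σ
  rw [← add_sum_erase _ _ hin] at hmean
  rw [avg_eq_expect_swapAt (h'.anchored_biUnion hj') hign, h.avail_biUnion_erase hi hj hij,
    expect_congr rfl hswap, expect_eq_sum_div_card, eq_neg_of_add_eq_zero_right hmean,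
    card_erase_of_mem hin, Nat.cast_sub (card_pos.2 ⟨_, hin⟩), Nat.cast_one]

lemma sum_starComponent_mul (h : IsStar H S blk) {r i j : E} (hr : r ∈ S) (hi : i ∈ S)
    (hj : j ∈ S) (hij : i ≠ j) (hF : Ignores (starInner blk S) F) :
    ∑ σ, starComponent blk S F i σ * starComponent blk S F j σ = - starGram blk S F r i j := by
  set U := S.biUnion blk
  set g := starComponent blk S F
  have hw : Ignores U fun σ : ProperColouring H k => 1 / (#(avail U i σ) - 1 : ℝ) :=
    fun σ η hση => by simp only [Setoid.ker_def]; rw [avail_congr hση]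
  have hexpect : ∀ σ, 𝔼 b ∈ avail U i σ, g i (swapAt U i b σ) *
      g j (swapAt U j ((swapAt U i b σ).1 i) (swapAt U i b σ))
        = 𝔼 b ∈ avail U i σ, g i (swapAt U i b σ) * g j (swapAt U j b σ) := fun σ => by
    refine expect_congr rfl fun b hb => ?_
    have hbj : b ∈ avail U j σ := h.avail_eq hi hj σ ▸ hb
    rw [swapAt_root (h.anchored_biUnion hi) hb]
    refine congrArg _ (h.starComponent_eq hj hF ?_ ((agreeOff U).trans ((agreeOff U).symm
      ((agreeOff U).trans (agreeOff_swapAt U i b σ) (agreeOff_swapAt U j b _)))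
      (agreeOff_swapAt U j b σ)))
    rw [swapAt_root (h.anchored_biUnion hj) hbj,
      swapAt_root (h.anchored_biUnion hj) (by rwa [avail_swapAt])]
  calc ∑ σ, g i σ * g j σ
      = ∑ σ, g i σ * avg[(S.erase i).biUnion blk] (g j) σ :=
        (sum_mul_classAvg (ignores_biUnion_erase_starComponent i F) (g j)).symm
    _ = - ∑ σ, 1 / (#(avail U i σ) - 1 : ℝ) * (g i σ * g j (swapAt U j (σ.1 i) σ)) := by
        rw [← sum_neg_distrib]
        refine sum_congr rfl fun σ _ => ?_
        rw [h.avg_erase_starComponent hi hj hij hF, h.avail_eq hj hi]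
        ring
    _ = - starGram blk S F r i j := by
        rw [← sum_mul_expect_swapAt (h.anchored_biUnion hi) hw fun σ =>
          g i σ * g j (swapAt U j (σ.1 i) σ)]
        simp only [hexpect, starGram, h.avail_eq hr hi, U, g]

lemma card_mul_starGram_self_le (h : IsStar H S blk) {r i : E} (hr : r ∈ S) (hi : i ∈ S)
    (F : ProperColouring H k → ℝ)
    (hc : ∀ σ : ProperColouring H k, #S + 1 ≤ #(avail (S.biUnion blk) r σ)) :
    #S * starGram blk S F r i i ≤ ∑ σ, starComponent blk S F i σ ^ 2 := by
  have hstat := sum_mul_expect_swapAt (h.anchored_biUnion hi) (w := fun _ => 1)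
    (fun _ _ _ => rfl) fun σ => starComponent blk S F i σ ^ 2
  simp only [one_mul] at hstat
  rw [← hstat, starGram, mul_sum]
  refine sum_le_sum fun σ _ => ?_
  simp only [← sq, h.avail_eq hi hr]
  have hcard : (#S + 1 : ℝ) ≤ #(avail (S.biUnion blk) r σ) := mod_cast hc σ
  have hS : (0 : ℝ) < #S := Nat.cast_pos.2 (card_pos.2 ⟨i, hi⟩)
  have hcoef : #S * (1 / (#(avail (S.biUnion blk) r σ) - 1 : ℝ)) ≤ 1 := by
    rw [mul_one_div, div_le_one (by linarith)]; linarith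
  rw [← mul_assoc]
  exact mul_le_of_le_one_left (expect_nonneg fun _ _ => sq_nonneg _) hcoef

lemma sum_sq_sum_starComponent_le (h : IsStar H S blk) {r : E} (hr : r ∈ S)
    (hF : Ignores (starInner blk S) F) :
    ∑ σ, (∑ i ∈ S, starComponent blk S F i σ) ^ 2
      ≤ ∑ i ∈ S, (∑ σ, starComponent blk S F i σ ^ 2 + starGram blk S F r i i) := by
  set g := starComponent blk S F
  have hinner : ∀ i ∈ S, ∀ j ∈ S, ∑ σ, g i σ * g j σ = - starGram blk S F r i j
      + if i = j then ∑ σ, g i σ ^ 2 + starGram blk S F r i i else 0 := by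
    intro i hi j hj
    split_ifs with hij
    · subst hij; simp only [sq]; ring
    · rw [h.sum_starComponent_mul hr hi hj hij hF, add_zero]
  calc ∑ σ, (∑ i ∈ S, g i σ) ^ 2
      = ∑ i ∈ S, ∑ j ∈ S, ∑ σ, g i σ * g j σ := by
        simp only [sq, sum_mul_sum, sum_comm (s := S) (t := univ)]
    _ = - ∑ i ∈ S, ∑ j ∈ S, starGram blk S F r i j
          + ∑ i ∈ S, (∑ σ, g i σ ^ 2 + starGram blk S F r i i) := by
        rw [sum_congr rfl fun i hi => sum_congr rfl (hinner i hi)]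
        simp only [sum_add_distrib, sum_neg_distrib, sum_ite_eq, sum_ite_mem, inter_self]
    _ ≤ _ := by linarith [sum_starGram_nonneg S blk F r]

-- Near-orthogonality: compare `F` with the projection `#S / (#S + 1) * ∑ i, component i`.
lemma card_mul_sum_sq_starComponent_le (h : IsStar H S blk) {r : E} (hr : r ∈ S)
    (hF : Ignores (starInner blk S) F)
    (hc : ∀ σ : ProperColouring H k, #S + 1 ≤ #(avail (S.biUnion blk) r σ)) :
    #S * ∑ i ∈ S, ∑ σ, starComponent blk S F i σ ^ 2 ≤ (#S + 1) * var[S.biUnion blk] F := by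
  set s : ℝ := (#S : ℝ)
  have hs : 0 ≤ s := Nat.cast_nonneg _
  set g := starComponent blk S F
  set N := ∑ i ∈ S, ∑ σ, g i σ ^ 2
  set Z := ∑ i ∈ S, starGram blk S F r i i
  set Q := ∑ σ, (∑ i ∈ S, g i σ) ^ 2
  set d : ProperColouring H k → ℝ := fun σ => F σ - avg[S.biUnion blk] F σ
  have hQ : Q ≤ N + Z := by
    rw [← sum_add_distrib]; exact h.sum_sq_sum_starComponent_le hr hF
  have hZ : s * Z ≤ N := by
    rw [mul_sum]; exact sum_le_sum fun i hi => h.card_mul_starGram_self_le hr hi F hc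
  have hcross : ∑ σ, d σ * ∑ i ∈ S, g i σ = N := by
    simp only [mul_sum]
    rw [sum_comm]
    exact sum_congr rfl fun i _ => sum_sub_avg_mul_starComponent i F
  have hsq : 0 ≤ (s + 1) ^ 2 * var[S.biUnion blk] F - 2 * s * (s + 1) * N + s ^ 2 * Q :=
    calc 0 ≤ ∑ σ, ((s + 1) * d σ - s * ∑ i ∈ S, g i σ) ^ 2 := sum_nonneg fun _ _ => sq_nonneg _
      _ = _ := by
        rw [← hcross, classVar, mul_sum, mul_sum, mul_sum, ← sum_sub_distrib, ← sum_add_distrib]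
        exact sum_congr rfl fun σ _ => by ring
  have hsQ := mul_le_mul_of_nonneg_left hQ (sq_nonneg s)
  have hsZ := mul_le_mul_of_nonneg_left hZ hs
  have : (s + 1) * (s * N) ≤ (s + 1) * ((s + 1) * var[S.biUnion blk] F) := by nlinarith
  exact le_of_mul_le_mul_left this (by linarith)

/-- The constant is chosen so that the induction on the number of blocks closes; it yields
`var ≤ 4 ∑ var` for every number of blocks. -/
lemma var_le_of_ignores (h : IsStar H S blk) (hF : Ignores (starInner blk S) F)
    (hc : ∀ σ : ProperColouring H k, ∀ i ∈ S, #S + 1 ≤ #(avail (S.biUnion blk) i σ)) :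
    (#S + 1) * var[S.biUnion blk] F ≤ (4 * #S - 2) * ∑ i ∈ S, var[blk i] F := by
  induction S using Finset.strongInduction with
  | H S ih =>
  rcases S.eq_empty_or_nonempty with rfl | ⟨r, hr⟩
  · simp [agreeOff_empty, classVar_bot]
  rcases Nat.eq_or_lt_of_le (card_pos.2 ⟨r, hr⟩) with hone | htwo
  · obtain ⟨i, rfl⟩ := card_eq_one.1 hone.symm
    simp only [card_singleton, singleton_biUnion, sum_singleton]
    norm_num
  set T := ∑ i ∈ S, var[blk i] F
  set X := ∑ i ∈ S, var[(S.erase i).biUnion blk] F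
  set s : ℝ := (#S : ℝ)
  have hstep : ∀ i ∈ S, s * var[(S.erase i).biUnion blk] F
      ≤ (4 * s - 6) * (T - var[blk i] F) := fun i hi => by
    have := ih (S.erase i) (erase_ssubset hi) (h.mono (erase_subset _ _))
      ((agreeOff_mono (biUnion_erase_subset S (fun r => (blk r).erase r) i)).trans hF)
      (h.card_avail_erase hi hc)
    rw [sum_erase_eq_sub hi, card_erase_of_mem hi, Nat.cast_sub (card_pos.2 ⟨i, hi⟩)] at this
    push_cast at this
    linarith
  have hX : s * X ≤ (4 * s - 6) * ((s - 1) * T) := by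
    have := sum_le_sum hstep
    rw [← mul_sum, ← mul_sum, sum_sub_distrib, sum_const, nsmul_eq_mul] at this
    linarith
  have he : s * var[S.biUnion blk] F = X + ∑ i ∈ S, ∑ σ, starComponent blk S F i σ ^ 2 := by
    rw [← sum_add_distrib, ← nsmul_eq_mul, ← sum_const]
    exact sum_congr rfl fun i _ => var_eq_add_sum_sq_starComponent i F
  exact star_recursion (Nat.ofNat_le_cast.2 htwo) (sum_nonneg fun _ _ => classVar_nonneg _ _) he
    (h.card_mul_sum_sq_starComponent_le hr hF fun σ => hc σ r hr) hX

lemma var_le_four_mul_of_ignores (h : IsStar H S blk) (hF : Ignores (starInner blk S) F)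
    (hc : ∀ σ : ProperColouring H k, ∀ i ∈ S, #S + 1 ≤ #(avail (S.biUnion blk) i σ)) :
    var[S.biUnion blk] F ≤ 4 * ∑ i ∈ S, var[blk i] F := by
  have hpos : 0 ≤ ∑ i ∈ S, var[blk i] F := sum_nonneg fun _ _ => classVar_nonneg _ _
  have hle := h.var_le_of_ignores hF hc
  have : (#S + 1 : ℝ) * var[S.biUnion blk] F ≤ (#S + 1) * (4 * ∑ i ∈ S, var[blk i] F) := by
    linarith
  exact le_of_mul_le_mul_left this (by positivity)

lemma var_avg_starInner_le (h : IsStar H S blk) (f : ProperColouring H k → ℝ) {i : E}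
    (hi : i ∈ S) : var[blk i] (avg[starInner blk S] f) ≤ var[blk i] f := by
  rw [starInner_eq_union hi]
  exact var_avg_union_le f (erase_subset _ _) (h.separated_starInner_erase hi)

lemma var_starInner_le (h : IsStar H S blk) (f : ProperColouring H k → ℝ) :
    var[starInner blk S] f ≤ ∑ i ∈ S, var[blk i] f := by
  refine (var_biUnion_le f S _ fun i hi j hj hij => ?_).trans
    (sum_le_sum fun i _ => classVar_mono (agreeOff_mono (erase_subset _ _)) f)
  exact (h.separated_biUnion_erase hj).mono
    (fun x hx => mem_biUnion.2 ⟨i, mem_erase.2 ⟨hij, hi⟩, mem_of_mem_erase hx⟩) subset_rfl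

theorem var_le (h : IsStar H S blk) (f : ProperColouring H k → ℝ)
    (hc : ∀ σ : ProperColouring H k, ∀ i ∈ S, #S + 1 ≤ #(avail (S.biUnion blk) i σ)) :
    var[S.biUnion blk] f ≤ 5 * ∑ i ∈ S, var[blk i] f := by
  set F := avg[starInner blk S] f
  have hroots := h.var_le_four_mul_of_ignores (le_ker_classAvg _ f) hc
  have hblocks : ∑ i ∈ S, var[blk i] F ≤ ∑ i ∈ S, var[blk i] f :=
    sum_le_sum fun i hi => h.var_avg_starInner_le f hi
  rw [← classVar_add_classVar_classAvg (agreeOff_mono starInner_subset) f]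
  linarith [h.var_starInner_le f]

end IsStar

end Star

/-! ### Approximate tensorization over a fan -/

section Fan

lemma expect_erase_le {ι : Type*} [DecidableEq ι] {s : Finset ι} (hs : 2 ≤ #s) (a : ι) {f : ι → ℝ}
    (hf : ∀ i ∈ s, 0 ≤ f i) : 𝔼 i ∈ s.erase a, f i ≤ 2 * 𝔼 i ∈ s, f i := by
  have hs' : (2 : ℝ) ≤ #s := mod_cast hs
  have hcard : (#s : ℝ) - 1 ≤ #(s.erase a) := by
    have : #s ≤ #(s.erase a) + 1 := Nat.sub_le_iff_le_add.1 pred_card_le_card_erase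
    have : (#s : ℝ) ≤ #(s.erase a) + 1 := mod_cast this
    linarith
  have hsum : ∑ i ∈ s.erase a, f i ≤ ∑ i ∈ s, f i :=
    sum_le_sum_of_subset_of_nonneg (erase_subset _ _) fun i hi _ => hf i hi
  have hsum₀ : 0 ≤ ∑ i ∈ s, f i := sum_nonneg hf
  rw [expect_eq_sum_div_card, expect_eq_sum_div_card, mul_div_assoc',
    div_le_div_iff₀ (by linarith) (by linarith)]
  calc (∑ i ∈ s.erase a, f i) * #s ≤ (∑ i ∈ s, f i) * #s :=
        mul_le_mul_of_nonneg_right hsum (by linarith)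
    _ ≤ (∑ i ∈ s, f i) * (2 * #(s.erase a)) :=
        mul_le_mul_of_nonneg_left (by linarith) hsum₀
    _ = _ := by ring

variable {E : Type*} {H : SimpleGraph E} {k : ℕ}

lemma avail_subset_avail {A B : Finset E} (hAB : A ⊆ B) (r : E) (σ : ProperColouring H k) :
    avail A r σ ⊆ avail B r σ := fun _ hb =>
  mem_avail.2 fun y hy => mem_avail.1 hb y fun hyA => hy (hAB hyA)

section SwapOuter

variable {A B : Finset E} {r : E} {b : Fin k}

lemma agreeOff_swapAt_swapAt (hB : Anchored H B r) (hAB : A ⊆ B) (hr : r ∉ A)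
    {σ η : ProperColouring H k} (hb : b ∈ avail B r σ) (hση : agreeOff A σ η) :
    agreeOff A (swapAt B r b σ) (swapAt B r b η) := fun x hx => by
  have hb' : b ∈ avail B r η := avail_congr (agreeOff_mono hAB hση) ▸ hb
  by_cases hxB : x ∈ B
  · rw [swapAt_of_mem hB hb hxB, swapAt_of_mem hB hb' hxB, hση x hx, hση r hr]
  · rw [swapAt_of_notMem hxB, swapAt_of_notMem hxB, hση x hx]

variable [Fintype E] [DecidableEq E]

lemma sum_swapAt_root (hB : Anchored H B r) {i : E} (hi : i ∈ B)
    (φ : ProperColouring H k → ℝ) :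
    ∑ σ with σ.1 i ∈ avail B r σ, φ (swapAt B r (σ.1 i) σ)
      = ∑ σ with σ.1 i ∈ avail B r σ, φ σ := by
  have himage : ∀ σ : ProperColouring H k, σ.1 i ∈ avail B r σ →
      (swapAt B r (σ.1 i) σ).1 i = σ.1 r := fun σ hσ => by
    rw [swapAt_of_mem hB hσ hi, Equiv.swap_apply_right]
  refine sum_nbij' (fun σ => swapAt B r (σ.1 i) σ) (fun σ => swapAt B r (σ.1 i) σ)
    ?_ ?_ ?_ ?_ fun _ _ => rfl
  all_goals intro σ hσ; simp only [mem_filter, mem_univ, true_and] at hσ ⊢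
  · rw [himage σ hσ, avail_swapAt]; exact root_mem_avail _ _ _
  · rw [himage σ hσ, avail_swapAt]; exact root_mem_avail _ _ _
  · rw [himage σ hσ, swapAt_swapAt hB hσ]
  · rw [himage σ hσ, swapAt_swapAt hB hσ]

lemma avg_swapAt (hB : Anchored H B r) (hAB : A ⊆ B) (hr : r ∉ A) (F : ProperColouring H k → ℝ)
    {σ : ProperColouring H k} (hb : b ∈ avail B r σ) :
    avg[A] F (swapAt B r b σ) = avg[A] (fun η => F (swapAt B r b η)) σ := by
  have hroot : σ.1 r ∈ avail B r (swapAt B r b σ) := by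
    rw [avail_swapAt]; exact root_mem_avail _ _ _
  refine (expect_nbij' (swapAt B r b) (swapAt B r (σ.1 r)) ?_ ?_ ?_ ?_ fun _ _ => rfl).symm
  all_goals intro η hη; simp only [mem_filter, mem_univ, true_and] at hη ⊢
  · exact agreeOff_swapAt_swapAt hB hAB hr hb hη
  · simpa only [swapAt_swapAt hB hb] using agreeOff_swapAt_swapAt hB hAB hr hroot hη
  · rw [hη r hr]
    exact swapAt_swapAt hB (avail_congr (agreeOff_mono hAB hη) ▸ hb)
  · have hb' : b = η.1 r := (swapAt_root hB hb).symm.trans (hη r hr)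
    nth_rewrite 1 [hb']
    exact swapAt_swapAt hB (avail_congr (agreeOff_mono hAB hη) ▸ hroot)

lemma var_avg_le_sum_expect_sq_sub_swapAt (hB : Anchored H B r) (hAB : A ⊆ B)
    (hr : r ∉ A) {F : ProperColouring H k → ℝ} (hF : Ignores (B.erase r) (avg[A] F)) :
    var[B] (avg[A] F)
      ≤ ∑ σ, 𝔼 b ∈ avail B r σ, (F σ - F (swapAt B r b σ)) ^ 2 := by
  have hpoint : ∀ σ, (avg[A] F σ - avg[B] (avg[A] F) σ) ^ 2
      ≤ 𝔼 b ∈ avail B r σ, avg[A] (fun η => (F η - F (swapAt B r b η)) ^ 2) σ := fun σ => by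
    rw [avg_eq_expect_swapAt hB hF, ← expect_const (avail_nonempty B r σ) (avg[A] F σ),
      ← expect_sub_distrib]
    refine (sq_expect_le _ _).trans (expect_le_expect fun b hb => ?_)
    rw [avg_swapAt hB hAB hr F hb, ← classAvg_sub]
    exact sq_classAvg_le _ _ _
  refine (sum_le_sum fun σ _ => hpoint σ).trans_eq ?_
  set w : Fin k → ProperColouring H k → ℝ :=
    fun b σ => if b ∈ avail B r σ then (#(avail B r σ) : ℝ)⁻¹ else 0
  have hw : ∀ b, Ignores A (w b) := fun b σ η hση => by
    simp only [Setoid.ker_def, w, avail_congr (agreeOff_mono hAB hση)]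
  have hexpect : ∀ φ : ProperColouring H k → Fin k → ℝ,
      ∑ σ, 𝔼 b ∈ avail B r σ, φ σ b = ∑ b, ∑ σ, w b σ * φ σ b := fun φ => by
    rw [sum_comm]
    simp only [w, ite_mul, zero_mul, sum_ite_mem, univ_inter, ← mul_sum, expect_eq_sum_div_card,
      div_eq_inv_mul]
  rw [hexpect, hexpect]
  exact sum_congr rfl fun b _ => sum_mul_classAvg (hw b) _

end SwapOuter

variable {S : Finset E} {blk : E → Finset E} {p : E} {P : Finset E}

/-- A star of roots `S` together with one more root `p`, adjacent to all the others, and its block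
`P`. In contrast to a star, `p` may have outside neighbours which the roots in `S` do not see. -/
structure IsFan (H : SimpleGraph E) (S : Finset E) (blk : E → Finset E) (p : E) (P : Finset E) :
    Prop extends IsStar H S blk where
  disjoint : ∀ i ∈ S, Disjoint (blk i) P
  adj_root : ∀ i ∈ S, H.Adj p i
  eq_roots_of_adj : ∀ i ∈ S, ∀ x ∈ P, ∀ y ∈ blk i, H.Adj x y → x = p ∧ y = i
  anchored : Anchored H P p
  eq_or_adj_of_adj : ∀ i ∈ S, ∀ y ∉ blk i, H.Adj i y → y = p ∨ H.Adj p y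

/-- The mean square change of `F` when the root `i` of `A` moves to a new available colour. -/
noncomputable def moveCost (A : Finset E) (i : E) (F : ProperColouring H k → ℝ)
    (σ : ProperColouring H k) : ℝ :=
  𝔼 m ∈ (avail A i σ).erase (σ.1 i), (F σ - F (swapAt A i m σ)) ^ 2

lemma moveCost_nonneg (A : Finset E) (i : E) (F : ProperColouring H k → ℝ)
    (σ : ProperColouring H k) : 0 ≤ moveCost A i F σ :=
  expect_nonneg fun _ _ => sq_nonneg _

namespace IsFan

lemma root_notMem (h : IsFan H S blk p P) {i : E} (hi : i ∈ S) : p ∉ blk i :=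
  disjoint_right.1 (h.disjoint i hi) h.anchored.mem

lemma notMem (h : IsFan H S blk p P) {i : E} (hi : i ∈ S) : i ∉ P :=
  disjoint_left.1 (h.disjoint i hi) (h.root_mem i hi)

lemma card_avail_le (h : IsFan H S blk p P) {i : E} (hi : i ∈ S) (σ : ProperColouring H k) :
    #(avail P p σ) ≤ #(avail (blk i) i σ) := by
  have hsub : (avail P p σ).erase (σ.1 p) ⊆ (avail (blk i) i σ).erase (σ.1 i) := fun b hb => by
    rw [mem_erase, mem_avail] at hb ⊢
    refine ⟨(hb.2 i (h.notMem hi) (h.adj_root i hi)).symm, fun y hy hiy => ?_⟩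
    rcases h.eq_or_adj_of_adj i hi y hy hiy with rfl | hpy
    · exact hb.1.symm
    by_cases hyP : y ∈ P
    · rw [(h.eq_roots_of_adj i hi y hyP i (h.root_mem i hi) hiy.symm).1]
      exact hb.1.symm
    · exact hb.2 y hyP hpy
  have hcard := card_le_card hsub
  rw [card_erase_of_mem (root_mem_avail _ _ _), card_erase_of_mem (root_mem_avail _ _ _)] at hcard
  have := (avail_nonempty (blk i) i σ).card_pos
  omega

lemma sum_avail_div_le (h : IsFan H S blk p P) {i : E} (hi : i ∈ S)
    {σ : ProperColouring H k} (hcard : 2 ≤ #(avail (blk i) i σ)) {g : Fin k → ℝ}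
    (hg : ∀ c ∈ avail P p σ, 0 ≤ g c) :
    (∑ c ∈ avail P p σ, g c) / (#(avail (blk i) i σ) - 1) ≤ 2 * 𝔼 c ∈ avail P p σ, g c := by
  have hle : (#(avail P p σ) : ℝ) ≤ #(avail (blk i) i σ) := mod_cast h.card_avail_le hi σ
  have hcard' : (2 : ℝ) ≤ #(avail (blk i) i σ) := mod_cast hcard
  rw [expect_eq_sum_div_card, mul_div_assoc', div_le_div_iff₀ (by linarith) (avail_card_pos P p σ)]
  nlinarith [sum_nonneg hg]

variable [DecidableEq E]

variable {F : ProperColouring H k → ℝ} {σ η : ProperColouring H k} {b m : Fin k} {i : E}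

lemma root_notMem_biUnion (h : IsFan H S blk p P) : p ∉ S.biUnion blk := fun hp => by
  obtain ⟨i, hi, hpi⟩ := mem_biUnion.1 hp
  exact h.root_notMem hi hpi

lemma mem_union (h : IsFan H S blk p P) {i : E} (hi : i ∈ S) : i ∈ S.biUnion blk ∪ P :=
  mem_union_left _ (mem_biUnion.2 ⟨i, hi, h.root_mem i hi⟩)

lemma anchored_union (h : IsFan H S blk p P) : Anchored H (S.biUnion blk ∪ P) p := by
  refine ⟨mem_union_right _ h.anchored.mem, fun x hx y hy hxy => ?_⟩
  rw [Finset.mem_union, not_or] at hy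
  rcases Finset.mem_union.1 hx with hx | hx
  · obtain ⟨i, hi, hxi⟩ := mem_biUnion.1 hx
    have hyi : y ∉ blk i := fun hyi => hy.1 (mem_biUnion.2 ⟨i, hi, hyi⟩)
    refine (h.eq_or_adj_of_adj i hi y hyi ?_).resolve_left fun hyp => hy.2 (hyp ▸ h.anchored.mem)
    exact (h.anchored_blk hi).adj_of_adj x hxi y hyi hxy
  · exact h.anchored.adj_of_adj x hx y hy.2 hxy

lemma separated (h : IsFan H S blk p P) : Separated H (S.biUnion blk) (P.erase p) := by
  intro x hx y hy
  obtain ⟨i, hi, hxi⟩ := mem_biUnion.1 hx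
  have hyP := mem_of_mem_erase hy
  exact ⟨fun hxy => disjoint_left.1 (h.disjoint i hi) hxi (hxy ▸ hyP),
    fun hxy => ne_of_mem_erase hy (h.eq_roots_of_adj i hi y hyP x hxi hxy.symm).1⟩

lemma separated_starInner (h : IsFan H S blk p P) : Separated H (starInner blk S) P := by
  intro x hx y hy
  obtain ⟨i, hi, hxi, hne⟩ := mem_starInner.1 hx
  exact ⟨fun hxy => disjoint_left.1 (h.disjoint i hi) hxi (hxy ▸ hy),
    fun hxy => hne (h.eq_roots_of_adj i hi y hy x hxi hxy.symm).2⟩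

lemma eq_of_agreeOff (hF : Ignores (starInner blk S ∪ P.erase p) F)
    (hoff : agreeOff (S.biUnion blk ∪ P) σ η) (hp : σ.1 p = η.1 p) (hS : ∀ i ∈ S, σ.1 i = η.1 i) :
    F σ = F η := by
  refine hF fun x hx => ?_
  rw [Finset.mem_union, not_or] at hx
  by_cases hxS : x ∈ S.biUnion blk
  · obtain ⟨i, hi, hxi⟩ := mem_biUnion.1 hxS
    have hxi : x = i := by_contra fun hne => hx.1 (mem_starInner.2 ⟨i, hi, hxi, hne⟩)
    exact hxi ▸ hS i hi
  by_cases hxP : x ∈ P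
  · have hxp : x = p := by_contra fun hne => hx.2 (mem_erase.2 ⟨hne, hxP⟩)
    exact hxp ▸ hp
  · exact hoff x fun hxU => (Finset.mem_union.1 hxU).elim hxS hxP

lemma mem_avail_of_ne (h : IsFan H S blk p P) (hb : b ∈ avail (S.biUnion blk ∪ P) p σ)
    (hS : ∀ i ∈ S, σ.1 i ≠ b) : b ∈ avail P p σ := mem_avail.2 fun y hy hpy => by
  by_cases hyS : y ∈ S.biUnion blk
  · obtain ⟨i, hi, hyi⟩ := mem_biUnion.1 hyS
    rw [(h.eq_roots_of_adj i hi p h.anchored.mem y hyi hpy).2]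
    exact hS i hi
  · exact mem_avail.1 hb y (fun hyU => (Finset.mem_union.1 hyU).elim hyS hy) hpy

lemma swapAt_apply_of_ne (h : IsFan H S blk p P) (hb : b ∈ avail (S.biUnion blk ∪ P) p σ)
    (hi : i ∈ S) (hib : σ.1 i ≠ b) : (swapAt (S.biUnion blk ∪ P) p b σ).1 i = σ.1 i := by
  rw [swapAt_of_mem h.anchored_union hb (h.mem_union hi),
    Equiv.swap_apply_of_ne_of_ne (σ.2 p i (h.adj_root i hi)).symm hib]

lemma swapAt_apply_self (h : IsFan H S blk p P) (hi : i ∈ S)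
    (hb : σ.1 i ∈ avail (S.biUnion blk ∪ P) p σ) :
    (swapAt (S.biUnion blk ∪ P) p (σ.1 i) σ).1 i = σ.1 p := by
  rw [swapAt_of_mem h.anchored_union hb (h.mem_union hi), Equiv.swap_apply_right]

lemma eq_swapAt_of_mem_avail (h : IsFan H S blk p P) (hF : Ignores (starInner blk S ∪ P.erase p) F)
    (hb : b ∈ avail P p σ) : F (swapAt (S.biUnion blk ∪ P) p b σ) = F (swapAt P p b σ) := by
  have hb' := avail_subset_avail (subset_union_right (s₁ := S.biUnion blk)) p σ hb
  refine eq_of_agreeOff hF ?_ ?_ fun i hi => ?_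
  · exact (agreeOff _).trans ((agreeOff _).symm (agreeOff_swapAt _ p b σ))
      (agreeOff_mono subset_union_right (agreeOff_swapAt P p b σ))
  · rw [swapAt_root h.anchored_union hb', swapAt_root h.anchored hb]
  · rw [h.swapAt_apply_of_ne hb' hi (mem_avail.1 hb i (h.notMem hi) (h.adj_root i hi)),
      swapAt_of_notMem (h.notMem hi)]

-- The colours of `p` and `i` are exchanged, and `i` sees both of them.
lemma erase_avail_subset_swapAt (h : IsFan H S blk p P) (hi : i ∈ S)
    (hb : σ.1 i ∈ avail (S.biUnion blk ∪ P) p σ) :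
    (avail (blk i) i σ).erase (σ.1 i)
      ⊆ (avail (blk i) i (swapAt (S.biUnion blk ∪ P) p (σ.1 i) σ)).erase (σ.1 p) := by
  intro m hm
  rw [mem_erase, mem_avail] at hm ⊢
  refine ⟨(hm.2 p (h.root_notMem hi) (h.adj_root i hi).symm).symm, fun y hy hiy => ?_⟩
  by_cases hyp : y = p
  · rw [hyp, swapAt_root h.anchored_union hb]
    exact hm.1.symm
  by_cases hyP : y ∈ P
  · exact absurd (h.eq_roots_of_adj i hi y hyP i (h.root_mem i hi) hiy.symm).1 hyp
  by_cases hyS : y ∈ S.biUnion blk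
  · obtain ⟨j, hj, hyj⟩ := mem_biUnion.1 hyS
    have hij : i ≠ j := fun hij => hy (hij ▸ hyj)
    obtain rfl := (h.eq_root_of_adj i hi j hj hij i (h.root_mem i hi) y hyj hiy).2
    rw [h.swapAt_apply_of_ne hb hj (σ.2 y i hiy.symm)]
    exact hm.2 y hy hiy
  · rw [swapAt_of_notMem fun hyU => (Finset.mem_union.1 hyU).elim hyS hyP]
    exact hm.2 y hy hiy

lemma blk_subset_union (hi : i ∈ S) : blk i ⊆ S.biUnion blk ∪ P :=
  (subset_biUnion_of_mem blk hi).trans subset_union_left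

lemma mem_avail_swapAt (h : IsFan H S blk p P) (hi : i ∈ S)
    (hb : σ.1 i ∈ avail (S.biUnion blk ∪ P) p σ) (hm : m ∈ (avail (blk i) i σ).erase (σ.1 i)) :
    σ.1 i ∈ avail P p (swapAt (blk i) i m σ) := by
  refine h.mem_avail_of_ne ?_ fun j hj => ?_
  · rwa [← avail_congr (agreeOff_mono (blk_subset_union hi) (agreeOff_swapAt (blk i) i m σ))]
  by_cases hji : j = i
  · rw [hji, swapAt_root (h.anchored_blk hi) (mem_of_mem_erase hm)]
    exact ne_of_mem_erase hm
  · rw [swapAt_of_notMem (h.notMem_of_mem hj hi hji (h.root_mem j hj))]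
    exact σ.2 j i (h.isClique hj hi hji)

lemma swapAt_swapAt_blk (h : IsFan H S blk p P) (hF : Ignores (starInner blk S ∪ P.erase p) F)
    (hi : i ∈ S) (hb : σ.1 i ∈ avail (S.biUnion blk ∪ P) p σ)
    (hm : m ∈ (avail (blk i) i σ).erase (σ.1 i)) :
    F (swapAt P p (σ.1 i) (swapAt (blk i) i m σ)) =
      F (swapAt (blk i) i m (swapAt (S.biUnion blk ∪ P) p (σ.1 i) σ)) := by
  have hsub := blk_subset_union (P := P) (blk := blk) hi
  have hm' := mem_of_mem_erase (h.erase_avail_subset_swapAt hi hb hm)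
  refine eq_of_agreeOff hF (fun x hx => ?_) ?_ fun j hj => ?_
  · have hxi : x ∉ blk i := fun hxi => hx (hsub hxi)
    rw [swapAt_of_notMem fun hxP => hx (mem_union_right _ hxP), swapAt_of_notMem hxi,
      swapAt_of_notMem hxi, swapAt_of_notMem hx]
  · rw [swapAt_root h.anchored (h.mem_avail_swapAt hi hb hm), swapAt_of_notMem (h.root_notMem hi),
      swapAt_root h.anchored_union hb]
  · rw [swapAt_of_notMem (h.notMem hj)]
    by_cases hji : j = i
    · subst hji
      rw [swapAt_root (h.anchored_blk hi) (mem_of_mem_erase hm),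
        swapAt_root (h.anchored_blk hi) hm']
    · have hjb := h.notMem_of_mem hj hi hji (h.root_mem j hj)
      rw [swapAt_of_notMem hjb, swapAt_of_notMem hjb,
        h.swapAt_apply_of_ne hb hj (σ.2 j i (h.isClique hj hi hji))]

lemma erase_avail_swapAt (h : IsFan H S blk p P) (hi : i ∈ S)
    (hb : σ.1 i ∈ avail (S.biUnion blk ∪ P) p σ) :
    (avail (blk i) i (swapAt (S.biUnion blk ∪ P) p (σ.1 i) σ)).erase (σ.1 p)
      = (avail (blk i) i σ).erase (σ.1 i) := by
  refine (h.erase_avail_subset_swapAt hi hb).antisymm' ?_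
  have hi' := h.swapAt_apply_self hi hb
  have hb' : σ.1 p ∈ avail (S.biUnion blk ∪ P) p
      (swapAt (S.biUnion blk ∪ P) p (σ.1 i) σ) := by
    rw [avail_swapAt]; exact root_mem_avail _ _ _
  have hsub := h.erase_avail_subset_swapAt hi (hi'.symm ▸ hb')
  rwa [hi', swapAt_swapAt h.anchored_union hb, swapAt_root h.anchored_union hb] at hsub

lemma sq_sub_swapAt_le (h : IsFan H S blk p P) (hF : Ignores (starInner blk S ∪ P.erase p) F)
    (hi : i ∈ S) (hcard : 2 ≤ #(avail (blk i) i σ))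
    (hb : σ.1 i ∈ avail (S.biUnion blk ∪ P) p σ) :
    (F σ - F (swapAt (S.biUnion blk ∪ P) p (σ.1 i) σ)) ^ 2
      ≤ 3 * (moveCost (blk i) i F σ
        + 𝔼 m ∈ (avail (blk i) i σ).erase (σ.1 i),
            (F (swapAt (blk i) i m σ) - F (swapAt P p (σ.1 i) (swapAt (blk i) i m σ))) ^ 2
        + moveCost (blk i) i F (swapAt (S.biUnion blk ∪ P) p (σ.1 i) σ)) := by
  have hne : ((avail (blk i) i σ).erase (σ.1 i)).Nonempty := by
    rw [← card_pos, card_erase_of_mem (root_mem_avail _ _ _)]; omega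
  rw [moveCost, moveCost, h.swapAt_apply_self hi hb, h.erase_avail_swapAt hi hb,
    ← expect_add_distrib, ← expect_add_distrib, mul_expect,
    ← expect_const hne ((F σ - F (swapAt (S.biUnion blk ∪ P) p (σ.1 i) σ)) ^ 2)]
  refine expect_le_expect fun m hm => ?_
  rw [h.swapAt_swapAt_blk hF hi hb hm]
  set x := F σ
  set y := F (swapAt (blk i) i m σ)
  set z := F (swapAt (blk i) i m (swapAt (S.biUnion blk ∪ P) p (σ.1 i) σ))
  set w := F (swapAt (S.biUnion blk ∪ P) p (σ.1 i) σ)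
  nlinarith [sq_nonneg ((x - y) - (y - z)), sq_nonneg ((y - z) - (z - w)),
    sq_nonneg ((x - y) - (z - w))]

lemma expect_sq_sub_swapAt_le (h : IsFan H S blk p P)
    (hF : Ignores (starInner blk S ∪ P.erase p) F) (σ : ProperColouring H k) :
    𝔼 b ∈ avail (S.biUnion blk ∪ P) p σ, (F σ - F (swapAt (S.biUnion blk ∪ P) p b σ)) ^ 2
      ≤ 𝔼 b ∈ avail P p σ, (F σ - F (swapAt P p b σ)) ^ 2
        + ∑ i ∈ S with σ.1 i ∈ avail (S.biUnion blk ∪ P) p σ,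
            (F σ - F (swapAt (S.biUnion blk ∪ P) p (σ.1 i) σ)) ^ 2
              / #(avail (S.biUnion blk ∪ P) p σ) := by
  set L := avail (S.biUnion blk ∪ P) p σ
  set g : Fin k → ℝ := fun b => (F σ - F (swapAt (S.biUnion blk ∪ P) p b σ)) ^ 2
  have hsub : avail P p σ ⊆ L := avail_subset_avail subset_union_right p σ
  have hcover : L \ avail P p σ ⊆ ({i ∈ S | σ.1 i ∈ L} : Finset E).image σ.1 := fun b hb => by
    obtain ⟨hbL, hbP⟩ := mem_sdiff.1 hb
    by_contra hno
    refine hbP (h.mem_avail_of_ne hbL fun i hi hib => hno ?_)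
    exact mem_image.2 ⟨i, mem_filter.2 ⟨hi, hib ▸ hbL⟩, hib⟩
  have hinj : Set.InjOn σ.1 ({i ∈ S | σ.1 i ∈ L} : Finset E) := fun i hi j hj hij => by
    by_contra hne
    exact σ.2 i j (h.isClique (mem_filter.1 hi).1 (mem_filter.1 hj).1 hne) hij
  have hother : ∑ b ∈ L \ avail P p σ, g b ≤ ∑ i ∈ S with σ.1 i ∈ L, g (σ.1 i) := by
    rw [← sum_image hinj]
    exact sum_le_sum_of_subset_of_nonneg hcover fun _ _ _ => sq_nonneg _
  have hfree : ∑ b ∈ avail P p σ, g b = ∑ b ∈ avail P p σ, (F σ - F (swapAt P p b σ)) ^ 2 :=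
    sum_congr rfl fun b hb => by simp only [g, h.eq_swapAt_of_mem_avail hF hb]
  rw [expect_eq_sum_div_card, expect_eq_sum_div_card, ← sum_sdiff hsub, hfree, add_comm, add_div,
    ← sum_div]
  gcongr
  exact avail_card_pos P p σ

variable [Fintype E]

lemma sum_moveCost_div_le (h : IsFan H S blk p P) (hi : i ∈ S)
    (hcard : ∀ σ : ProperColouring H k, 2 ≤ #(avail (blk i) i σ))
    (F : ProperColouring H k → ℝ) :
    ∑ σ with σ.1 i ∈ avail (S.biUnion blk ∪ P) p σ,
        moveCost (blk i) i F σ / #(avail (S.biUnion blk ∪ P) p σ)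
      ≤ 8 * var[blk i] F := by
  have hterm : ∀ σ, moveCost (blk i) i F σ / #(avail (S.biUnion blk ∪ P) p σ)
      ≤ 2 * 𝔼 b ∈ avail (blk i) i σ, (F σ - F (swapAt (blk i) i b σ)) ^ 2 := fun σ =>
    (div_le_self (moveCost_nonneg _ _ _ _)
      (by exact_mod_cast (avail_nonempty (S.biUnion blk ∪ P) p σ).card_pos)).trans
      (expect_erase_le (hcard σ) _ fun _ _ => sq_nonneg _)
  calc _ ≤ ∑ σ, moveCost (blk i) i F σ / #(avail (S.biUnion blk ∪ P) p σ) :=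
        sum_le_sum_of_subset_of_nonneg (filter_subset _ _) fun σ _ _ =>
          div_nonneg (moveCost_nonneg _ _ _ _) (Nat.cast_nonneg _)
    _ ≤ ∑ σ, 2 * 𝔼 b ∈ avail (blk i) i σ, (F σ - F (swapAt (blk i) i b σ)) ^ 2 :=
        sum_le_sum fun σ _ => hterm σ
    _ ≤ 8 * var[blk i] F := by
        rw [← mul_sum]
        linarith [sum_expect_sq_sub_swapAt_le (h.anchored_blk hi) F]

-- The middle move starts at the colouring `swapAt (blk i) i m σ`, which together with the old
-- colour `σ i` determines `σ` and `m`.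
lemma sum_middle_move_div_le (h : IsFan H S blk p P) (hi : i ∈ S)
    (hcard : ∀ σ : ProperColouring H k, 2 ≤ #(avail (blk i) i σ))
    (F : ProperColouring H k → ℝ) :
    ∑ σ with σ.1 i ∈ avail (S.biUnion blk ∪ P) p σ,
        (𝔼 m ∈ (avail (blk i) i σ).erase (σ.1 i),
          (F (swapAt (blk i) i m σ) - F (swapAt P p (σ.1 i) (swapAt (blk i) i m σ))) ^ 2)
          / #(avail (S.biUnion blk ∪ P) p σ)
      ≤ ∑ σ, 2 / #(avail (S.biUnion blk ∪ P) p σ)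
          * 𝔼 b ∈ avail P p σ, (F σ - F (swapAt P p b σ)) ^ 2 := by
  set L : ProperColouring H k → Finset (Fin k) := avail (S.biUnion blk ∪ P) p
  set ψ : ProperColouring H k → Fin k → ℝ := fun τ c =>
    if c ∈ avail P p τ then
      (F τ - F (swapAt P p c τ)) ^ 2 / (#(avail (blk i) i τ) - 1) / #(L τ) else 0
  have hψ : ∀ τ c, 0 ≤ ψ τ c := fun τ c => by
    have : (0 : ℝ) ≤ #(avail (blk i) i τ) - 1 :=
      sub_nonneg.2 (mod_cast (avail_nonempty (blk i) i τ).card_pos)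
    simp only [ψ]; split_ifs <;> positivity
  have hleft : ∀ σ ∈ ({σ | σ.1 i ∈ L σ} : Finset (ProperColouring H k)),
      (𝔼 m ∈ (avail (blk i) i σ).erase (σ.1 i),
        (F (swapAt (blk i) i m σ) - F (swapAt P p (σ.1 i) (swapAt (blk i) i m σ))) ^ 2) / #(L σ)
        ≤ ∑ m ∈ avail (blk i) i σ, ψ (swapAt (blk i) i m σ) (σ.1 i) := fun σ hσ => by
    have hb : σ.1 i ∈ L σ := (mem_filter.1 hσ).2
    rw [expect_eq_sum_div_card, card_erase_of_mem (root_mem_avail _ _ _),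
      Nat.cast_pred (avail_nonempty _ _ _).card_pos, sum_div, sum_div]
    refine (sum_le_sum fun m hm => ?_).trans
      (sum_le_sum_of_subset_of_nonneg (erase_subset _ _) fun m _ _ => hψ _ _)
    simp only [ψ, if_pos (h.mem_avail_swapAt hi hb hm), avail_swapAt, L,
      ← avail_congr (agreeOff_mono (blk_subset_union hi) (agreeOff_swapAt (blk i) i m σ)), le_rfl]
  have hright : ∀ τ, ∑ c ∈ avail (blk i) i τ, ψ τ c
      ≤ 2 / #(L τ) * 𝔼 b ∈ avail P p τ, (F τ - F (swapAt P p b τ)) ^ 2 := fun τ => by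
    refine (sum_le_univ_sum_of_nonneg (hψ τ)).trans ?_
    simp only [ψ, sum_ite_mem, univ_inter, ← sum_div]
    rw [div_mul_eq_mul_div]
    exact div_le_div_of_nonneg_right
      (h.sum_avail_div_le hi (hcard τ) fun _ _ => sq_nonneg _) (Nat.cast_nonneg _)
  calc _ ≤ ∑ σ, ∑ m ∈ avail (blk i) i σ, ψ (swapAt (blk i) i m σ) (σ.1 i) :=
        (sum_le_sum hleft).trans (sum_le_univ_sum_of_nonneg fun σ => sum_nonneg fun _ _ => hψ _ _)
    _ = ∑ σ, ∑ c ∈ avail (blk i) i σ, ψ σ c := (sum_avail_eq_sum_swapAt (h.anchored_blk hi) ψ).symm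
    _ ≤ _ := sum_le_sum fun τ _ => hright τ

lemma sum_sq_sub_swapAt_div_le (h : IsFan H S blk p P)
    (hF : Ignores (starInner blk S ∪ P.erase p) F) (hi : i ∈ S)
    (hcard : ∀ σ : ProperColouring H k, 2 ≤ #(avail (blk i) i σ)) :
    ∑ σ with σ.1 i ∈ avail (S.biUnion blk ∪ P) p σ,
        (F σ - F (swapAt (S.biUnion blk ∪ P) p (σ.1 i) σ)) ^ 2
          / #(avail (S.biUnion blk ∪ P) p σ)
      ≤ 48 * var[blk i] F + 3 * ∑ σ, 2 / #(avail (S.biUnion blk ∪ P) p σ)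
          * 𝔼 b ∈ avail P p σ, (F σ - F (swapAt P p b σ)) ^ 2 := by
  have hfirst := h.sum_moveCost_div_le hi hcard F
  have hlast := sum_swapAt_root (h.anchored_union) (h.mem_union hi) fun σ =>
    moveCost (blk i) i F σ / #(avail (S.biUnion blk ∪ P) p σ)
  simp only [avail_swapAt] at hlast
  have hmiddle := h.sum_middle_move_div_le hi hcard F
  refine (sum_le_sum fun σ hσ => div_le_div_of_nonneg_right
    (h.sq_sub_swapAt_le hF hi (hcard σ) (mem_filter.1 hσ).2) (Nat.cast_nonneg _)).trans ?_
  simp only [mul_div_assoc, add_div, ← mul_sum, sum_add_distrib]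
  rw [hlast]
  linarith

-- Each root of `S` may force a move of `P`, with weight `1 / #(avail _ p σ)`; the ratio `ρ` pays
-- for all of them.
lemma sum_expect_sq_sub_swapAt_union_le (h : IsFan H S blk p P)
    (hF : Ignores (starInner blk S ∪ P.erase p) F)
    (hcard : ∀ i ∈ S, ∀ σ : ProperColouring H k, 2 ≤ #(avail (blk i) i σ)) {ρ : ℝ} (hρ₀ : 0 ≤ ρ)
    (hρ : ∀ σ : ProperColouring H k, #S ≤ ρ * #(avail (S.biUnion blk ∪ P) p σ)) :
    ∑ σ, 𝔼 b ∈ avail (S.biUnion blk ∪ P) p σ, (F σ - F (swapAt (S.biUnion blk ∪ P) p b σ)) ^ 2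
      ≤ 48 * ∑ i ∈ S, var[blk i] F + (24 * ρ + 4) * var[P] F := by
  set L : ProperColouring H k → Finset (Fin k) := avail (S.biUnion blk ∪ P) p
  set e : ProperColouring H k → ℝ := fun σ =>
    𝔼 b ∈ avail P p σ, (F σ - F (swapAt P p b σ)) ^ 2
  have hP : ∑ σ, e σ ≤ 4 * var[P] F := sum_expect_sq_sub_swapAt_le h.anchored F
  have he : ∀ σ, 0 ≤ e σ := fun σ => expect_nonneg fun _ _ => sq_nonneg _
  have hmiddle : ∑ i ∈ S, ∑ σ, 2 / #(L σ) * e σ ≤ 8 * ρ * var[P] F := by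
    have hterm : ∀ σ, #S * (2 / #(L σ) * e σ) ≤ 2 * ρ * e σ := fun σ => by
      have hL : (#S : ℝ) / #(L σ) ≤ ρ := (div_le_iff₀ (avail_card_pos _ _ _)).2 (hρ σ)
      calc (#S : ℝ) * (2 / #(L σ) * e σ) = 2 * (#S / #(L σ)) * e σ := by ring
        _ ≤ 2 * ρ * e σ := mul_le_mul_of_nonneg_right (by linarith) (he σ)
    rw [sum_const, nsmul_eq_mul, mul_sum]
    refine (sum_le_sum fun σ _ => hterm σ).trans ?_
    rw [← mul_sum]
    nlinarith
  refine (sum_le_sum fun σ _ => h.expect_sq_sub_swapAt_le hF σ).trans ?_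
  simp only [sum_add_distrib, sum_filter]
  rw [sum_comm]
  simp only [← sum_filter]
  have hroots := sum_le_sum fun i hi => h.sum_sq_sub_swapAt_div_le hF hi (hcard i hi)
  rw [sum_add_distrib, ← mul_sum, ← mul_sum] at hroots
  linarith

lemma var_blk_avg_le (h : IsFan H S blk p P) (f : ProperColouring H k → ℝ) (hi : i ∈ S) :
    var[blk i] (avg[starInner blk S ∪ P.erase p] f) ≤ var[blk i] f := by
  rw [starInner_eq_union hi, union_right_comm]
  refine var_avg_union_le f (erase_subset _ _) fun x hx y hy => ?_
  rcases Finset.mem_union.1 hx with hx | hx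
  · exact h.toIsStar.separated_starInner_erase hi x hx y hy
  · exact h.separated.symm x hx y (mem_biUnion.2 ⟨i, hi, hy⟩)

lemma ignores_avg_biUnion_avg (h : IsFan H S blk p P) (f : ProperColouring H k → ℝ) :
    Ignores ((S.biUnion blk ∪ P).erase p)
      (avg[S.biUnion blk] (avg[starInner blk S ∪ P.erase p] f)) := by
  have havg : avg[S.biUnion blk] (avg[starInner blk S ∪ P.erase p] f)
      = avg[S.biUnion blk ∪ P.erase p] f := by
    rw [(h.separated.mono starInner_subset subset_rfl).avg_union,
      classAvg_classAvg_of_le (agreeOff_mono starInner_subset), h.separated.avg_union]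
  rw [havg]
  refine (agreeOff_mono fun x hx => ?_).trans (le_ker_classAvg _ f)
  simp only [mem_erase, Finset.mem_union] at hx ⊢
  tauto

lemma var_le (h : IsFan H S blk p P) (f : ProperColouring H k → ℝ)
    (hc : ∀ σ : ProperColouring H k, ∀ i ∈ S, #S + 1 ≤ #(avail (S.biUnion blk) i σ)) {ρ : ℝ}
    (hρ₀ : 0 ≤ ρ) (hρ : ∀ σ : ProperColouring H k, #S ≤ ρ * #(avail (S.biUnion blk ∪ P) p σ)) :
    var[S.biUnion blk ∪ P] f ≤ 53 * ∑ i ∈ S, var[blk i] f + (24 * ρ + 5) * var[P] f := by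
  have hsub : starInner blk S ∪ P.erase p ⊆ S.biUnion blk ∪ P :=
    union_subset_union starInner_subset (erase_subset _ _)
  set F := avg[starInner blk S ∪ P.erase p] f
  have hF : Ignores (starInner blk S ∪ P.erase p) F := le_ker_classAvg _ f
  have hinner := (h.separated.mono starInner_subset subset_rfl).var_union_le f
  have hinner_roots := h.toIsStar.var_starInner_le f
  have hinner_p := classVar_mono (agreeOff_mono (erase_subset p P)) f
  have hstar := h.toIsStar.var_le_four_mul_of_ignores
    ((agreeOff_mono subset_union_left).trans hF) hc
  have hp : var[S.biUnion blk ∪ P] (avg[S.biUnion blk] F)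
      ≤ 48 * ∑ i ∈ S, var[blk i] F + (24 * ρ + 4) * var[P] F := by
    exact (var_avg_le_sum_expect_sq_sub_swapAt h.anchored_union subset_union_left
      h.root_notMem_biUnion (h.ignores_avg_biUnion_avg f)).trans
        (h.sum_expect_sq_sub_swapAt_union_le hF
          (fun i hi σ => h.toIsStar.two_le_card_avail hc hi σ) hρ₀ hρ)
  have hblocks : ∑ i ∈ S, var[blk i] F ≤ ∑ i ∈ S, var[blk i] f :=
    sum_le_sum fun i hi => h.var_blk_avg_le f hi
  have hblock_p : (24 * ρ + 4) * var[P] F ≤ (24 * ρ + 4) * var[P] f :=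
    mul_le_mul_of_nonneg_left (var_avg_union_le f (erase_subset _ _) h.separated_starInner)
      (by linarith)
  have hsplit := classVar_add_classVar_classAvg (agreeOff_mono hsub) f
  have hsplit' := classVar_add_classVar_classAvg
    (agreeOff_mono (subset_union_left (s₁ := S.biUnion blk) (s₂ := P))) F
  linarith

end IsFan

end Fan

/-! ### Rooted trees -/

/-- A rooted-tree structure on the set `E` of edges: `up e` and `low e` are the endpoints of `e`
closer to and further from the root, and the root vertex is incident to the single edge `root`.
Adjacency of edges means sharing an endpoint. -/
structure EdgeRooting {E : Type*} (H : SimpleGraph E) (V : Type*) where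
  up : E → V
  low : E → V
  depth : V → ℕ
  root : E
  low_injective : Function.Injective low
  depth_low : ∀ e, depth (low e) = depth (up e) + 1
  eq_root_of_up_eq : ∀ e, up e = up root → e = root
  up_eq_or_exists_low_eq : ∀ e, up e = up root ∨ ∃ f, low f = up e
  adj_iff : ∀ e f, H.Adj e f ↔ e ≠ f ∧ (up e = up f ∨ up e = low f ∨ low e = up f)

namespace EdgeRooting

variable {E V : Type*} {H : SimpleGraph E} {k : ℕ} [Fintype E]

section Defs

variable (R : EdgeRooting H V)

/-- The edges hanging off the lower endpoint of `e`. -/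
noncomputable def children (e : E) : Finset E := {c | R.up c = R.low e}

/-- The edge `e` together with all edges below it. -/
noncomputable def subtree (e : E) : Finset E :=
  {x | Relation.ReflTransGen (fun a b => R.up b = R.low a) e x}

variable [DecidableEq E]

/-- The edges strictly below `e`. -/
noncomputable def below (e : E) : Finset E := (R.children e).biUnion R.subtree

/-- The edges strictly below `e`, except those in the subtree of its child `h`. -/
noncomputable def side (e h : E) : Finset E := ((R.children e).erase h).biUnion R.subtree

/-- The edges strictly below `e`, except those in the subtree of its grandchild `h'` through the
child `h`. -/
noncomputable def sides (e h h' : E) : Finset E := R.side e h ∪ insert h (R.side h h')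

end Defs

variable {R : EdgeRooting H V} {c c' d e h h' x y z : E}

lemma mem_children : c ∈ R.children e ↔ R.up c = R.low e := by simp [children]

lemma mem_subtree :
    x ∈ R.subtree e ↔ Relation.ReflTransGen (fun a b => R.up b = R.low a) e x := by simp [subtree]

lemma self_mem_subtree (e : E) : e ∈ R.subtree e := mem_subtree.2 .refl

lemma mem_subtree_of_up_eq_low (hz : z ∈ R.subtree c) (hy : R.up y = R.low z) : y ∈ R.subtree c :=
  mem_subtree.2 ((mem_subtree.1 hz).tail hy)

lemma mem_subtree_of_low_eq_up (hx : x ∈ R.subtree c) (hne : x ≠ c) (hz : R.up x = R.low z) :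
    z ∈ R.subtree c := by
  rcases Relation.ReflTransGen.cases_tail (mem_subtree.1 hx) with h | ⟨w, hw, hwx⟩
  · exact absurd h hne
  · rw [R.low_injective (hz.symm.trans hwx)]
    exact mem_subtree.2 hw

lemma depth_up_le (hx : x ∈ R.subtree e) : R.depth (R.up e) ≤ R.depth (R.up x) := by
  induction mem_subtree.1 hx with
  | refl => exact le_rfl
  | tail hab hbc ih =>
    rw [hbc, R.depth_low]
    exact (ih (mem_subtree.2 hab)).trans (Nat.le_succ _)

lemma notMem_subtree_child (hc : c ∈ R.children e) : e ∉ R.subtree c := fun he => by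
  have := depth_up_le he
  rw [mem_children.1 hc, R.depth_low] at this
  omega

lemma ne_of_mem_children (hc : c ∈ R.children e) : c ≠ e := fun hce =>
  notMem_subtree_child hc (hce ▸ self_mem_subtree c)

lemma adj_child (hc : c ∈ R.children e) : H.Adj e c :=
  (R.adj_iff _ _).2 ⟨(ne_of_mem_children hc).symm, .inr (.inr (mem_children.1 hc).symm)⟩

lemma adj_sibling (hc : c ∈ R.children e) (hc' : c' ∈ R.children e) (hne : c ≠ c') : H.Adj c c' :=
  (R.adj_iff _ _).2 ⟨hne, .inl ((mem_children.1 hc).trans (mem_children.1 hc').symm)⟩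

lemma eq_of_adj_of_notMem_subtree (hx : x ∈ R.subtree c) (hy : y ∉ R.subtree c)
    (hxy : H.Adj x y) : x = c ∧ (R.up y = R.up c ∨ R.low y = R.up c) := by
  have hends := ((R.adj_iff x y).1 hxy).2
  have hxc : x = c := by
    by_contra hxc
    rcases Relation.ReflTransGen.cases_tail (mem_subtree.1 hx) with h | ⟨z, hz, hzx⟩
    · exact hxc h
    have hz := mem_subtree.2 hz
    rcases hends with h | h | h
    · exact hy (mem_subtree_of_up_eq_low hz (h.symm.trans hzx))
    · exact hy (R.low_injective (h.symm.trans hzx) ▸ hz)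
    · exact hy (mem_subtree_of_up_eq_low hx h.symm)
  refine ⟨hxc, ?_⟩
  rw [hxc] at hends hx
  rcases hends with h | h | h
  · exact .inl h.symm
  · exact .inr h.symm
  · exact absurd (mem_subtree_of_up_eq_low hx h.symm) hy

lemma mem_children_or_eq_of_adj (hc : c ∈ R.children e) (hx : x ∈ R.subtree c)
    (hy : y ∉ R.subtree c) (hxy : H.Adj x y) : y ∈ R.children e ∨ y = e := by
  have h := (eq_of_adj_of_notMem_subtree hx hy hxy).2
  rw [mem_children.1 hc] at h
  exact h.imp mem_children.2 fun h => R.low_injective h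

lemma disjoint_subtree (hc : c ∈ R.children e) (hc' : c' ∈ R.children e) (hne : c ≠ c') :
    Disjoint (R.subtree c) (R.subtree c') := by
  rw [disjoint_left]
  intro x hx
  have hup := (mem_children.1 hc).trans (mem_children.1 hc').symm
  induction mem_subtree.1 hx with
  | refl =>
    intro h
    rcases Relation.ReflTransGen.cases_tail (mem_subtree.1 h) with h | ⟨w, hw, hwc⟩
    · exact hne h
    · have := depth_up_le (mem_subtree.2 hw)
      rw [← hup, hwc, R.depth_low] at this
      omega
  | @tail b d hab hbd ih =>
    intro h
    refine ih (mem_subtree.2 hab) (mem_subtree_of_low_eq_up h ?_ hbd)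
    rintro rfl
    have := depth_up_le (mem_subtree.2 hab)
    rw [hup, hbd, R.depth_low] at this
    omega

lemma isStar {S : Finset E} (hS : S ⊆ R.children e) : IsStar H S R.subtree where
  root_mem r _ := self_mem_subtree r
  isClique _ hr _ hr' hne := adj_sibling (hS hr) (hS hr') hne
  pairwiseDisjoint _ hr _ hr' hne := disjoint_subtree (hS hr) (hS hr') hne
  eq_root_of_adj r hr r' hr' hne x hx y hy hxy := by
    have hd := disjoint_subtree (hS hr) (hS hr') hne
    exact ⟨(eq_of_adj_of_notMem_subtree hx (disjoint_right.1 hd hy) hxy).1,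
      (eq_of_adj_of_notMem_subtree hy (disjoint_left.1 hd hx) hxy.symm).1⟩
  adj_of_adj r hr x hx y hy hxy r' hr' hy' := by
    rcases mem_children_or_eq_of_adj (hS hr) hx hy hxy with h | rfl
    · exact adj_sibling (hS hr') h fun h => hy' (h ▸ self_mem_subtree _)
    · exact (adj_child (hS hr')).symm

lemma isFan_singleton {S : Finset E} (hS : S ⊆ R.children c) :
    IsFan H S R.subtree c {c} where
  toIsStar := isStar hS
  disjoint i hi := disjoint_singleton_right.2 (notMem_subtree_child (hS hi))
  adj_root i hi := adj_child (hS hi)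
  eq_roots_of_adj i hi x hx y hy hxy := by
    rw [mem_singleton.1 hx] at hxy ⊢
    exact ⟨rfl, (eq_of_adj_of_notMem_subtree hy (notMem_subtree_child (hS hi)) hxy.symm).1⟩
  anchored := ⟨mem_singleton_self c, fun _ hx _ _ hxy => mem_singleton.1 hx ▸ hxy⟩
  eq_or_adj_of_adj i hi y hy hiy :=
    (mem_children_or_eq_of_adj (hS hi) (self_mem_subtree i) hy hiy).symm.imp_right adj_child

variable [DecidableEq E]

lemma mem_below : x ∈ R.below e ↔ ∃ c ∈ R.children e, x ∈ R.subtree c := by simp [below]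

lemma mem_side : x ∈ R.side e h ↔ ∃ c, c ≠ h ∧ c ∈ R.children e ∧ x ∈ R.subtree c := by
  simp only [side, mem_biUnion, mem_erase, and_assoc]

lemma mem_sides : x ∈ R.sides e h h' ↔ x ∈ R.side e h ∨ x = h ∨ x ∈ R.side h h' := by
  simp only [sides, mem_union, mem_insert]

lemma subtree_eq_insert (e : E) : R.subtree e = insert e (R.below e) := by
  ext x
  rw [mem_subtree, Relation.ReflTransGen.cases_head_iff, mem_insert, mem_below]
  simp only [mem_subtree, mem_children, eq_comm]

lemma notMem_below (e : E) : e ∉ R.below e := fun h => by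
  obtain ⟨c, hc, he⟩ := mem_below.1 h
  exact notMem_subtree_child hc he

lemma below_subset_subtree (e : E) : R.below e ⊆ R.subtree e :=
  subtree_eq_insert e ▸ subset_insert _ _

lemma subtree_subset_below (hc : c ∈ R.children e) : R.subtree c ⊆ R.below e :=
  subset_biUnion_of_mem _ hc

lemma side_subset_below (e h : E) : R.side e h ⊆ R.below e :=
  biUnion_subset_biUnion_of_subset_left _ (erase_subset _ _)

lemma insert_side_subset_subtree (h h' : E) : insert h (R.side h h') ⊆ R.subtree h :=
  insert_subset (self_mem_subtree h) ((side_subset_below h h').trans (below_subset_subtree h))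

lemma disjoint_side_subtree (hh : h ∈ R.children e) : Disjoint (R.side e h) (R.subtree h) :=
  (disjoint_biUnion_left _ _ _).2 fun _ hc =>
    disjoint_subtree (mem_of_mem_erase hc) hh (ne_of_mem_erase hc)

lemma below_eq_side_union (hh : h ∈ R.children e) : R.below e = R.side e h ∪ R.subtree h := by
  rw [below, side, ← insert_erase hh, biUnion_insert, erase_insert_eq_erase, union_comm]
  simp

lemma below_eq_insert (hh : h ∈ R.children e) :
    R.below e = insert h (R.side e h ∪ R.below h) := by
  rw [below_eq_side_union hh, subtree_eq_insert, union_insert]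

lemma below_erase (hh : h ∈ R.children e) : (R.below e).erase h = R.side e h ∪ R.below h := by
  rw [below_eq_insert hh, erase_insert]
  exact notMem_union.2
    ⟨disjoint_right.1 (disjoint_side_subtree hh) (self_mem_subtree h), notMem_below h⟩

lemma eq_of_adj_of_notMem_below (hx : x ∈ R.below e) (hy : y ∉ R.below e) (hxy : H.Adj x y) :
    y = e := by
  obtain ⟨c, hc, hxc⟩ := mem_below.1 hx
  have hyc : y ∉ R.subtree c := fun hyc => hy (subtree_subset_below hc hyc)
  exact (mem_children_or_eq_of_adj hc hxc hyc hxy).resolve_left fun h =>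
    hy (subtree_subset_below h (self_mem_subtree y))

lemma anchored_below (hh : h ∈ R.children e) : Anchored H (R.below e) h where
  mem := subtree_subset_below hh (self_mem_subtree h)
  adj_of_adj x hx y hy hxy := by
    rw [eq_of_adj_of_notMem_below hx hy hxy]
    exact (adj_child hh).symm

lemma separated_side_below (hh : h ∈ R.children e) : Separated H (R.side e h) (R.below h) := by
  intro x hx y hy
  have hy' := below_subset_subtree h hy
  have hxh := disjoint_left.1 (disjoint_side_subtree hh) hx
  refine ⟨fun hxy => hxh (hxy ▸ hy'), fun hxy => notMem_below (R := R) h ?_⟩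
  exact (eq_of_adj_of_notMem_subtree hy' hxh hxy.symm).1 ▸ hy

lemma card_add_one_le_card_avail {S : Finset E} (hS : S ⊆ R.children e)
    (hk : #(R.children e) + 2 ≤ k) (σ : ProperColouring H k) {j : E} (hj : j ∈ S) :
    #S + 1 ≤ #(avail (S.biUnion R.subtree) j σ) := by
  have hT : ∀ y ∉ S.biUnion R.subtree, H.Adj j y → y ∈ insert e (R.children e \ S) :=
    fun y hy hjy => by
      have hy' : ∀ c ∈ S, y ∉ R.subtree c := fun c hc h => hy (mem_biUnion.2 ⟨c, hc, h⟩)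
      rcases mem_children_or_eq_of_adj (hS hj) (self_mem_subtree j) (hy' j hj) hjy with h | rfl
      · exact mem_insert_of_mem (mem_sdiff.2 ⟨h, fun h' => hy' y h' (self_mem_subtree y)⟩)
      · exact mem_insert_self _ _
  have havail := le_card_avail_add hT σ
  have hinsert := card_insert_le e (R.children e \ S)
  have hsdiff := card_sdiff_add_card_eq_card hS
  omega

lemma isFan_side (hh : h ∈ R.children e) (h' : E) :
    IsFan H ((R.children e).erase h) R.subtree h (insert h (R.side h h')) where
  toIsStar := isStar (erase_subset _ _)
  disjoint i hi := (disjoint_subtree (mem_of_mem_erase hi) hh (ne_of_mem_erase hi)).mono_right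
    (insert_side_subset_subtree h h')
  adj_root i hi := adj_sibling hh (mem_of_mem_erase hi) (ne_of_mem_erase hi).symm
  eq_roots_of_adj i hi x hx y hy hxy :=
    (isStar (subset_refl (R.children e))).eq_root_of_adj h hh i (mem_of_mem_erase hi)
      (ne_of_mem_erase hi).symm x (insert_side_subset_subtree h h' hx) y hy hxy
  anchored := by
    refine ⟨mem_insert_self _ _, fun x hx y hy hxy => ?_⟩
    rw [mem_insert, not_or] at hy
    rcases mem_insert.1 hx with rfl | hx
    · exact hxy
    · obtain ⟨c, hc, hch, hxc⟩ := mem_side.1 hx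
      have hyc : y ∉ R.subtree c := fun hyc => hy.2 (mem_side.2 ⟨c, hc, hch, hyc⟩)
      exact adj_child ((mem_children_or_eq_of_adj hch hxc hyc hxy).resolve_right hy.1)
  eq_or_adj_of_adj i hi y hy hiy := by
    rcases mem_children_or_eq_of_adj (mem_of_mem_erase hi) (self_mem_subtree i) hy hiy with hc | rfl
    · exact or_iff_not_imp_left.2 fun hyh => adj_sibling hh hc (Ne.symm hyh)
    · exact .inr (adj_child hh).symm

lemma anchored_sides (hh : h ∈ R.children e) (h' : E) : Anchored H (R.sides e h h') h :=
  (isFan_side hh h').anchored_union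

lemma eq_or_eq_of_adj_of_notMem_sides (hh : h ∈ R.children e) (hy : y ∉ R.sides e h h')
    (hhy : H.Adj h y) : y = e ∨ y = h' := by
  rw [mem_sides, not_or, not_or] at hy
  by_cases hys : y ∈ R.subtree h
  · right
    rw [subtree_eq_insert, mem_insert] at hys
    obtain ⟨c, hc, hyc⟩ := mem_below.1 (hys.resolve_left hy.2.1)
    have hyc' := (eq_of_adj_of_notMem_subtree hyc (notMem_subtree_child hc) hhy.symm).1
    by_contra hne
    exact hy.2.2 (mem_side.2 ⟨c, hyc' ▸ hne, hc, hyc⟩)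
  · exact .inl ((mem_children_or_eq_of_adj hh (self_mem_subtree h) hys hhy).resolve_left fun hc =>
      hy.1 (mem_side.2 ⟨y, hy.2.1, hc, self_mem_subtree y⟩))

lemma le_card_avail_sides (hh : h ∈ R.children e) (h' : E) (σ : ProperColouring H k) :
    k ≤ #(avail (R.sides e h h') h σ) + 2 := by
  have hT : ∀ y ∉ R.sides e h h', H.Adj h y → y ∈ ({e, h'} : Finset E) := fun y hy hhy => by
    simpa using eq_or_eq_of_adj_of_notMem_sides hh hy hhy
  have havail := le_card_avail_add hT σ
  have hpair := card_le_two (a := e) (b := h')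
  omega

section Variance

variable (hk : ∀ e, #(R.children e) + 2 ≤ k)
include hk

-- The factor `k` is due to `c` possibly having a single available colour.
lemma var_union_singleton_le {S : Finset E} (hS : S ⊆ R.children c)
    (f : ProperColouring H k → ℝ) :
    var[S.biUnion R.subtree ∪ {c}] f
      ≤ 53 * ∑ i ∈ S, var[R.subtree i] f + (24 * k + 5) * var[{c}] f := by
  refine (isFan_singleton hS).var_le f (fun σ j hj => card_add_one_le_card_avail hS (hk c) σ hj)
    (Nat.cast_nonneg k) fun σ => ?_
  have hSk : #S ≤ k := (card_le_card hS).trans (by have := hk c; omega)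
  exact_mod_cast hSk.trans (Nat.le_mul_of_pos_right k (avail_nonempty _ c σ).card_pos)

lemma var_sides_le (hh : h ∈ R.children e) (h' : E) (f : ProperColouring H k → ℝ) :
    var[R.sides e h h'] f
      ≤ 53 * ∑ i ∈ (R.children e).erase h, var[R.subtree i] f
        + 29 * var[insert h (R.side h h')] f := by
  refine ((isFan_side hh h').var_le f (fun σ j hj =>
    card_add_one_le_card_avail (erase_subset h _) (hk e) σ hj) zero_le_one fun σ => ?_).trans_eq
    (by norm_num)
  have hside := le_card_avail_sides hh h' σ
  have herase := card_erase_le (s := R.children e) (a := h)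
  have hke := hk e
  rw [one_mul]
  exact_mod_cast (by omega : #((R.children e).erase h) ≤ #(avail (R.sides e h h') h σ))

lemma var_side_le (e h : E) (f : ProperColouring H k → ℝ) :
    var[R.side e h] f ≤ 5 * ∑ i ∈ (R.children e).erase h, var[R.subtree i] f :=
  (isStar (erase_subset h (R.children e))).var_le f
    fun σ _ hj => card_add_one_le_card_avail (erase_subset h (R.children e)) (hk e) σ hj

end Variance

end EdgeRooting

/-! ### Contraction along a path of heavy children -/

section ClassContraction

variable {Ω : Type*} [Fintype Ω] {s t b κ : Setoid Ω}

lemma classVar_classAvg_le_add (hs : s ≤ b) (ht : t ≤ b) (f : Ω → ℝ) :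
    classVar b (classAvg t f)
      ≤ 4 * classVar s f + 4 / 3 * classVar b (classAvg t (classAvg s f)) := by
  set d := classAvg t fun x => f x - classAvg s f x
  have hd : ∑ x, d x ^ 2 ≤ classVar s f := sum_sq_classAvg_le t _
  have hsplit : ∀ x, classAvg t f x - classAvg b (classAvg t f) x = d x +
      (classAvg t (classAvg s f) x - classAvg b (classAvg t (classAvg s f)) x) := fun x => by
    simp only [d, classAvg_sub, classAvg_classAvg_of_le ht, classAvg_classAvg_of_le hs]
    ring
  calc classVar b (classAvg t f)
      ≤ ∑ x, (4 * d x ^ 2 + 4 / 3 *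
          (classAvg t (classAvg s f) x - classAvg b (classAvg t (classAvg s f)) x) ^ 2) :=
        sum_le_sum fun x _ => by
          rw [hsplit x]
          nlinarith [sq_nonneg (3 * d x -
            (classAvg t (classAvg s f) x - classAvg b (classAvg t (classAvg s f)) x))]
    _ ≤ _ := by
        rw [sum_add_distrib, ← mul_sum, ← mul_sum]
        exact add_le_add_left (by linarith) _

lemma sum_mul_classAvg_eq_zero {u : Ω → ℝ} (hu : classAvg b u = 0) (f : Ω → ℝ) :
    ∑ x, u x * classAvg b f x = 0 := by
  rw [← sum_classAvg_mul, hu]; simp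

-- With `u = E[E[f | s] | t] - E[f | b]`, duality gives `‖u‖² = ⟨E[u | s], E[f | κ] - E[f | b]⟩`.
lemma sum_sq_eq_sum_classAvg_mul (hs : s ≤ b) (f : Ω → ℝ) {u : Ω → ℝ}
    (hu : ∀ x, u x = classAvg t (classAvg s f) x - classAvg b f x) (hut : t ≤ Setoid.ker u)
    (hub : classAvg b u = 0) (hκu : κ ≤ Setoid.ker (classAvg s u)) :
    ∑ x, u x ^ 2 = ∑ x, classAvg s u x * (classAvg κ f x - classAvg b f x) := by
  have hsub : classAvg b (classAvg s u) = 0 := (classAvg_classAvg_of_le hs u).trans hub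
  calc ∑ x, u x ^ 2 = ∑ x, u x * classAvg t (classAvg s f) x - ∑ x, u x * classAvg b f x := by
        rw [← sum_sub_distrib]
        exact sum_congr rfl fun x _ => by rw [← mul_sub, ← hu, sq]
    _ = ∑ x, classAvg s u x * f x := by
        rw [sum_mul_classAvg_eq_zero hub, sub_zero, sum_mul_classAvg hut, sum_classAvg_mul]
    _ = ∑ x, classAvg s u x * classAvg κ f x - ∑ x, classAvg s u x * classAvg b f x := by
        rw [sum_mul_classAvg_eq_zero hsub, sub_zero, sum_mul_classAvg hκu]
    _ = ∑ x, classAvg s u x * (classAvg κ f x - classAvg b f x) := by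
        simp only [mul_sub, sum_sub_distrib]

lemma classVar_classAvg_le_of_contraction (hs : s ≤ b) (ht : t ≤ b) (hκ : κ ≤ b)
    (hcontr : ∀ u : Ω → ℝ, t ≤ Setoid.ker u → classAvg b u = 0 →
      4 * ∑ x, classAvg s u x ^ 2 ≤ ∑ x, u x ^ 2)
    (hker : ∀ u : Ω → ℝ, t ≤ Setoid.ker u → κ ≤ Setoid.ker (classAvg s u)) (f : Ω → ℝ) :
    classVar b (classAvg t f) ≤ 4 * classVar s f + 1 / 3 * classVar b (classAvg κ f) := by
  set u : Ω → ℝ := fun x => classAvg t (classAvg s f) x - classAvg b f x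
  set w : Ω → ℝ := fun x => classAvg κ f x - classAvg b f x
  have hut : t ≤ Setoid.ker u := fun x y hxy =>
    congrArg₂ (· - ·) (le_ker_classAvg t _ hxy) (le_ker_classAvg b f (ht hxy))
  have hub : classAvg b u = 0 := funext fun x => by
    rw [classAvg_sub, classAvg_classAvg_of_le ht, classAvg_classAvg_of_le hs,
      classAvg_classAvg_of_ge le_rfl, sub_self, Pi.zero_apply]
  have huvar : classVar b (classAvg t (classAvg s f)) = ∑ x, u x ^ 2 := by
    rw [classVar, classAvg_classAvg_of_le ht, classAvg_classAvg_of_le hs]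
  have hwvar : classVar b (classAvg κ f) = ∑ x, w x ^ 2 := by
    rw [classVar, classAvg_classAvg_of_le hκ]
  have hdual : ∑ x, u x ^ 2 ≤ 2 * ∑ x, classAvg s u x ^ 2 + 1 / 8 * ∑ x, w x ^ 2 := by
    rw [sum_sq_eq_sum_classAvg_mul hs f (fun _ => rfl) hut hub (hker u hut), mul_sum, mul_sum,
      ← sum_add_distrib]
    exact sum_le_sum fun x _ => by nlinarith [sq_nonneg (4 * classAvg s u x - w x)]
  linarith [classVar_classAvg_le_add hs ht f, hcontr u hut hub]

end ClassContraction

lemma four_mul_sq_expect_erase_le {ι : Type*} [DecidableEq ι] {s : Finset ι} {f : ι → ℝ} {a : ι}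
    (hsum : ∑ i ∈ s, f i = 0) (hs : 3 ≤ #s) (ha : a ∈ s) :
    4 * (𝔼 i ∈ s.erase a, f i) ^ 2 ≤ f a ^ 2 := by
  have herase : ∑ i ∈ s.erase a, f i = -f a := by
    linarith [add_sum_erase s f ha]
  have hcard : (2 : ℝ) ≤ #(s.erase a) := by
    rw [card_erase_of_mem ha]; exact_mod_cast (by omega : 2 ≤ #s - 1)
  rw [expect_eq_sum_div_card, herase, div_pow, neg_sq, ← mul_div_assoc,
    div_le_iff₀ (by positivity), mul_comm]
  exact mul_le_mul_of_nonneg_left (by nlinarith) (sq_nonneg _)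

namespace EdgeRooting

variable {E V : Type*} [Fintype E] [DecidableEq E] {H : SimpleGraph E} {k : ℕ}
  {R : EdgeRooting H V} {e h h' : E}

lemma card_avail_below_add_one (hh : h ∈ R.children e) (σ : ProperColouring H k) :
    #(avail (R.below e) h σ) + 1 = k := by
  rw [← card_singleton e]
  refine card_avail_add (fun y => ?_) (fun x hx y hy hxy => ?_) σ
  · rw [mem_singleton]
    refine ⟨?_, fun hy => eq_of_adj_of_notMem_below (anchored_below hh).mem hy.1 hy.2⟩
    rintro rfl
    exact ⟨notMem_below y, (adj_child hh).symm⟩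
  · exact absurd ((mem_singleton.1 hx).trans (mem_singleton.1 hy).symm) hxy

lemma sides_subset_below (hh : h ∈ R.children e) (h' : E) : R.sides e h h' ⊆ R.below e := by
  rw [below_eq_side_union hh]
  exact union_subset_union_right (insert_side_subset_subtree h h')

lemma sides_erase_subset (e h h' : E) :
    (R.sides e h h').erase h ⊆ R.side e h ∪ R.below h := by
  rw [sides, erase_union_distrib, erase_insert_eq_erase]
  exact union_subset_union (erase_subset _ _) ((erase_subset _ _).trans (side_subset_below h h'))

lemma below_subset_of_mem_children (hh : h ∈ R.children e) : R.below h ⊆ R.below e :=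
  (below_subset_subtree h).trans (subtree_subset_below hh)

lemma separated_sides_below (hh : h ∈ R.children e) (hh' : h' ∈ R.children h) :
    Separated H (R.sides e h h') (R.below h') := by
  intro x hx y hy
  have hyh : y ∈ R.below h := below_subset_of_mem_children hh' hy
  rcases mem_sides.1 hx with hx | rfl | hx
  · exact separated_side_below hh x hx y hyh
  · refine ⟨fun hxy => notMem_below (R := R) x (hxy ▸ hyh), fun hxy => notMem_below (R := R) h' ?_⟩
    exact (eq_of_adj_of_notMem_subtree (below_subset_subtree h' hy) (notMem_subtree_child hh')
      hxy.symm).1 ▸ hy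
  · exact separated_side_below hh' x hx y hy

lemma notMem_sides (hh : h ∈ R.children e) (hh' : h' ∈ R.children h) : h' ∉ R.sides e h h' := by
  rw [mem_sides, not_or, not_or]
  refine ⟨fun hs => ?_, ne_of_mem_children hh', fun hs => ?_⟩
  · exact (separated_side_below hh h' hs h' (anchored_below hh').mem).1 rfl
  · exact disjoint_left.1 (disjoint_side_subtree hh') hs (self_mem_subtree h')

lemma avail_sides_eq_erase (hh : h ∈ R.children e) (hh' : h' ∈ R.children h)
    (σ : ProperColouring H k) :
    avail (R.sides e h h') h σ = (avail (R.below e) h σ).erase (σ.1 h') := by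
  refine avail_eq_erase (sides_subset_below hh h') (notMem_sides hh hh') (adj_child hh')
    (fun y hy hy' hhy => ?_) σ
  refine (eq_or_eq_of_adj_of_notMem_sides hh hy' hhy).resolve_left ?_
  rintro rfl
  exact notMem_below y hy

section MeanZero

variable {u : ProperColouring H k → ℝ}

lemma sum_swapAt_below_eq_zero (hh : h ∈ R.children e) (hu : Ignores (R.side e h ∪ R.below h) u)
    (hu₀ : avg[R.below e] u = 0) (σ : ProperColouring H k) :
    ∑ b ∈ avail (R.below e) h σ, u (swapAt (R.below e) h b σ) = 0 := by
  rw [← card_smul_expect,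
    ← avg_eq_expect_swapAt (anchored_below hh) (by rwa [below_erase hh]) σ, hu₀, Pi.zero_apply,
    smul_zero]

lemma avg_sides_eq_expect_erase (hh : h ∈ R.children e) (hh' : h' ∈ R.children h)
    (hu : Ignores (R.side e h ∪ R.below h) u) (σ : ProperColouring H k) :
    avg[R.sides e h h'] u σ
      = 𝔼 b ∈ (avail (R.below e) h σ).erase (σ.1 h'), u (swapAt (R.below e) h b σ) := by
  rw [avg_eq_expect_swapAt (anchored_sides hh h')
    ((agreeOff_mono (sides_erase_subset e h h')).trans hu), avail_sides_eq_erase hh hh']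
  refine expect_congr rfl fun b hb => ?_
  rw [← below_erase hh] at hu
  exact hu.swapAt_eq_swapAt (anchored_below hh) (anchored_sides hh h') (sides_subset_below hh h')
    (Setoid.refl' _ σ) (by rwa [avail_sides_eq_erase hh hh']) (mem_of_mem_erase hb)

-- Given the colours of `e` and `h'`, the edge `h` avoids one more of its `k - 1` colours than it
-- does given the colour of `e` only; as `u` has mean zero over those `k - 1` colours, its mean over
-- the remaining `k - 2` is `-1 / (k - 2)` times its value at the colour of `h'`.
lemma four_mul_sq_avg_sides_le (hk : 4 ≤ k) (hh : h ∈ R.children e) (hh' : h' ∈ R.children h)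
    (hu : Ignores (R.side e h ∪ R.below h) u) (hu₀ : avg[R.below e] u = 0)
    (σ : ProperColouring H k) :
    4 * avg[R.sides e h h'] u σ ^ 2 ≤ if σ.1 h' ∈ avail (R.below e) h σ then
      u (swapAt (R.below e) h (σ.1 h') σ) ^ 2 else 0 := by
  have hsum := sum_swapAt_below_eq_zero hh hu hu₀ σ
  rw [avg_sides_eq_expect_erase hh hh' hu]
  split_ifs with hmem
  · have hcard := card_avail_below_add_one hh σ
    exact four_mul_sq_expect_erase_le hsum (by omega) hmem
  · rw [erase_eq_of_notMem hmem, expect_eq_sum_div_card, hsum]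
    simp

lemma four_mul_sum_sq_avg_sides_le (hk : 4 ≤ k) (hh : h ∈ R.children e) (hh' : h' ∈ R.children h)
    (hu : Ignores (R.side e h ∪ R.below h) u) (hu₀ : avg[R.below e] u = 0) :
    4 * ∑ σ, avg[R.sides e h h'] u σ ^ 2 ≤ ∑ σ, u σ ^ 2 := by
  let F : ProperColouring H k → Fin k → ℝ := fun σ b =>
    if b ∈ avail (R.below e) h σ then u (swapAt (R.below e) h b σ) ^ 2 else 0
  have hF : ∀ σ b, F (swapAt (R.below h) h' b σ) b = F σ b := fun σ b => by
    have hσ : agreeOff (R.below e) σ (swapAt (R.below h) h' b σ) :=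
      agreeOff_mono (below_subset_of_mem_children hh) (agreeOff_swapAt _ h' b σ)
    simp only [F, ← avail_congr hσ]
    split_ifs with hb
    · rw [(show Ignores ((R.below e).erase h) u by rwa [below_erase hh]).swapAt_eq_swapAt
        (anchored_below hh) (anchored_below hh) subset_rfl hσ hb (by rwa [← avail_congr hσ])]
    · rfl
  have hone : Ignores (H := H) (k := k) (R.below e) fun _ => 1 := fun _ _ _ => rfl
  have hone' : Ignores (H := H) (k := k) (R.below h) fun _ => 1 := fun _ _ _ => rfl
  calc 4 * ∑ σ, avg[R.sides e h h'] u σ ^ 2 ≤ ∑ σ, F σ (σ.1 h') := by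
        rw [mul_sum]
        exact sum_le_sum fun σ _ => four_mul_sq_avg_sides_le hk hh hh' hu hu₀ σ
    _ = ∑ σ, 𝔼 b ∈ avail (R.below h) h' σ, F σ b := by
        have hswap := sum_mul_expect_swapAt (anchored_below hh') hone' fun σ => F σ (σ.1 h')
        simp only [one_mul] at hswap
        refine hswap.symm.trans (sum_congr rfl fun σ _ => expect_congr rfl fun b hb => ?_)
        rw [swapAt_root (anchored_below hh') hb, hF]
    _ ≤ ∑ σ, 𝔼 b ∈ avail (R.below e) h σ, u (swapAt (R.below e) h b σ) ^ 2 := by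
        refine sum_le_sum fun σ _ => ?_
        have hcard := card_avail_below_add_one hh σ
        have hcard' := card_avail_below_add_one hh' σ
        rw [expect_eq_sum_div_card, expect_eq_sum_div_card,
          show #(avail (R.below h) h' σ) = #(avail (R.below e) h σ) by omega, ← sum_filter]
        refine div_le_div_of_nonneg_right (sum_le_sum_of_subset_of_nonneg
          (fun b hb => (mem_filter.1 hb).2) fun _ _ _ => sq_nonneg _) (Nat.cast_nonneg _)
    _ = ∑ σ, u σ ^ 2 := by
        simpa only [one_mul] using
          sum_mul_expect_swapAt (anchored_below hh) hone fun σ => u σ ^ 2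

end MeanZero

/-- The part of the variance of `f` below `e` that is explained by the colour of the child `h`. -/
noncomputable def childVar (R : EdgeRooting H V) (e h : E) (f : ProperColouring H k → ℝ) : ℝ :=
  var[R.below e] (avg[R.side e h ∪ R.below h] f)

variable (f : ProperColouring H k → ℝ)

lemma side_union_below_subset (hh : h ∈ R.children e) :
    R.side e h ∪ R.below h ⊆ R.below e := by
  rw [← below_erase hh]; exact erase_subset _ _

lemma var_avg_sides_union_le (hh : h ∈ R.children e) (hh' : h' ∈ R.children h) :
    var[R.below e] (avg[R.sides e h h' ∪ R.below h'] f) ≤ R.childVar h h' f + R.childVar e h f := by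
  set J := R.side e h ∪ (R.side h h' ∪ R.below h') with hJ
  have hsep := separated_side_below hh
  have hJ' : R.side h h' ∪ R.below h' ⊆ R.below h := side_union_below_subset hh'
  have hJT : J ⊆ R.side e h ∪ R.below h := union_subset_union_right hJ'
  have hJK : J ⊆ R.sides e h h' ∪ R.below h' := by
    rw [hJ, sides, union_assoc]
    exact union_subset_union_right (union_subset_union_left (subset_insert _ _))
  have hKB : R.sides e h h' ∪ R.below h' ⊆ R.below e :=
    union_subset (sides_subset_below hh h') ((below_subset_of_mem_children hh').trans
      (below_subset_of_mem_children hh))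
  have hside : var[R.side e h] (avg[J] f) = 0 := by
    simp [classVar, J, classAvg_classAvg_of_ge (agreeOff_mono subset_union_left)]
  calc var[R.below e] (avg[R.sides e h h' ∪ R.below h'] f)
      ≤ var[R.below e] (avg[J] f) := by
        rw [← classAvg_classAvg_of_le (agreeOff_mono hJK)]
        exact classVar_classAvg_le_of_le (agreeOff_mono hKB) _
    _ = var[R.side e h ∪ R.below h] (avg[J] f) + R.childVar e h f := by
        rw [childVar, ← classAvg_classAvg_of_le (agreeOff_mono hJT),
          classVar_add_classVar_classAvg (agreeOff_mono (side_union_below_subset hh))]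
    _ ≤ R.childVar h h' f + R.childVar e h f := by
        have hunion := hsep.var_union_le (avg[J] f)
        have hbelow : var[R.below h] (avg[J] f) ≤ R.childVar h h' f := by
          rw [hJ, (hsep.mono subset_rfl hJ').avg_union]
          exact hsep.transverse.classVar_classAvg_le _
        linarith

lemma childVar_le (hk : 4 ≤ k) (hh : h ∈ R.children e) (hh' : h' ∈ R.children h) :
    R.childVar e h f ≤ 6 * var[R.sides e h h'] f + 1 / 2 * R.childVar h h' f := by
  have hsep := separated_sides_below hh hh'
  have hh'h := below_subset_of_mem_children hh'
  have hcontr : R.childVar e h f ≤ _ := classVar_classAvg_le_of_contraction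
    (s := agreeOff (R.sides e h h')) (t := agreeOff (R.side e h ∪ R.below h))
    (b := agreeOff (R.below e)) (κ := agreeOff (R.sides e h h' ∪ R.below h'))
    (agreeOff_mono (sides_subset_below hh h')) (agreeOff_mono (side_union_below_subset hh))
    (agreeOff_mono (union_subset (sides_subset_below hh h')
      (hh'h.trans (below_subset_of_mem_children hh))))
    (fun u => four_mul_sum_sq_avg_sides_le hk hh hh')
    (fun u hu => by
      rw [hsep.agreeOff_union]
      exact sup_le (le_ker_classAvg _ u) (hsep.transverse.le_ker_classAvg
        ((agreeOff_mono (hh'h.trans subset_union_right)).trans hu))) f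
  linarith [var_avg_sides_union_le f hh hh']

lemma childVar_le_of_leaf (hh : h ∈ R.children e) (hc : R.children h = ∅) (h' : E) :
    R.childVar e h f ≤ var[R.sides e h h'] f := by
  have hsides : R.sides e h h' = R.below e := by
    rw [below_eq_insert hh]
    simp [sides, side, below, hc]
  rw [hsides]
  exact classVar_classAvg_le_of_le (agreeOff_mono (side_union_below_subset hh)) f

end EdgeRooting

/-! ### The Poincaré inequality by recursion over light subtrees -/

section LocalVar

variable {E : Type*} [Fintype E] [DecidableEq E] {H : SimpleGraph E} {k : ℕ}

/-- The total expected variance of `f` under single-site resampling in `A`. -/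
noncomputable def localVar (A : Finset E) (f : ProperColouring H k → ℝ) : ℝ :=
  ∑ x ∈ A, var[{x}] f

lemma localVar_nonneg (A : Finset E) (f : ProperColouring H k → ℝ) : 0 ≤ localVar A f :=
  sum_nonneg fun _ _ => classVar_nonneg _ f

end LocalVar

namespace EdgeRooting

variable {E V : Type*} [Fintype E] {H : SimpleGraph E} {k : ℕ}

/-- A child of `e` with a largest subtree; by convention `e` itself if there are no children. -/
noncomputable def heavyChild (R : EdgeRooting H V) (e : E) : E :=
  if h : (R.children e).Nonempty then
    (exists_max_image (R.children e) (fun c => #(R.subtree c)) h).choose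
  else e

variable {R : EdgeRooting H V} {c e : E}

lemma heavyChild_spec (he : (R.children e).Nonempty) : R.heavyChild e ∈ R.children e ∧
    ∀ c ∈ R.children e, #(R.subtree c) ≤ #(R.subtree (R.heavyChild e)) := by
  rw [heavyChild, dif_pos he]
  exact (exists_max_image (R.children e) (fun c => #(R.subtree c)) he).choose_spec

lemma subtree_root (R : EdgeRooting H V) : R.subtree R.root = univ := by
  refine eq_univ_of_forall fun x => ?_
  induction hn : R.depth (R.up x) generalizing x with
  | zero =>
    rcases R.up_eq_or_exists_low_eq x with h | ⟨f, hf⟩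
    · rw [R.eq_root_of_up_eq x h]
      exact self_mem_subtree _
    · have := R.depth_low f
      rw [hf] at this
      omega
  | succ n ih =>
    rcases R.up_eq_or_exists_low_eq x with h | ⟨f, hf⟩
    · rw [R.eq_root_of_up_eq x h]
      exact self_mem_subtree _
    · have := R.depth_low f
      rw [hf] at this
      exact mem_subtree_of_up_eq_low (ih f (by omega)) hf.symm

variable [DecidableEq E]

lemma two_mul_card_subtree_le (hc : c ∈ (R.children e).erase (R.heavyChild e)) :
    2 * #(R.subtree c) ≤ #(R.below e) := by
  obtain ⟨hne, hc⟩ := mem_erase.1 hc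
  obtain ⟨hh, hmax⟩ := heavyChild_spec ⟨c, hc⟩
  have hunion := card_le_card (union_subset (subtree_subset_below hc) (subtree_subset_below hh))
  rw [card_union_of_disjoint (disjoint_subtree hc hh hne)] at hunion
  have := hmax c hc
  omega

lemma card_subtree (e : E) : #(R.subtree e) = #(R.below e) + 1 := by
  rw [subtree_eq_insert, card_insert_of_notMem (notMem_below e)]

/-- The total variance of `f` on the subtrees of the light (that is, not heavy) children of `e`. -/
noncomputable def lightVar (R : EdgeRooting H V) (e : E) (f : ProperColouring H k → ℝ) : ℝ :=
  ∑ c ∈ (R.children e).erase (R.heavyChild e), var[R.subtree c] f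

/-- The potential that is propagated along heavy paths. The weight of `lightVar` only has to be
large compared with the constants in the bounds for `childVar` and `sides`. -/
noncomputable def potential (R : EdgeRooting H V) (e : E) (f : ProperColouring H k → ℝ) : ℝ :=
  var[R.below e] f + R.childVar e (R.heavyChild e) f + 20000 * R.lightVar e f

variable (f : ProperColouring H k → ℝ)

lemma localVar_subtree (e : E) :
    localVar (R.subtree e) f = var[{e}] f + localVar (R.below e) f := by
  rw [localVar, subtree_eq_insert, sum_insert (notMem_below e), localVar]

lemma localVar_below (e : E) :
    localVar (R.below e) f = ∑ c ∈ R.children e, localVar (R.subtree c) f :=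
  sum_biUnion fun _ hc _ hc' hne => disjoint_subtree hc hc' hne

lemma lightVar_nonneg (e : E) : 0 ≤ R.lightVar e f :=
  sum_nonneg fun _ _ => classVar_nonneg _ f

lemma childVar_nonneg (e h : E) : 0 ≤ R.childVar e h f := classVar_nonneg _ _

lemma potential_nonneg (e : E) : 0 ≤ R.potential e f := by
  have hlight := lightVar_nonneg (R := R) f e
  exact add_nonneg (add_nonneg (classVar_nonneg _ f) (childVar_nonneg f e _)) (by positivity)

lemma potential_of_children_eq_empty (he : R.children e = ∅) : R.potential e f = 0 := by
  simp [potential, childVar, lightVar, below, side, he, agreeOff_empty, classVar_bot]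

lemma sum_var_subtree_le_potential (e : E) :
    ∑ c ∈ R.children e, var[R.subtree c] f ≤ R.potential e f := by
  rcases (R.children e).eq_empty_or_nonempty with he | he
  · simpa [he] using potential_nonneg f e
  · have hh := (heavyChild_spec he).1
    have hmono : var[R.subtree (R.heavyChild e)] f ≤ var[R.below e] f :=
      classVar_mono (agreeOff_mono (subtree_subset_below hh)) f
    have hlight := lightVar_nonneg (R := R) f e
    have hchild := childVar_nonneg (R := R) f e (R.heavyChild e)
    rw [← add_sum_erase _ _ hh, potential]
    change _ + R.lightVar e f ≤ _
    linarith

variable (hk : ∀ e, #(R.children e) + 2 ≤ k) (hk4 : 4 ≤ k)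
include hk hk4

lemma var_subtree_le_potential (c : E) :
    var[R.subtree c] f ≤ 53 * R.potential c f + 30 * k * var[{c}] f := by
  have hfan : var[R.below c ∪ {c}] f ≤ _ := var_union_singleton_le hk (subset_refl (R.children c)) f
  rw [union_comm, ← insert_eq, ← subtree_eq_insert] at hfan
  have hchildren := sum_var_subtree_le_potential (R := R) f c
  have hk4' : (4 : ℝ) ≤ k := by exact_mod_cast hk4
  have hroot := classVar_nonneg (agreeOff {c}) f
  nlinarith

-- The potential is not multiplied by a constant when moving one edge down the heavy path: only
-- local terms and terms of light subtrees are added. This keeps the Poincaré constant polynomial.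
lemma potential_le_potential_heavyChild_add (he : (R.children e).Nonempty) :
    R.potential e f ≤ R.potential (R.heavyChild e) f + 21000 * R.lightVar e f
      + 11000 * k * var[{R.heavyChild e}] f := by
  have hh := (heavyChild_spec he).1
  set h := R.heavyChild e with hdef
  set h' := R.heavyChild h with hdef'
  have hk4' : (4 : ℝ) ≤ k := by exact_mod_cast hk4
  have hbelow : var[R.below e] f ≤ 5 * R.lightVar e f + var[R.below h] f + R.childVar e h f := by
    have hsplit : var[R.side e h ∪ R.below h] f + R.childVar e h f = _ :=
      classVar_add_classVar_classAvg (agreeOff_mono (side_union_below_subset hh)) f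
    have hunion := (separated_side_below hh).var_union_le f
    have hside : var[R.side e h] f ≤ 5 * R.lightVar e f := var_side_le hk e h f
    linarith
  have hchild : R.childVar e h f ≤ 6 * var[R.sides e h h'] f + 1 / 2 * R.childVar h h' f := by
    rcases (R.children h).eq_empty_or_nonempty with hc | hc
    · have := classVar_nonneg (agreeOff (R.sides e h h')) f
      have := childVar_nonneg (R := R) f h h'
      linarith [childVar_le_of_leaf f hh hc h']
    · exact childVar_le f hk4 hh (heavyChild_spec hc).1
  have hsides : var[R.sides e h h'] f
      ≤ 53 * R.lightVar e f + 29 * var[insert h (R.side h h')] f := var_sides_le hk hh h' f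
  have hside : var[insert h (R.side h h')] f
      ≤ 53 * R.lightVar h f + (24 * k + 5) * var[{h}] f := by
    rw [insert_eq, union_comm]
    exact var_union_singleton_le hk (erase_subset h' (R.children h)) f
  have hroot : 4 * var[{h}] f ≤ k * var[{h}] f :=
    mul_le_mul_of_nonneg_right hk4' (classVar_nonneg _ f)
  have hlight := lightVar_nonneg (R := R) f e
  have hlight' := lightVar_nonneg (R := R) f h
  have hroot₀ := classVar_nonneg (agreeOff {h}) f
  rw [potential, potential, ← hdef, ← hdef']
  linarith

-- The exponent `21` is such that `21000 * 53 ≤ 2 ^ 21`, with the constants of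
-- `potential_le_potential_heavyChild_add` and `var_subtree_le_potential`.
lemma mul_var_subtree_le_of_two_mul_card_le {m : ℕ} (hm : 2 * #(R.subtree c) ≤ m)
    (hc : R.potential c f ≤ 10 ^ 6 * k * #(R.subtree c) ^ 21 * localVar (R.below c) f) :
    21000 * var[R.subtree c] f ≤ 10 ^ 6 * k * m ^ 21 * localVar (R.subtree c) f := by
  have hpow : 1113000 * (#(R.subtree c) : ℝ) ^ 21 ≤ (m : ℝ) ^ 21 := by
    have hm' : 2 * (#(R.subtree c) : ℝ) ≤ m := by exact_mod_cast hm
    calc 1113000 * (#(R.subtree c) : ℝ) ^ 21 ≤ 2 ^ 21 * (#(R.subtree c) : ℝ) ^ 21 := by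
          gcongr; norm_num
      _ ≤ (m : ℝ) ^ 21 := by
          rw [← mul_pow]; exact pow_le_pow_left₀ (by positivity) hm' _
  have hone : (1 : ℝ) ≤ (m : ℝ) ^ 21 := by
    have := card_pos.2 ⟨c, self_mem_subtree (R := R) c⟩
    exact one_le_pow₀ (by exact_mod_cast (by omega : 1 ≤ m))
  have hlocal := localVar_nonneg (R.below c) f
  have hroot := classVar_nonneg (agreeOff {c}) f
  calc 21000 * var[R.subtree c] f
      ≤ 1113000 * R.potential c f + 630000 * k * var[{c}] f := by
        linarith [var_subtree_le_potential f hk hk4 c]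
    _ ≤ 10 ^ 6 * k * (1113000 * #(R.subtree c) ^ 21) * localVar (R.below c) f
          + 10 ^ 6 * k * 1 * var[{c}] f := by
        linarith [mul_nonneg (Nat.cast_nonneg (α := ℝ) k) hroot]
    _ ≤ 10 ^ 6 * k * m ^ 21 * localVar (R.below c) f + 10 ^ 6 * k * m ^ 21 * var[{c}] f := by
        gcongr
    _ = 10 ^ 6 * k * m ^ 21 * localVar (R.subtree c) f := by rw [localVar_subtree]; ring

lemma potential_le (e : E) :
    R.potential e f ≤ 10 ^ 6 * k * #(R.subtree e) ^ 21 * localVar (R.below e) f := by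
  induction hn : #(R.below e) using Nat.strong_induction_on generalizing e with
  | _ n ih =>
    subst hn
    have hlocal : ∀ A, 0 ≤ localVar A f := fun A => localVar_nonneg A f
    rcases (R.children e).eq_empty_or_nonempty with he | he
    · rw [potential_of_children_eq_empty f he]
      exact mul_nonneg (by positivity) (hlocal _)
    have hchild : ∀ c ∈ R.children e,
        R.potential c f ≤ 10 ^ 6 * k * #(R.subtree c) ^ 21 * localVar (R.below c) f :=
      fun c hc => ih _ (by
        have := card_le_card (subtree_subset_below hc)
        rw [card_subtree] at this
        omega) c rfl
    obtain ⟨hh, -⟩ := heavyChild_spec he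
    set h := R.heavyChild e with hdef
    set L : ℝ := 10 ^ 6 * k * #(R.subtree e) ^ 21 with hL
    have hheavy : R.potential h f ≤ L * localVar (R.below h) f := by
      refine (hchild h hh).trans (mul_le_mul_of_nonneg_right ?_ (hlocal _))
      have := card_le_card ((subtree_subset_below hh).trans (below_subset_subtree e))
      rw [hL]
      gcongr
    have hlight : 21000 * R.lightVar e f
        ≤ ∑ c ∈ (R.children e).erase h, L * localVar (R.subtree c) f := by
      rw [lightVar, mul_sum]
      refine sum_le_sum fun c hc => mul_var_subtree_le_of_two_mul_card_le f hk hk4 ?_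
        (hchild c (mem_of_mem_erase hc))
      exact (two_mul_card_subtree_le hc).trans (card_le_card (below_subset_subtree e))
    have hroot : 11000 * k * var[{h}] f ≤ L * var[{h}] f := by
      have hone : (1 : ℝ) ≤ #(R.subtree e) ^ 21 :=
        one_le_pow₀ (by exact_mod_cast card_pos.2 ⟨e, self_mem_subtree e⟩)
      refine mul_le_mul_of_nonneg_right ?_ (classVar_nonneg _ f)
      rw [hL]
      nlinarith [Nat.cast_nonneg (α := ℝ) k]
    rw [localVar_below, mul_sum, ← add_sum_erase _ _ hh, localVar_subtree]
    linarith [potential_le_potential_heavyChild_add f hk hk4 he]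

theorem var_univ_le : var[univ] f ≤ 10 ^ 8 * k * Fintype.card E ^ 21 * localVar univ f := by
  have hsubtree := var_subtree_le_potential f hk hk4 R.root
  have hpot := potential_le f hk hk4 R.root
  have hlocal := localVar_nonneg (R.below R.root) f
  have hroot := classVar_nonneg (agreeOff {R.root}) f
  have hone : (1 : ℝ) ≤ (Fintype.card E : ℝ) ^ 21 :=
    one_le_pow₀ (by exact_mod_cast Fintype.card_pos_iff.2 ⟨R.root⟩)
  rw [← subtree_root R, localVar_subtree]
  rw [subtree_root, card_univ] at *
  calc var[univ] f ≤ 53 * R.potential R.root f + 30 * k * 1 * var[{R.root}] f := by linarith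
    _ ≤ 53 * (10 ^ 6 * k * Fintype.card E ^ 21 * localVar (R.below R.root) f)
          + 30 * k * Fintype.card E ^ 21 * var[{R.root}] f := by gcongr
    _ ≤ 10 ^ 8 * k * Fintype.card E ^ 21 * (var[{R.root}] f + localVar (R.below R.root) f) := by
        have := mul_nonneg (show (0 : ℝ) ≤ k * Fintype.card E ^ 21 by positivity) hlocal
        have := mul_nonneg (show (0 : ℝ) ≤ k * Fintype.card E ^ 21 by positivity) hroot
        linarith

end EdgeRooting

/-! ### Mixing of symmetric Markov chains -/

section MarkovChain

open Matrix

section TotalVariation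

variable {Ω : Type*} [Fintype Ω] {ν π : Ω → ℝ}

lemma four_mul_sq_tvDist_le (ν π : Ω → ℝ) :
    4 * tvDist ν π ^ 2 ≤ Fintype.card Ω * ∑ x, (ν x - π x) ^ 2 := by
  have hcs := sq_sum_le_card_mul_sum_sq (s := univ) (f := fun x => |ν x - π x|)
  simp only [sq_abs, card_univ] at hcs
  rw [tvDist]
  linarith

lemma pos_of_sum_sq_sub_lt {c : ℝ} (hc : 0 ≤ c) (h : ∑ x, (ν x - c) ^ 2 < c ^ 2) (x : Ω) :
    0 < ν x := by
  have hx : (ν x - c) ^ 2 < c ^ 2 :=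
    (single_le_sum (f := fun x => (ν x - c) ^ 2) (fun _ _ => sq_nonneg _) (mem_univ x)).trans_lt h
  linarith [(abs_lt.1 (abs_lt_of_sq_lt_sq hx hc)).1]

end TotalVariation

variable {Ω : Type*} [Fintype Ω] {P : Matrix Ω Ω ℝ}

/-- The Dirichlet form of the transition matrix `P` with respect to the counting measure, without
the customary factor `1 / 2`. -/
def dirichletForm (P : Matrix Ω Ω ℝ) (f : Ω → ℝ) : ℝ := ∑ x, ∑ y, P x y * (f x - f y) ^ 2

variable [DecidableEq Ω]

lemma mulVec_apply_eq_add (hP : P ∈ rowStochastic ℝ Ω) (f : Ω → ℝ) (x : Ω) :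
    (P *ᵥ f) x = f x + ∑ y, P x y * (f y - f x) := by
  simp only [mul_sub, sum_sub_distrib, ← sum_mul, sum_row_of_mem_rowStochastic hP, one_mul]
  rw [add_sub_cancel]
  rfl

lemma sq_sum_mul_sub_le (hP : P ∈ rowStochastic ℝ Ω) (f : Ω → ℝ) (x : Ω) :
    (∑ y, P x y * (f y - f x)) ^ 2 ≤ (1 - P x x) * ∑ y, P x y * (f x - f y) ^ 2 := by
  have herase : ∀ g : Ω → ℝ, g x = 0 → ∑ y, g y = ∑ y ∈ univ.erase x, g y := fun g hg => by
    rw [← add_sum_erase _ _ (mem_univ x), hg, zero_add]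
  have hoff : 1 - P x x = ∑ y ∈ univ.erase x, P x y := by
    rw [← sum_row_of_mem_rowStochastic hP x, ← add_sum_erase _ _ (mem_univ x), add_sub_cancel_left]
  rw [herase _ (by simp), herase (fun y => P x y * (f x - f y) ^ 2) (by simp), hoff]
  exact sum_sq_le_sum_mul_sum_of_sq_le_mul _ (fun y _ => hP.1 x y)
    (fun y _ => mul_nonneg (hP.1 x y) (sq_nonneg _)) fun y _ => le_of_eq (by ring)

lemma sq_mulVec_apply_le (hP : P ∈ rowStochastic ℝ Ω) {x : Ω} {β : ℝ} (hβ : β ≤ P x x)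
    (f : Ω → ℝ) :
    (P *ᵥ f) x ^ 2 ≤ ∑ y, P x y * f y ^ 2 - β * ∑ y, P x y * (f x - f y) ^ 2 := by
  set D := ∑ y, P x y * (f x - f y) ^ 2
  set M := ∑ y, P x y * (f y - f x)
  have hD₀ : 0 ≤ D := sum_nonneg fun y _ => mul_nonneg (hP.1 x y) (sq_nonneg _)
  have hsq : ∑ y, P x y * f y ^ 2 = D + 2 * f x * M + f x ^ 2 := by
    calc ∑ y, P x y * f y ^ 2
        = ∑ y, (P x y * (f x - f y) ^ 2 + 2 * f x * (P x y * (f y - f x)) + f x ^ 2 * P x y) :=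
          sum_congr rfl fun y _ => by ring
      _ = D + 2 * f x * M + f x ^ 2 := by
          rw [sum_add_distrib, sum_add_distrib, ← mul_sum, ← mul_sum,
            sum_row_of_mem_rowStochastic hP, mul_one]
  have hM₂ : M ^ 2 ≤ (1 - P x x) * D := sq_sum_mul_sub_le hP f x
  rw [mulVec_apply_eq_add hP, hsq]
  linarith [mul_nonneg (sub_nonneg.2 hβ) hD₀]

lemma sum_sq_mulVec_le (hP : P ∈ doublyStochastic ℝ Ω) {β : ℝ} (hβ : ∀ x, β ≤ P x x)
    (f : Ω → ℝ) : ∑ x, (P *ᵥ f) x ^ 2 ≤ ∑ x, f x ^ 2 - β * dirichletForm P f := by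
  have hrow := (mem_doublyStochastic_iff_mem_rowStochastic_and_mem_colStochastic.1 hP).1
  calc ∑ x, (P *ᵥ f) x ^ 2
      ≤ ∑ x, (∑ y, P x y * f y ^ 2 - β * ∑ y, P x y * (f x - f y) ^ 2) :=
        sum_le_sum fun x _ => sq_mulVec_apply_le hrow (hβ x) f
    _ = ∑ x, (P *ᵥ fun y => f y ^ 2) x - β * dirichletForm P f := by
        rw [sum_sub_distrib, ← mul_sum]
        rfl
    _ = ∑ x, f x ^ 2 - β * dirichletForm P f := by rw [sum_mulVec_of_mem_doublyStochastic hP]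

section Decay

variable {δ : ℝ} (hP : P ∈ doublyStochastic ℝ Ω) (hδ : δ ≤ 1)
  (hgap : ∀ f : Ω → ℝ, ∑ x, f x = 0 → ∑ x, (P *ᵥ f) x ^ 2 ≤ (1 - δ) * ∑ x, f x ^ 2)
include hP hδ hgap

lemma sum_sq_pow_mulVec_le {f : Ω → ℝ} (hf : ∑ x, f x = 0) (t : ℕ) :
    ∑ x, ((P ^ t) *ᵥ f) x ^ 2 ≤ (1 - δ) ^ t * ∑ x, f x ^ 2 := by
  induction t with
  | zero => simp
  | succ t ih =>
    have hmean : ∑ x, ((P ^ t) *ᵥ f) x = 0 := by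
      rw [sum_mulVec_of_mem_doublyStochastic (pow_mem hP t), hf]
    calc ∑ x, ((P ^ (t + 1)) *ᵥ f) x ^ 2
        = ∑ x, (P *ᵥ ((P ^ t) *ᵥ f)) x ^ 2 := by rw [pow_succ', mulVec_mulVec]
      _ ≤ (1 - δ) * ∑ x, ((P ^ t) *ᵥ f) x ^ 2 := hgap _ hmean
      _ ≤ (1 - δ) * ((1 - δ) ^ t * ∑ x, f x ^ 2) :=
          mul_le_mul_of_nonneg_left ih (sub_nonneg.2 hδ)
      _ = (1 - δ) ^ (t + 1) * ∑ x, f x ^ 2 := by rw [pow_succ', mul_assoc]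

lemma sum_sq_pow_sub_uniform_le (hsymm : P.IsSymm) (t : ℕ) (σ : Ω) :
    ∑ η, ((P ^ t) σ η - 1 / (Fintype.card Ω : ℝ)) ^ 2 ≤ (1 - δ) ^ t := by
  set p := 1 / (Fintype.card Ω : ℝ)
  have hcard : (Fintype.card Ω : ℝ) * p = 1 :=
    mul_one_div_cancel (by exact_mod_cast (Fintype.card_pos_iff.2 ⟨σ⟩).ne')
  set f : Ω → ℝ := Pi.single σ 1 - fun _ => p with hf
  have hmean : ∑ x, f x = 0 := by
    simp [hf, hcard]
  have hnorm : ∑ x, f x ^ 2 ≤ 1 := by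
    have hsq : ∀ x, f x ^ 2 = (1 - 2 * p) * (Pi.single σ 1 : Ω → ℝ) x + p * p := fun x => by
      by_cases hx : x = σ
      · subst hx; simp [hf]; ring
      · simp [hf, hx]; ring
    have hp₀ : 0 ≤ p := by positivity
    simp only [hsq, sum_add_distrib, ← mul_sum, sum_const, card_univ, nsmul_eq_mul, hcard,
      sum_pi_single', mem_univ, if_true]
    linarith
  have hpow : ∀ η, (P ^ t) σ η - p = ((P ^ t) *ᵥ f) η := fun η => by
    have hone : ((P ^ t) *ᵥ fun _ => p) η = p := by
      simp only [mulVec, dotProduct, ← sum_mul, sum_row_of_mem_doublyStochastic (pow_mem hP t),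
        one_mul]
    rw [hf, mulVec_sub, Pi.sub_apply, hone, mulVec_single_one, Matrix.col_apply,
      (hsymm.pow t).apply]
  simp_rw [hpow]
  calc ∑ x, ((P ^ t) *ᵥ f) x ^ 2 ≤ (1 - δ) ^ t * ∑ x, f x ^ 2 :=
        sum_sq_pow_mulVec_le hP hδ hgap hmean t
    _ ≤ (1 - δ) ^ t := mul_le_of_le_one_right (pow_nonneg (sub_nonneg.2 hδ) t) hnorm

lemma exists_pow_pos (hδ₀ : 0 < δ) (hsymm : P.IsSymm) : ∃ t : ℕ, ∀ σ η, 0 < (P ^ t) σ η := by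
  rcases isEmpty_or_nonempty Ω with _ | _
  · exact ⟨0, fun σ => isEmptyElim σ⟩
  obtain ⟨t, ht⟩ := exists_pow_lt_of_lt_one
    (by positivity : 0 < (1 / (Fintype.card Ω : ℝ)) ^ 2) (by linarith : 1 - δ < 1)
  exact ⟨t, fun σ => pos_of_sum_sq_sub_lt (by positivity)
    ((sum_sq_pow_sub_uniform_le hP hδ hgap hsymm t σ).trans_lt ht)⟩

lemma tvDist_pow_uniform_lt_of_decay (hsymm : P.IsSymm) {t : ℕ} {ε : ℝ} (hε : 0 ≤ ε)
    (ht : Fintype.card Ω * (1 - δ) ^ t < 4 * ε ^ 2) (σ : Ω) :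
    tvDist ((P ^ t) σ) (fun _ => 1 / (Fintype.card Ω : ℝ)) < ε := by
  refine lt_of_pow_lt_pow_left₀ 2 hε (lt_of_mul_lt_mul_left (a := 4) ?_ (by norm_num))
  calc 4 * tvDist ((P ^ t) σ) (fun _ => 1 / (Fintype.card Ω : ℝ)) ^ 2
      ≤ Fintype.card Ω * ∑ η, ((P ^ t) σ η - 1 / (Fintype.card Ω : ℝ)) ^ 2 :=
        four_mul_sq_tvDist_le _ _
    _ ≤ Fintype.card Ω * (1 - δ) ^ t := by
        gcongr
        exact sum_sq_pow_sub_uniform_le hP hδ hgap hsymm t σ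
    _ < 4 * ε ^ 2 := ht

end Decay

-- Testing against the sign `s` of `P σ η - 1 / |Ω|` turns the total variation distance into a
-- difference between `(P *ᵥ s) σ` and its average.
lemma tvDist_uniform_le_of_oscillation_le (hP : P ∈ colStochastic ℝ Ω) {B : ℝ} (σ : Ω)
    (hosc : ∀ s : Ω → ℝ, (∀ x, |s x| ≤ 1) → ∀ τ, |(P *ᵥ s) σ - (P *ᵥ s) τ| ≤ 2 * B) :
    tvDist (P σ) (fun _ => 1 / (Fintype.card Ω : ℝ)) ≤ B := by
  set N := (Fintype.card Ω : ℝ)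
  have hN₀ : 0 < N := Nat.cast_pos.2 <| Fintype.card_pos_iff.2 ⟨σ⟩
  let s : Ω → ℝ := fun η => SignType.sign (P σ η - 1 / N)
  have hs : ∀ x, |s x| ≤ 1 := fun x => by
    rcases lt_trichotomy (P σ x - 1 / N) 0 with h | h | h <;>
      simp only [s, h, sign_neg, sign_pos, sign_zero] <;> simp
  have hdual : ∑ η, |P σ η - 1 / N| = (∑ τ, ((P *ᵥ s) σ - (P *ᵥ s) τ)) / N :=
    calc ∑ η, |P σ η - 1 / N|
        = ∑ η, P σ η * s η - (∑ η, s η) / N := by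
          simp_rw [← self_mul_sign, sub_mul, sum_sub_distrib, ← mul_sum, one_div_mul_eq_div]
          rfl
      _ = (∑ τ, ((P *ᵥ s) σ - (P *ᵥ s) τ)) / N := by
          rw [sum_sub_distrib, sum_mulVec_of_mem_colStochastic hP, sum_const, card_univ,
            nsmul_eq_mul, sub_div, mul_div_cancel_left₀ _ hN₀.ne']
          rfl
  have hsum : ∑ τ, ((P *ᵥ s) σ - (P *ᵥ s) τ) ≤ N * (2 * B) := by
    simpa using sum_le_card_nsmul univ _ _ fun τ _ => (le_abs_self _).trans (hosc s hs τ)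
  have hdiv : (∑ τ, ((P *ᵥ s) σ - (P *ᵥ s) τ)) / N ≤ 2 * B := (div_le_iff₀' hN₀).2 hsum
  rw [tvDist, hdual]
  linarith

lemma tvDist_pow_uniform_le_of_contraction (hP : P ∈ colStochastic ℝ Ω) {d : Ω → Ω → ℝ} {D κ : ℝ}
    (hκ : 0 ≤ κ) (hd : ∀ x y, 0 ≤ d x y) (hone : ∀ x y, x ≠ y → 1 ≤ d x y) (hD : ∀ x y, d x y ≤ D)
    (hcon : ∀ (g : Ω → ℝ) (L : ℝ), (∀ x y, |g x - g y| ≤ L * d x y) →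
      ∀ x y, |(P *ᵥ g) x - (P *ᵥ g) y| ≤ κ * L * d x y)
    (t : ℕ) (σ : Ω) :
    tvDist ((P ^ t) σ) (fun _ => 1 / (Fintype.card Ω : ℝ)) ≤ D * κ ^ t := by
  refine tvDist_uniform_le_of_oscillation_le (pow_mem hP t) σ fun s hs τ => ?_
  have hlip : ∀ x y, |s x - s y| ≤ 2 * d x y := fun x y => by
    by_cases hxy : x = y
    · simp [hxy, hd]
    · linarith [abs_sub (s x) (s y), hs x, hs y, hone x y hxy]
  have hiter : ∀ x y, |((P ^ t) *ᵥ s) x - ((P ^ t) *ᵥ s) y| ≤ κ ^ t * 2 * d x y := by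
    induction t with
    | zero => simpa using hlip
    | succ t ih =>
      rw [pow_succ', ← mulVec_mulVec, pow_succ', mul_assoc κ]
      exact hcon _ _ ih
  calc |((P ^ t) *ᵥ s) σ - ((P ^ t) *ᵥ s) τ| ≤ κ ^ t * 2 * d σ τ := hiter σ τ
    _ ≤ κ ^ t * 2 * D := mul_le_mul_of_nonneg_left (hD σ τ) (by positivity)
    _ = 2 * (D * κ ^ t) := by ring

end MarkovChain

/-! ### The Glauber dynamics -/

section Glauber

open Matrix

section Recolour

variable {E : Type*} {H : SimpleGraph E} {k : ℕ}

/-- The colour `c` is not used by a neighbour of `e`, so that `e` may be recoloured with `c`. -/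
def IsFree (σ : ProperColouring H k) (e : E) (c : Fin k) : Prop := ∀ f, H.Adj e f → σ.1 f ≠ c

/-- The colours that `σ` or `η` uses on the set `S`. -/
def usedColours (S : Finset E) (σ η : ProperColouring H k) : Finset (Fin k) :=
  S.image σ.1 ∪ S.image η.1

lemma card_usedColours_le (S : Finset E) (σ η : ProperColouring H k) :
    #(usedColours S σ η) ≤ 2 * #S := by
  have := card_union_le (S.image σ.1) (S.image η.1)
  have := card_image_le (s := S) (f := σ.1)
  have := card_image_le (s := S) (f := η.1)
  rw [usedColours]
  omega

variable [DecidableEq E]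

/-- One attempted update of the Glauber dynamics: recolour `e` with `c` if the result is proper,
and do nothing otherwise. -/
noncomputable def recolour (σ : ProperColouring H k) (e : E) (c : Fin k) : ProperColouring H k :=
  if h : IsFree σ e c then
    ⟨Function.update σ.1 e c, fun a b hab => by
      rcases eq_or_ne a e with rfl | ha
      · rw [Function.update_self, Function.update_of_ne hab.ne']
        exact (h b hab).symm
      rcases eq_or_ne b e with rfl | hb
      · rw [Function.update_self, Function.update_of_ne ha]
        exact h a hab.symm
      · rw [Function.update_of_ne ha, Function.update_of_ne hb]
        exact σ.2 a b hab⟩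
  else σ

variable {σ η : ProperColouring H k} {e x : E} {c : Fin k}

lemma recolour_val_of_isFree (h : IsFree σ e c) :
    (recolour σ e c).1 = Function.update σ.1 e c := by rw [recolour, dif_pos h]

lemma recolour_of_not_isFree (h : ¬ IsFree σ e c) : recolour σ e c = σ := by
  rw [recolour, dif_neg h]

lemma recolour_apply_of_ne (hx : x ≠ e) : (recolour σ e c).1 x = σ.1 x := by
  by_cases h : IsFree σ e c
  · rw [recolour_val_of_isFree h, Function.update_of_ne hx]
  · rw [recolour_of_not_isFree h]

lemma recolour_self (σ : ProperColouring H k) (e : E) : recolour σ e (σ.1 e) = σ := by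
  have h : IsFree σ e (σ.1 e) := fun f hf => (σ.2 e f hf).symm
  exact Subtype.ext (by rw [recolour_val_of_isFree h, Function.update_eq_self])

lemma recolour_eq_iff (hne : σ ≠ η) : recolour σ e c = η ↔ c = η.1 e ∧ agreeOff {e} σ η := by
  constructor
  · rintro rfl
    by_cases h : IsFree σ e c
    · exact ⟨by rw [recolour_val_of_isFree h, Function.update_self],
        fun x hx => (recolour_apply_of_ne (notMem_singleton.1 hx)).symm⟩
    · exact absurd (recolour_of_not_isFree h).symm hne
  · rintro ⟨rfl, h⟩
    have hfree : IsFree σ e (η.1 e) := fun f hf => by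
      rw [h f (notMem_singleton.2 hf.ne')]
      exact (η.2 e f hf).symm
    refine Subtype.ext (funext fun x => ?_)
    rcases eq_or_ne x e with rfl | hx
    · rw [recolour_val_of_isFree hfree, Function.update_self]
    · rw [recolour_apply_of_ne hx, h x (notMem_singleton.2 hx)]

end Recolour

variable {E : Type*} [Fintype E] {H : SimpleGraph E} {k : ℕ}

/-- The set on which two colourings disagree. Its cardinality is their Hamming distance. -/
def disagreement (σ η : ProperColouring H k) : Finset E := univ.filter fun e => σ.1 e ≠ η.1 e

section Disagreement

variable {σ η : ProperColouring H k} {e : E} {c : Fin k}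

lemma mem_disagreement : e ∈ disagreement σ η ↔ σ.1 e ≠ η.1 e := by simp [disagreement]

lemma disagreement_comm (σ η : ProperColouring H k) : disagreement σ η = disagreement η σ := by
  ext e; rw [mem_disagreement, mem_disagreement, ne_comm]

lemma disagreement_eq_empty_iff : disagreement σ η = ∅ ↔ σ = η := by
  simp [disagreement, filter_eq_empty_iff, Subtype.ext_iff, funext_iff]

lemma disagreement_eq_singleton_iff (hne : σ ≠ η) :
    disagreement σ η = {e} ↔ agreeOff {e} σ η := by
  rw [← (nonempty_iff_ne_empty.2 (mt disagreement_eq_empty_iff.1 hne)).subset_singleton_iff]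
  refine forall_congr' fun x => ?_
  rw [mem_disagreement, ← not_imp_not, not_not]

lemma card_agreeOff_singleton (hne : σ ≠ η) :
    #(univ.filter fun e => agreeOff {e} σ η) = if #(disagreement σ η) = 1 then 1 else 0 := by
  simp_rw [← disagreement_eq_singleton_iff hne]
  split_ifs with h
  · obtain ⟨a, ha⟩ := card_eq_one.1 h
    simp [ha, filter_eq]
  · rw [card_eq_zero, filter_eq_empty_iff]
    exact fun e _ he => h (by rw [he, card_singleton])

lemma isFree_iff_of_notMem_usedColours (hc : c ∉ usedColours (disagreement σ η) σ η) :
    IsFree σ e c ↔ IsFree η e c := by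
  simp only [usedColours, mem_union, mem_image, not_or, not_exists, not_and] at hc
  refine forall₂_congr fun f _ => ?_
  by_cases hf : f ∈ disagreement σ η
  · exact iff_of_true (hc.1 f hf) (hc.2 f hf)
  · rw [mem_disagreement, not_not] at hf
    rw [hf]

end Disagreement

variable [DecidableEq E]

/-- The transition matrix of the Glauber dynamics on the proper `k`-colourings of `H`, written as
an average over the random choices of a vertex of `H` and a colour. -/
noncomputable def glauber (H : SimpleGraph E) (k : ℕ) :
    Matrix (ProperColouring H k) (ProperColouring H k) ℝ :=
  of fun σ η => 𝔼 p : E × Fin k, if recolour σ p.1 p.2 = η then 1 else 0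

lemma glauber_mulVec (g : ProperColouring H k → ℝ) (σ : ProperColouring H k) :
    (glauber H k *ᵥ g) σ = 𝔼 p : E × Fin k, g (recolour σ p.1 p.2) := by
  simp only [mulVec, dotProduct, glauber, of_apply, expect_mul, ← expect_sum_comm, ite_mul, one_mul,
    zero_mul, sum_ite_eq, mem_univ, if_true]

lemma glauber_apply_of_ne {σ η : ProperColouring H k} (hne : σ ≠ η) :
    glauber H k σ η =
      if #(disagreement σ η) = 1 then 1 / ((Fintype.card E : ℝ) * k) else 0 := by
  have hsum : ∑ p : E × Fin k, (if recolour σ p.1 p.2 = η then (1 : ℝ) else 0)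
      = #(univ.filter fun e => agreeOff {e} σ η) := by
    simp_rw [recolour_eq_iff hne, Fintype.sum_prod_type, ite_and, sum_ite_eq', mem_univ, if_true,
      sum_boole]
  rw [glauber, of_apply, Fintype.expect_eq_sum_div_card, hsum, card_agreeOff_singleton hne,
    Fintype.card_prod, Fintype.card_fin, Nat.cast_mul]
  split_ifs <;> simp

lemma glauber_isSymm : (glauber H k).IsSymm := IsSymm.ext fun σ η => by
  rcases eq_or_ne σ η with rfl | h
  · rfl
  · rw [glauber_apply_of_ne h, glauber_apply_of_ne h.symm, disagreement_comm]

lemma var_univ_of_sum_eq_zero {f : ProperColouring H k → ℝ} (hf : ∑ σ, f σ = 0) :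
    var[univ] f = ∑ σ, f σ ^ 2 := by
  have havg : ∀ σ, avg[univ] f σ = 0 := fun σ => by
    rw [classAvg, agreeOff_univ, expect_eq_sum_div_card]
    simp [hf]
  simp only [classVar, havg, sub_zero]

section Nonempty

variable [Nonempty E]

lemma one_div_le_glauber_diag (σ : ProperColouring H k) : 1 / (k : ℝ) ≤ glauber H k σ σ := by
  rw [glauber, of_apply, ← univ_product_univ, expect_product]
  refine le_expect univ_nonempty fun e _ => ?_
  rw [Fintype.expect_eq_sum_div_card, Fintype.card_fin]
  have hmem : σ.1 e ∈ univ.filter fun c => recolour σ e c = σ := by simp [recolour_self]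
  have hone : (1 : ℝ) ≤ ∑ c, if recolour σ e c = σ then 1 else 0 := by
    rw [sum_boole]
    exact_mod_cast card_pos.2 ⟨_, hmem⟩
  gcongr

variable [NeZero k]

lemma glauber_mem_doublyStochastic : glauber H k ∈ doublyStochastic ℝ (ProperColouring H k) := by
  have hrow : ∀ σ, ∑ η, glauber H k σ η = 1 := fun σ => by
    simpa [mulVec, dotProduct] using glauber_mulVec (H := H) (k := k) (fun _ => 1) σ
  refine mem_doublyStochastic_iff_sum.2 ⟨fun σ η => ?_, hrow, fun η => ?_⟩
  · exact expect_nonneg fun p _ => by split_ifs <;> norm_num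
  · rw [← hrow η]
    exact sum_congr rfl fun σ _ => glauber_isSymm.apply η σ

lemma sum_glauber_apply (η : ProperColouring H k) : ∑ σ, glauber H k σ η = 1 :=
  sum_col_of_mem_doublyStochastic glauber_mem_doublyStochastic η

lemma glauber_apply_self (σ : ProperColouring H k) :
    glauber H k σ σ = 1 - ∑ η with η ≠ σ, glauber H k σ η := by
  rw [filter_ne', eq_sub_iff_add_eq, add_sum_erase univ _ (mem_univ σ),
    sum_row_of_mem_doublyStochastic glauber_mem_doublyStochastic]

lemma localVar_univ_le (f : ProperColouring H k → ℝ) :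
    localVar univ f ≤ Fintype.card E * k * dirichletForm (glauber H k) f := by
  have hpair : ∀ σ η : ProperColouring H k,
      ∑ e, (if agreeOff {e} σ η then (f σ - f η) ^ 2 else 0)
        = Fintype.card E * k * (glauber H k σ η * (f σ - f η) ^ 2) := fun σ η => by
    rcases eq_or_ne σ η with rfl | h
    · simp
    have hk : (k : ℝ) ≠ 0 := Nat.cast_ne_zero.2 (NeZero.ne k)
    rw [← sum_filter, sum_const, card_agreeOff_singleton h, glauber_apply_of_ne h]
    split_ifs
    · field_simp; simp
    · simp
  calc localVar univ f
      ≤ ∑ e : E, ∑ σ : ProperColouring H k, ∑ η with agreeOff {e} σ η, (f σ - f η) ^ 2 :=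
        sum_le_sum fun e _ => classVar_le_sum_sq_sub (agreeOff {e}) f
    _ = ∑ σ : ProperColouring H k, ∑ η : ProperColouring H k,
          ∑ e, if agreeOff {e} σ η then (f σ - f η) ^ 2 else 0 := by
        simp_rw [sum_filter]
        rw [sum_comm]
        exact sum_congr rfl fun σ _ => sum_comm
    _ = Fintype.card E * k * dirichletForm (glauber H k) f := by
        simp_rw [hpair, dirichletForm, mul_sum]

lemma sum_sq_glauber_mulVec_le {Γ : ℝ} (hΓ : 0 < Γ)
    (hpoincare : ∀ f : ProperColouring H k → ℝ, var[univ] f ≤ Γ * localVar univ f)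
    {f : ProperColouring H k → ℝ} (hf : ∑ σ, f σ = 0) :
    ∑ σ, (glauber H k *ᵥ f) σ ^ 2
      ≤ (1 - 1 / (Γ * Fintype.card E * k ^ 2)) * ∑ σ, f σ ^ 2 := by
  have hk : (0 : ℝ) < k := Nat.cast_pos.2 (NeZero.pos k)
  set D := dirichletForm (glauber H k) f
  have hD : ∑ σ, f σ ^ 2 ≤ Γ * (Fintype.card E * k * D) := by
    rw [← var_univ_of_sum_eq_zero hf]
    exact (hpoincare f).trans (mul_le_mul_of_nonneg_left (localVar_univ_le f) hΓ.le)
  have hgap : 1 / (Γ * Fintype.card E * k ^ 2) * ∑ σ, f σ ^ 2 ≤ 1 / k * D :=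
    calc 1 / (Γ * Fintype.card E * k ^ 2) * ∑ σ, f σ ^ 2
        ≤ 1 / (Γ * Fintype.card E * k ^ 2) * (Γ * (Fintype.card E * k * D)) := by gcongr
      _ = 1 / k * D := by field_simp
  linarith [sum_sq_mulVec_le glauber_mem_doublyStochastic one_div_le_glauber_diag f]

end Nonempty

/-! ### The identity coupling with many colours -/

section Coupling

lemma sum_card_le_of_notMem {a : ℝ} {S : Finset (Fin k)} {φ : Fin k → ℕ}
    (hφ : ∀ c, (φ c : ℝ) ≤ a + 1) (hφS : ∀ c ∉ S, (φ c : ℝ) ≤ a) :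
    ∑ c, (φ c : ℝ) ≤ k * a + #S := by
  have h : ∀ c, (φ c : ℝ) ≤ a + if c ∈ S then 1 else 0 := fun c => by
    split_ifs with hc
    · exact hφ c
    · simpa using hφS c hc
  simpa [sum_add_distrib] using sum_le_sum fun c (_ : c ∈ univ) => h c

variable {σ η : ProperColouring H k} {e : E} {c : Fin k}

lemma disagreement_recolour_subset_insert (σ η : ProperColouring H k) (e : E) (c : Fin k) :
    disagreement (recolour σ e c) (recolour η e c) ⊆ insert e (disagreement σ η) := fun x hx => by
  rcases eq_or_ne x e with rfl | hxe
  · exact mem_insert_self _ _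
  · rw [mem_disagreement, recolour_apply_of_ne hxe, recolour_apply_of_ne hxe] at hx
    exact mem_insert_of_mem (mem_disagreement.2 hx)

lemma disagreement_recolour_subset_erase (hσ : IsFree σ e c) (hη : IsFree η e c) :
    disagreement (recolour σ e c) (recolour η e c) ⊆ (disagreement σ η).erase e := fun x hx => by
  rcases mem_insert.1 (disagreement_recolour_subset_insert σ η e c hx) with rfl | h
  · rw [mem_disagreement, recolour_val_of_isFree hσ, recolour_val_of_isFree hη] at hx
    simp at hx
  · refine mem_erase.2 ⟨?_, h⟩
    rintro rfl
    rw [mem_disagreement, recolour_val_of_isFree hσ, recolour_val_of_isFree hη] at hx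
    simp at hx

lemma disagreement_recolour_subset_of_isFree_iff (h : IsFree σ e c ↔ IsFree η e c) :
    disagreement (recolour σ e c) (recolour η e c) ⊆ disagreement σ η := by
  by_cases hσ : IsFree σ e c
  · exact (disagreement_recolour_subset_erase hσ (h.1 hσ)).trans (erase_subset _ _)
  · rw [recolour_of_not_isFree hσ, recolour_of_not_isFree (mt h.2 hσ)]

lemma sum_card_disagreement_recolour_le_of_mem (he : e ∈ disagreement σ η) :
    ∑ c, (#(disagreement (recolour σ e c) (recolour η e c)) : ℝ)
      ≤ k * (#(disagreement σ η) - 1) + 2 * Fintype.card E := by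
  have hcard : (#(usedColours univ σ η) : ℝ) ≤ 2 * Fintype.card E := by
    exact_mod_cast card_usedColours_le univ σ η
  refine (sum_card_le_of_notMem (a := #(disagreement σ η) - 1) (S := usedColours univ σ η)
    (fun c => ?_) fun c hc => ?_).trans (by linarith)
  · rw [sub_add_cancel]
    have := card_le_card (disagreement_recolour_subset_insert σ η e c)
    rw [insert_eq_self.2 he] at this
    exact_mod_cast this
  · simp only [usedColours, mem_union, mem_image, mem_univ, true_and, not_or, not_exists] at hc
    have := card_le_card (disagreement_recolour_subset_erase (e := e)
      (fun f _ => hc.1 f) fun f _ => hc.2 f)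
    rw [le_sub_iff_add_le]
    exact_mod_cast (Nat.add_le_add_right this 1).trans_eq (card_erase_add_one he)

lemma sum_card_disagreement_recolour_le (σ η : ProperColouring H k) (e : E) :
    ∑ c, (#(disagreement (recolour σ e c) (recolour η e c)) : ℝ)
      ≤ k * #(disagreement σ η) + 2 * #(disagreement σ η) := by
  have hcard : (#(usedColours (disagreement σ η) σ η) : ℝ) ≤ 2 * #(disagreement σ η) := by
    exact_mod_cast card_usedColours_le (disagreement σ η) σ η
  refine (sum_card_le_of_notMem (a := #(disagreement σ η))
    (S := usedColours (disagreement σ η) σ η) (fun c => ?_) fun c hc => ?_).trans (by linarith)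
  · exact_mod_cast (card_le_card (disagreement_recolour_subset_insert σ η e c)).trans
      (card_insert_le _ _)
  · exact_mod_cast card_le_card (disagreement_recolour_subset_of_isFree_iff
      (isFree_iff_of_notMem_usedColours hc))

variable [Nonempty E] (hk : 8 * Fintype.card E ≤ k)
include hk

lemma expect_card_disagreement_recolour_le (σ η : ProperColouring H k) :
    𝔼 p : E × Fin k, (#(disagreement (recolour σ p.1 p.2) (recolour η p.1 p.2)) : ℝ)
      ≤ (1 - 1 / (2 * Fintype.card E)) * #(disagreement σ η) := by
  have hk' : 8 * (Fintype.card E : ℝ) ≤ k := by exact_mod_cast hk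
  set m : ℝ := (Fintype.card E : ℝ)
  set d : ℝ := (#(disagreement σ η) : ℝ)
  have hm₀ : 0 < m := Nat.cast_pos.2 Fintype.card_pos
  have hd : 0 ≤ d := Nat.cast_nonneg _
  have hterm : ∀ e, ∑ c, (#(disagreement (recolour σ e c) (recolour η e c)) : ℝ)
      ≤ (k * d + 2 * d) + if e ∈ disagreement σ η then 2 * m - k else 0 := fun e => by
    split_ifs with he
    · linarith [sum_card_disagreement_recolour_le_of_mem he]
    · linarith [sum_card_disagreement_recolour_le σ η e]
  have hsum : ∑ p : E × Fin k, (#(disagreement (recolour σ p.1 p.2) (recolour η p.1 p.2)) : ℝ)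
      ≤ m * (k * d + 2 * d) + d * (2 * m - k) := by
    rw [Fintype.sum_prod_type]
    refine (sum_le_sum fun e _ => hterm e).trans_eq ?_
    rw [sum_add_distrib, sum_const, sum_ite_mem, univ_inter, sum_const, card_univ, nsmul_eq_mul,
      nsmul_eq_mul]
  have hk₀ : (0 : ℝ) < k := by linarith
  rw [Fintype.expect_eq_sum_div_card, Fintype.card_prod, Fintype.card_fin, Nat.cast_mul,
    div_le_iff₀ (by positivity)]
  calc _ ≤ m * (k * d + 2 * d) + d * (2 * m - k) := hsum
    _ ≤ (m * k - k / 2) * d := by nlinarith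
    _ = (1 - 1 / (2 * m)) * d * (m * k) := by field_simp

lemma abs_glauber_mulVec_sub_le {g : ProperColouring H k → ℝ} {L : ℝ}
    (hg : ∀ σ η, |g σ - g η| ≤ L * #(disagreement σ η)) (σ η : ProperColouring H k) :
    |(glauber H k *ᵥ g) σ - (glauber H k *ᵥ g) η|
      ≤ (1 - 1 / (2 * Fintype.card E)) * L * #(disagreement σ η) := by
  rcases eq_or_ne σ η with rfl | hne
  · simp [disagreement_eq_empty_iff.2]
  have hcard : (0 : ℝ) < #(disagreement σ η) :=
    Nat.cast_pos.2 (card_pos.2 (nonempty_iff_ne_empty.2 (mt disagreement_eq_empty_iff.1 hne)))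
  have hL : 0 ≤ L := nonneg_of_mul_nonneg_left ((abs_nonneg _).trans (hg σ η)) hcard
  rw [glauber_mulVec, glauber_mulVec, ← expect_sub_distrib]
  calc |𝔼 p : E × Fin k, (g (recolour σ p.1 p.2) - g (recolour η p.1 p.2))|
      ≤ 𝔼 p : E × Fin k, |g (recolour σ p.1 p.2) - g (recolour η p.1 p.2)| := abs_expect_le _ _
    _ ≤ 𝔼 p : E × Fin k, L * #(disagreement (recolour σ p.1 p.2) (recolour η p.1 p.2)) :=
        expect_le_expect fun p _ => hg _ _
    _ ≤ L * ((1 - 1 / (2 * Fintype.card E)) * #(disagreement σ η)) := by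
        rw [← mul_expect]
        exact mul_le_mul_of_nonneg_left (expect_card_disagreement_recolour_le hk σ η) hL
    _ = (1 - 1 / (2 * Fintype.card E)) * L * #(disagreement σ η) := by ring

end Coupling

end Glauber

/-! ### Rooting a tree at a leaf -/

section TreeRooting

section Dist

variable {V : Type*} {G : SimpleGraph V} {r : V}

lemma eq_of_adj_of_dist_eq_succ (hG : G.IsTree) {a a' b : V} (h : G.Adj a b) (h' : G.Adj a' b)
    (hd : G.dist r b = G.dist r a + 1) (hd' : G.dist r b = G.dist r a' + 1) : a = a' := by
  obtain ⟨p, hp⟩ := hG.connected.exists_walk_length_eq_dist r a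
  obtain ⟨p', hp'⟩ := hG.connected.exists_walk_length_eq_dist r a'
  have hpath : (p.concat h).IsPath :=
    SimpleGraph.Walk.isPath_of_length_eq_dist _ (by rw [SimpleGraph.Walk.length_concat, hp, hd])
  have hpath' : (p'.concat h').IsPath :=
    SimpleGraph.Walk.isPath_of_length_eq_dist _ (by rw [SimpleGraph.Walk.length_concat, hp', hd'])
  simpa using congrArg SimpleGraph.Walk.penultimate
    ((hG.existsUnique_path r b).unique hpath hpath')

lemma exists_adj_dist_eq_succ (hG : G.IsTree) {b : V} (hb : b ≠ r) :
    ∃ a, G.Adj a b ∧ G.dist r b = G.dist r a + 1 := by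
  obtain ⟨p, hp⟩ := hG.connected.exists_walk_length_eq_dist r b
  have hadj := p.adj_penultimate (SimpleGraph.Walk.not_nil_of_ne hb.symm)
  have hlength : p.dropLast.length + 1 = p.length := by
    rw [← SimpleGraph.Walk.length_concat _ hadj, p.concat_dropLast hadj]
  have hle := SimpleGraph.dist_le p.dropLast
  refine ⟨p.penultimate, hadj, ?_⟩
  rcases hG.dist_eq_dist_add_one_of_adj r hadj with h | h <;> omega

end Dist

variable {V : Type} [Fintype V]

/-- The line graph of `G` on the type `Edge G`, with adjacency given by `EdgeInc`, so that
`ProperColouring (edgeConflict G) k` unfolds to `ECol G k`. -/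
abbrev edgeConflict (G : SimpleGraph V) [DecidableRel G.Adj] : SimpleGraph (Edge G) where
  Adj e f := EdgeInc e.1 f.1
  symm := ⟨fun _ _ h => ⟨h.1.symm, h.2.imp fun _ hv => hv.symm⟩⟩
  loopless := ⟨fun _ h => h.1 rfl⟩

variable {G : SimpleGraph V} [DecidableRel G.Adj] {r : V}

lemma exists_endpoints_dist_eq_succ (hG : G.IsTree) (r : V) (e : Edge G) :
    ∃ a b, e.1 = s(a, b) ∧ G.dist r b = G.dist r a + 1 := by
  obtain ⟨e, he⟩ := e
  induction e using Sym2.ind with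
  | _ a b =>
    rcases hG.dist_eq_dist_add_one_of_adj r (SimpleGraph.mem_edgeFinset.1 he) with h | h
    · exact ⟨b, a, Sym2.eq_swap, h⟩
    · exact ⟨a, b, rfl, h⟩

section Oriented

variable {up low : Edge G → V} (hends : ∀ e, e.1 = s(up e, low e))
include hends

lemma adj_up_low (e : Edge G) : G.Adj (up e) (low e) := by
  rw [← SimpleGraph.mem_edgeSet, ← hends, ← SimpleGraph.mem_edgeFinset]
  exact e.2

lemma card_up_eq_low_lt_degree (e : Edge G) : #{f | up f = low e} < G.degree (low e) := by
  have he : e ∉ ({f | up f = low e} : Finset (Edge G)) := by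
    simpa using (adj_up_low hends e).ne
  have hsub : (insert e ({f | up f = low e} : Finset (Edge G))).image Subtype.val ⊆
      G.incidenceFinset (low e) := by
    intro x hx
    obtain ⟨f, hf, rfl⟩ := mem_image.1 hx
    rw [SimpleGraph.mem_incidenceFinset]
    refine ⟨SimpleGraph.mem_edgeFinset.1 f.2, ?_⟩
    rcases mem_insert.1 hf with rfl | hf
    · simp [hends f]
    · simp [hends f, (mem_filter.1 hf).2]
  have hcard := card_le_card hsub
  rwa [card_image_of_injective _ Subtype.val_injective, card_insert_of_notMem he,
    SimpleGraph.card_incidenceFinset_eq_degree] at hcard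

variable (hdist : ∀ e, G.dist r (low e) = G.dist r (up e) + 1)
include hdist

lemma up_eq_and_low_eq {e : Edge G} {a b : V} (he : e.1 = s(a, b))
    (hd : G.dist r b = G.dist r a + 1) : up e = a ∧ low e = b := by
  rcases Sym2.eq_iff.1 ((hends e).symm.trans he) with h | ⟨rfl, rfl⟩
  · exact h
  · have := hdist e
    omega

variable (hG : G.IsTree)
include hG

lemma low_injective_of_isTree : Function.Injective low := fun e f h => by
  have hadj := adj_up_low hends f
  have hd := hdist f
  rw [← h] at hadj hd
  have hup := eq_of_adj_of_dist_eq_succ hG (adj_up_low hends e) hadj (hdist e) hd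
  exact Subtype.ext (by rw [hends e, hends f, h, hup])

lemma exists_low_eq {v : V} (hv : v ≠ r) : ∃ e, low e = v := by
  obtain ⟨a, hadj, hd⟩ := exists_adj_dist_eq_succ hG hv
  exact ⟨⟨s(a, v), by simpa using hadj⟩, (up_eq_and_low_eq hends hdist rfl hd).2⟩

lemma edgeConflict_adj_iff (e f : Edge G) :
    (edgeConflict G).Adj e f ↔ e ≠ f ∧ (up e = up f ∨ up e = low f ∨ low e = up f) := by
  have hmeet : (∃ v, v ∈ e.1 ∧ v ∈ f.1) ↔
      up e = up f ∨ up e = low f ∨ low e = up f ∨ low e = low f := by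
    simp only [hends, Sym2.mem_iff, or_and_right, exists_or, exists_eq_left, or_assoc]
  have hlow : low e = low f ↔ e = f := (low_injective_of_isTree hends hdist hG).eq_iff
  change e.1 ≠ f.1 ∧ _ ↔ _
  rw [hmeet, hlow, Ne, Subtype.val_inj]
  tauto

lemma eq_of_up_eq_leaf (hr : G.degree r = 1) {e f : Edge G} (he : up e = r) (hf : up f = r) :
    e = f := by
  obtain ⟨s, -, hs⟩ := SimpleGraph.degree_eq_one_iff_existsUnique_adj.1 hr
  refine low_injective_of_isTree hends hdist hG ((hs _ ?_).trans (hs _ ?_).symm)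
  · exact he ▸ adj_up_low hends e
  · exact hf ▸ adj_up_low hends f

end Oriented

lemma exists_edgeRooting (hG : G.IsTree) (hV : 2 ≤ Fintype.card V) :
    ∃ R : EdgeRooting (edgeConflict G) V, ∀ e, #(R.children e) < G.maxDegree := by
  have : Nontrivial V := Fintype.one_lt_card_iff_nontrivial.1 hV
  obtain ⟨r, hr⟩ := hG.exists_vert_degree_one_of_nontrivial
  obtain ⟨s, hrs, -⟩ := SimpleGraph.degree_eq_one_iff_existsUnique_adj.1 hr
  choose up low hends hdist using exists_endpoints_dist_eq_succ hG r
  let root : Edge G := ⟨s(r, s), by simpa using hrs⟩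
  have hroot : up root = r := (up_eq_and_low_eq hends hdist rfl (by simp [hrs])).1
  let R : EdgeRooting (edgeConflict G) V :=
    { up, low, depth := G.dist r, root
      low_injective := low_injective_of_isTree hends hdist hG
      depth_low := hdist
      eq_root_of_up_eq := fun e he =>
        eq_of_up_eq_leaf hends hdist hG hr (he.trans hroot) hroot
      up_eq_or_exists_low_eq := fun e =>
        (eq_or_ne (up e) r).imp (·.trans hroot.symm) (exists_low_eq hends hdist hG)
      adj_iff := edgeConflict_adj_iff hends hdist hG }
  refine ⟨R, fun e => (?_ : _ < G.degree (low e)).trans_le (G.degree_le_maxDegree _)⟩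
  exact card_up_eq_low_lt_degree hends e

end TreeRooting

/-! ### Mixing time -/

section Mixing

lemma one_sub_pow_le_exp_neg {x : ℝ} (hx : x ≤ 1) (t : ℕ) :
    (1 - x) ^ t ≤ Real.exp (-(t * x)) := by
  rw [← mul_neg, Real.exp_nat_mul]
  exact pow_le_pow_left₀ (sub_nonneg.2 hx) (Real.one_sub_le_exp_neg x) t

/-- The lower bound on the spectral gap of the Glauber dynamics for the `k`-edge-colourings of a
tree with `m` edges which follows from the Poincaré inequality `EdgeRooting.var_univ_le`. -/
noncomputable def treeGap (m k : ℕ) : ℝ := 1 / (10 ^ 8 * k * m ^ 21 * m * k ^ 2)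

section TreeGap

variable {m k : ℕ}

lemma treeGap_pos (hm : 0 < m) (hk : 0 < k) : 0 < treeGap m k := by
  rw [treeGap]
  positivity

lemma treeGap_le_one (hm : 0 < m) (hk : 0 < k) : treeGap m k ≤ 1 := by
  have hnat : 0 < 10 ^ 8 * k * m ^ 21 * m * k ^ 2 := by positivity
  exact div_le_one_of_le₀ (by exact_mod_cast hnat) (by positivity)

lemma one_le_pow_mul_treeGap (hm : 0 < m) (hk : 0 < k) (hkm : k ≤ 8 * m) :
    1 ≤ ((m + 1 : ℕ) : ℝ) ^ 61 * treeGap m k := by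
  have hle : 10 ^ 8 * k * m ^ 21 * m * k ^ 2 ≤ (m + 1) ^ 61 :=
    calc 10 ^ 8 * k * m ^ 21 * m * k ^ 2
        ≤ 10 ^ 8 * (8 * m) * m ^ 21 * m * (8 * m) ^ 2 := by gcongr
      _ = (10 ^ 8 * 8 ^ 3) * m ^ 25 := by ring
      _ ≤ 2 ^ 36 * m ^ 25 := Nat.mul_le_mul_right _ (by norm_num)
      _ ≤ (m + 1) ^ 36 * (m + 1) ^ 25 := by gcongr <;> omega
      _ = (m + 1) ^ 61 := by ring
  rw [treeGap, mul_one_div, one_le_div (by positivity)]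
  exact_mod_cast hle

end TreeGap

variable {E : Type*} [Fintype E] [DecidableEq E] {H : SimpleGraph E} {k : ℕ}

lemma card_properColouring_le_exp :
    (Fintype.card (ProperColouring H k) : ℝ) ≤ Real.exp (Fintype.card E * k) := by
  have hcard : Fintype.card (ProperColouring H k) ≤ k ^ Fintype.card E :=
    (Fintype.card_subtype_le _).trans (by simp)
  calc (Fintype.card (ProperColouring H k) : ℝ) ≤ (k : ℝ) ^ Fintype.card E := mod_cast hcard
    _ ≤ Real.exp k ^ Fintype.card E := by
        gcongr
        linarith [Real.add_one_le_exp (k : ℝ)]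
    _ = Real.exp (Fintype.card E * k) := (Real.exp_nat_mul _ _).symm

section FewColours

variable {V : Type*} (R : EdgeRooting H V) (hchildren : ∀ e, #(R.children e) + 2 ≤ k) (hk : 4 ≤ k)
include hchildren hk

lemma EdgeRooting.sum_sq_glauber_mulVec_le (f : ProperColouring H k → ℝ) (hf : ∑ σ, f σ = 0) :
    ∑ σ, (glauber H k).mulVec f σ ^ 2 ≤ (1 - treeGap (Fintype.card E) k) * ∑ σ, f σ ^ 2 := by
  have : Nonempty E := ⟨R.root⟩
  have : NeZero k := ⟨by omega⟩
  exact _root_.sum_sq_glauber_mulVec_le (by positivity) (R.var_univ_le · hchildren hk) hf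

lemma EdgeRooting.exists_glauber_pow_pos :
    ∃ t : ℕ, ∀ σ η : ProperColouring H k, 0 < (glauber H k ^ t) σ η := by
  have : Nonempty E := ⟨R.root⟩
  have : NeZero k := ⟨by omega⟩
  exact exists_pow_pos glauber_mem_doublyStochastic
    (treeGap_le_one Fintype.card_pos (NeZero.pos k)) (R.sum_sq_glauber_mulVec_le hchildren hk)
    (treeGap_pos Fintype.card_pos (NeZero.pos k)) glauber_isSymm

lemma EdgeRooting.tvDist_glauber_pow_lt (hkE : k ≤ 8 * Fintype.card E) (σ : ProperColouring H k) :
    tvDist ((glauber H k ^ (Fintype.card E + 1) ^ 67) σ)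
      (fun _ => 1 / (Fintype.card (ProperColouring H k) : ℝ)) < 1 / 4 := by
  have : Nonempty E := ⟨R.root⟩
  have : NeZero k := ⟨by omega⟩
  set m := Fintype.card E
  have hm : 0 < m := Fintype.card_pos
  have hδ := treeGap_le_one hm (NeZero.pos k)
  refine tvDist_pow_uniform_lt_of_decay glauber_mem_doublyStochastic hδ
    (R.sum_sq_glauber_mulVec_le hchildren hk) glauber_isSymm (by norm_num) ?_ σ
  have hexponent : (m * k + 4 : ℝ) ≤ ((m + 1) ^ 67 : ℕ) * treeGap m k := by
    have hnat : m * k + 4 ≤ (m + 1) ^ 6 :=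
      calc m * k + 4 ≤ m * (8 * m) + 4 := by gcongr
        _ ≤ 2 ^ 4 * (m + 1) ^ 2 := by nlinarith
        _ ≤ (m + 1) ^ 4 * (m + 1) ^ 2 := by gcongr; omega
        _ = (m + 1) ^ 6 := by ring
    calc (m * k + 4 : ℝ) ≤ ((m + 1 : ℕ) : ℝ) ^ 6 := mod_cast hnat
      _ ≤ ((m + 1 : ℕ) : ℝ) ^ 6 * (((m + 1 : ℕ) : ℝ) ^ 61 * treeGap m k) :=
          le_mul_of_one_le_right (by positivity) (one_le_pow_mul_treeGap hm (NeZero.pos k) hkE)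
      _ = ((m + 1) ^ 67 : ℕ) * treeGap m k := by push_cast; ring
  have hexp : Real.exp (-4) < 1 / 4 := by
    rw [Real.exp_neg, ← one_div]
    exact one_div_lt_one_div_of_lt (by norm_num) (by linarith [Real.add_one_le_exp (4 : ℝ)])
  calc (Fintype.card (ProperColouring H k) : ℝ) * (1 - treeGap m k) ^ (m + 1) ^ 67
      ≤ Real.exp (m * k) * Real.exp (-(((m + 1) ^ 67 : ℕ) * treeGap m k)) :=
        mul_le_mul card_properColouring_le_exp (one_sub_pow_le_exp_neg hδ _)
          (pow_nonneg (sub_nonneg.2 hδ) _) (Real.exp_nonneg _)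
    _ = Real.exp (m * k - ((m + 1) ^ 67 : ℕ) * treeGap m k) := by
        rw [← Real.exp_add, sub_eq_add_neg]
    _ ≤ Real.exp (-4) := Real.exp_le_exp.2 (by linarith)
    _ < 4 * (1 / 4) ^ 2 := by linarith

end FewColours

lemma tvDist_glauber_pow_lt_of_le [Nonempty E] (hk : 8 * Fintype.card E ≤ k)
    (σ : ProperColouring H k) :
    tvDist ((glauber H k ^ (Fintype.card E + 1) ^ 67) σ)
      (fun _ => 1 / (Fintype.card (ProperColouring H k) : ℝ)) < 1 / 4 := by
  have hm : 0 < Fintype.card E := Fintype.card_pos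
  have : NeZero k := ⟨by omega⟩
  have hcol := (mem_doublyStochastic_iff_mem_rowStochastic_and_mem_colStochastic.1
    (glauber_mem_doublyStochastic (H := H) (k := k))).2
  set m := Fintype.card E
  have hm' : (1 : ℝ) ≤ m := mod_cast hm
  have hx : 1 / (2 * m : ℝ) ≤ 1 := div_le_one_of_le₀ (by linarith) (by positivity)
  have hexponent : (4 * m : ℝ) ≤ ((m + 1) ^ 67 : ℕ) * (1 / (2 * m)) := by
    have hnat : 4 * m * (2 * m) ≤ (m + 1) ^ 67 :=
      calc 4 * m * (2 * m) ≤ 2 ^ 65 * (m + 1) ^ 2 := by nlinarith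
        _ ≤ (m + 1) ^ 65 * (m + 1) ^ 2 := by gcongr; omega
        _ = (m + 1) ^ 67 := by ring
    rw [mul_one_div, le_div_iff₀ (by positivity)]
    exact_mod_cast hnat
  calc tvDist ((glauber H k ^ (m + 1) ^ 67) σ) _
      ≤ m * (1 - 1 / (2 * m)) ^ (m + 1) ^ 67 :=
        tvDist_pow_uniform_le_of_contraction hcol (d := fun σ η => #(disagreement σ η))
          (sub_nonneg.2 hx) (fun _ _ => Nat.cast_nonneg _)
          (fun σ η h => Nat.one_le_cast.2 <| card_pos.2 <| nonempty_iff_ne_empty.2 <|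
            mt disagreement_eq_empty_iff.1 h)
          (fun _ _ => Nat.cast_le.2 (card_le_univ _))
          (fun _ _ hg => abs_glauber_mulVec_sub_le hk hg) _ σ
    _ ≤ m * Real.exp (-(4 * m)) := by
        gcongr
        exact (one_sub_pow_le_exp_neg hx _).trans (Real.exp_le_exp.2 (neg_le_neg hexponent))
    _ < 1 / 4 := by
        rw [Real.exp_neg, ← div_eq_mul_inv, div_lt_div_iff₀ (Real.exp_pos _) (by norm_num)]
        linarith [Real.add_one_le_exp (4 * m : ℝ)]

end Mixing

lemma glauber_edgeConflict_eq_Pstep {V : Type} [Fintype V] [DecidableEq V] {G : SimpleGraph V}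
    [DecidableRel G.Adj] {k : ℕ} [Nonempty (Edge G)] [NeZero k] :
    glauber (edgeConflict G) k = Pstep G k := by
  have hoff : ∀ σ η : ECol G k, σ ≠ η → glauber (edgeConflict G) k σ η = Poff G k σ η :=
    fun σ η hne => by rw [glauber_apply_of_ne hne, Poff, Fintype.card_coe]; rfl
  ext σ η
  rw [Pstep, Matrix.of_apply]
  split_ifs with h
  · subst h
    rw [glauber_apply_self, sum_congr rfl fun η hη => hoff σ η (mem_filter.1 hη).2.symm]
  · exact hoff σ η h

theorem tree_edge_colouring_mixing_general :
    ∃ C : ℝ, 0 < C ∧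
      ∀ (V : Type) [Fintype V] [DecidableEq V] (G : SimpleGraph V) [DecidableRel G.Adj],
        G.IsTree → 2 ≤ Fintype.card V →
      ∀ k : ℕ, 4 ≤ k → G.maxDegree + 1 ≤ k →
        (∃ t : ℕ, ∀ σ η : ECol G k, 0 < (Pstep G k ^ t) σ η) ∧
        (∀ η : ECol G k,
          ∑ σ : ECol G k, (1 / (Fintype.card (ECol G k) : ℝ)) * Pstep G k σ η =
            1 / (Fintype.card (ECol G k) : ℝ)) ∧
        (mixTime G k : ℝ) ≤ (Fintype.card V : ℝ) ^ C := by
  refine ⟨67, by norm_num, fun V _ _ G _ hG hV k hk₄ hk => ?_⟩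
  obtain ⟨R, hR⟩ := exists_edgeRooting hG hV
  have hchildren : ∀ e, #(R.children e) + 2 ≤ k := fun e => (Nat.succ_le_succ (hR e)).trans hk
  have : Nonempty (Edge G) := ⟨R.root⟩
  have : NeZero k := ⟨by omega⟩
  have hcard : Fintype.card (Edge G) + 1 = Fintype.card V := by
    rw [Fintype.card_coe, hG.card_edgeFinset]
  have hmix : mixTime G k ≤ Fintype.card V ^ 67 := Nat.sInf_le fun σ => by
    rw [← glauber_edgeConflict_eq_Pstep, ← hcard]
    rcases le_total k (8 * Fintype.card (Edge G)) with h | h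
    · exact R.tvDist_glauber_pow_lt hchildren hk₄ h σ
    · exact tvDist_glauber_pow_lt_of_le (H := edgeConflict G) h σ
  rw [← glauber_edgeConflict_eq_Pstep]
  refine ⟨R.exists_glauber_pow_pos hchildren hk₄, fun η => ?_, ?_⟩
  · rw [← mul_sum]
    exact (congrArg _ (sum_glauber_apply (H := edgeConflict G) η)).trans (mul_one _)
  · exact_mod_cast hmix

/-- there is a constant `C > 0` such that for every finite tree `G` on `n ≥ 2`
vertices with maximum degree `Δ ≥ 3` and every `k ≥ Δ + 1`, the discrete-time Glauber
dynamics for `k`-edge-colourings of `G` is ergodic (some power of `P` is strictly positive,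
i.e. `P` is irreducible and aperiodic), its stationary distribution is the uniform
distribution on the set of proper `k`-edge-colourings, and its mixing time is at most
`n^C`. -/
theorem tree_edge_colouring_mixing :
    ∃ C : ℝ, 0 < C ∧
      ∀ (V : Type) [Fintype V] [DecidableEq V] (G : SimpleGraph V) [DecidableRel G.Adj],
        G.IsTree → 2 ≤ Fintype.card V → 3 ≤ G.maxDegree →
      ∀ k : ℕ, G.maxDegree + 1 ≤ k →
        (∃ t : ℕ, ∀ σ η : ECol G k, 0 < (Pstep G k ^ t) σ η) ∧
        (∀ η : ECol G k,
          ∑ σ : ECol G k, (1 / (Fintype.card (ECol G k) : ℝ)) * Pstep G k σ η =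
            1 / (Fintype.card (ECol G k) : ℝ)) ∧
        (mixTime G k : ℝ) ≤ (Fintype.card V : ℝ) ^ C := by
  obtain ⟨C, hC, h⟩ := tree_edge_colouring_mixing_general
  exact ⟨C, hC, fun V _ _ G _ hG hV hΔ k hk => h V G hG hV k (by omega) hk⟩
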